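/- Let λ > 1, let α be Diophantine, and let θ ∈ ℝ satisfy δ(α,θ) < ln λ. Let {φ_s}_{s≥1} be an orthonormal basis of ℓ²(ℤ) consisting of eigenfunctions of the almost Mathieu operator H_{λ,α,θ}. Fix K > 0 and for each s choose any m̃_s ∈ ℤ with |φ_s(m̃_s)| ≥ (1/K)·max_{k∈ℤ}|φ_s(k)|. Then limsup_{L→∞} #{s : |m̃_s| ≤ L}/(2L+1) ≤ 1 + δ(α,θ)/(2 ln λ) and liminf_{L→∞} #{s : |m̃_s| ≤ L}/(2L+1) ≥ 1 − δ(α,θ)/ln λ. -/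

import Mathlib

noncomputable section

open Filter Real

def distToInt (x : ℝ) : ℝ := |x - round x|

def IsDiophantine (α : ℝ) : Prop :=
  ∃ κ τ : ℝ, 0 < κ ∧ 0 < τ ∧ ∀ k : ℤ, k ≠ 0 → τ / |(k : ℝ)| ^ κ ≤ distToInt (k * α)

def deltaPhase (α θ : ℝ) : ℝ :=
  limsup (fun n : ℤ => -Real.log (distToInt (2 * θ + n * α)) / |(n : ℝ)|) cofinite

def amoPot (lam α θ : ℝ) : ℤ → ℝ := fun n => 2 * lam * Real.cos (2 * Real.pi * (θ + n * α))

def IsEigenfunction (g : ℤ → ℝ) (E : ℝ) (φ : ℤ → ℝ) : Prop :=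
  ∀ n : ℤ, φ (n + 1) + φ (n - 1) + g n * φ n = E * φ n

def deltaPot (g : ℤ → ℝ) : ℝ :=
  limsup (fun n : ℤ => -Real.log (⨆ m : ℤ, |g (n - m) - g m|) / |(n : ℝ)|) cofinite

def matNorm (M : Matrix (Fin 2) (Fin 2) ℝ) : ℝ := ⨆ p : Fin 2 × Fin 2, |M p.1 p.2|

def transfer (g : ℤ → ℝ) (E : ℝ) : ℕ → ℤ → Matrix (Fin 2) (Fin 2) ℝ
  | 0, _ => 1
  | n + 1, k => !![E - g (k + n), -1; 1, 0] * transfer g E n k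

def LyapSup (g : ℤ → ℝ) (E : ℝ) : ℝ :=
  limsup (fun n : ℕ => ⨆ k : ℤ, Real.log (matNorm (transfer g E n k)) / n) atTop

def HasSULE (g : ℤ → ℝ) : Prop :=
  ∃ (Φ : HilbertBasis ℕ ℝ (lp (fun _ : ℤ => ℝ) 2)) (ns : ℕ → ℤ) (γ : ℝ),
    0 < γ ∧
    (∀ s : ℕ, ∃ E : ℝ, IsEigenfunction g E (fun n => Φ s n)) ∧
    ∀ ε : ℝ, 0 < ε → ∃ C : ℝ,
      ∀ (s : ℕ) (n : ℤ),
        |Φ s n| ≤ C * Real.exp (ε * |(ns s : ℝ)|) * Real.exp (-γ * |(n : ℝ) - (ns s : ℝ)|)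

/-!
By Herman's bound, the determinants of the operator restricted to `k` consecutive sites grow at
least like `λ ^ k`, whereas Lagrange interpolation at the Diophantine orbit points bounds them by
their values on any two windows whose phases avoid the reflection `θ + nα ↦ -(θ + nα)`. An
eigenfunction is controlled by such a determinant through Green's formula, so at scale `R` it decays
exponentially away from its almost maximum `m`, except possibly at the reflected site `p - m`, where
`p` is the only frequency with `|p| ≲ R` for which `2θ + pα` is exponentially close to an integer.
A second interpolation, at sites around both `m` and `p - m`, shows that mass at `p - m` requires
`|p - 2m| ≤ (δ / log λ) |p| + o(R)`: only sites this close to the fixed point `p / 2` can be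
exchanged with their reflections.

Comparing `∑_{|n| ≤ L} ∑_s φ_s(n)² = 2L + 1` with the normalisation `∑_n φ_s(n)² = 1`, the number
of almost maxima in `[-L, L]` differs from `2L + 1` by at most the number of sites exchanged across
the boundary of the box. These sites lie in the box, within `δ |p| / (2 log λ)` of `p / 2` and on
the side of the origin, so there are at most `δ L / log λ + o(L)` of them.

If `-log ‖2θ + nα‖ / |n|` is unbounded, then `deltaPhase α θ` has a junk value. This case does not
occur, by Gordon's argument for reflections: the potential would be so close to being symmetric
about infinitely many points `n / 2` that an eigenfunction could not decay.
-/

section Continuants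

variable {R : Type*} [CommRing R]

/-- The continuant of a potential `v` at energy `E`: the determinant of `E - H` restricted to the
`k` sites `x, …, x + k - 1`, where `H` is the Schrödinger operator with potential `v`. It is
encoded by its three-term recursion in `k`. -/
def continuant (v : ℤ → R) (E : R) : ℕ → ℤ → R
  | 0, _ => 1
  | 1, x => E - v x
  | k + 2, x => (E - v (x + k + 1)) * continuant v E (k + 1) x - continuant v E k x

lemma continuant_add_two (v : ℤ → R) (E : R) (k : ℕ) (x : ℤ) :
    continuant v E (k + 2) x =
      (E - v (x + k + 1)) * continuant v E (k + 1) x - continuant v E k x := rfl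

lemma continuant_add_two_left (v : ℤ → R) (E : R) (k : ℕ) (x : ℤ) :
    continuant v E (k + 2) x =
      (E - v x) * continuant v E (k + 1) (x + 1) - continuant v E k (x + 2) := by
  induction k using Nat.twoStepInduction with
  | zero => simp [continuant]; ring
  | one => simp [continuant]; ring_nf
  | more k ih₀ ih₁ =>
    rw [continuant_add_two v E (k + 2), ih₁, ih₀, continuant_add_two v E (k + 1) (x + 1),
      continuant_add_two v E k (x + 2)]
    push_cast
    ring_nf

lemma continuant_shift (v : ℤ → R) (E : R) (k : ℕ) (x y : ℤ) :
    continuant v E k (x + y) = continuant (fun n => v (x + n)) E k y := by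
  induction k using Nat.twoStepInduction with
  | zero => simp [continuant]
  | one => simp [continuant]
  | more k ih₀ ih₁ => simp only [continuant, ih₀, ih₁, add_assoc]

lemma continuant_comp_neg (v : ℤ → R) (E : R) (k : ℕ) (x : ℤ) :
    continuant (fun n => v (-n)) E k x = continuant v E k (-x - k + 1) := by
  induction k using Nat.twoStepInduction with
  | zero => simp [continuant]
  | one => simp [continuant]
  | more k ih₀ ih₁ =>
    rw [continuant, continuant_add_two_left, ih₀, ih₁]
    push_cast
    ring_nf

lemma continuant_add_add_two (v : ℤ → R) (E : R) (j k : ℕ) (x : ℤ) :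
    continuant v E (j + k + 2) x =
      continuant v E (j + 1) x * continuant v E (k + 1) (x + j + 1) -
        continuant v E j x * continuant v E k (x + j + 2) := by
  induction k using Nat.twoStepInduction with
  | zero => simp [continuant]; ring
  | one =>
    rw [continuant_add_two v E (j + 1), show j + 1 + 1 = j + 2 from rfl, continuant_add_two v E j]
    simp only [continuant]
    push_cast
    ring_nf
  | more k ih₀ ih₁ =>
    rw [show j + (k + 2) + 2 = (j + k + 2) + 2 by ring, continuant,
      show j + k + 2 + 1 = j + (k + 1) + 2 by ring, ih₁, ih₀, show k + 2 + 1 = (k + 1) + 2 by ring,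
      continuant_add_two v E (k + 1) (x + j + 1), continuant_add_two v E k (x + j + 2)]
    push_cast
    ring_nf

end Continuants

namespace IsEigenfunction

variable {v : ℤ → ℝ} {E : ℝ} {φ : ℤ → ℝ}

lemma sub_mul_apply (h : IsEigenfunction v E φ) (n : ℤ) :
    (E - v n) * φ n = φ (n + 1) + φ (n - 1) := by
  linarith [h n]

lemma apply_sub_one (h : IsEigenfunction v E φ) (x : ℤ) (k : ℕ) :
    φ (x - 1) = continuant v E (k + 1) x * φ (x + k) - continuant v E k x * φ (x + k + 1) := by
  induction k with
  | zero => simp only [continuant, Nat.cast_zero, add_zero]; linarith [h.sub_mul_apply x]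
  | succ k ih =>
    have hstep := h.sub_mul_apply (x + k + 1)
    rw [add_sub_cancel_right] at hstep
    rw [continuant]
    push_cast
    rw [← add_assoc]
    linear_combination ih - continuant v E (k + 1) x * hstep

lemma mul_continuant (h : IsEigenfunction v E φ) (x : ℤ) (i j : ℕ) :
    φ (x + i) * continuant v E (i + j + 1) x =
      continuant v E j (x + i + 1) * φ (x - 1) + continuant v E i x * φ (x + i + j + 1) := by
  induction j using Nat.twoStepInduction with
  | zero => simp only [continuant, Nat.cast_zero, add_zero]; linarith [h.apply_sub_one x i]
  | one =>
    have hleft := h.apply_sub_one x i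
    have hstep := h.sub_mul_apply (x + i + 1)
    rw [add_sub_cancel_right] at hstep
    simp only [continuant]
    push_cast
    linear_combination -(E - v (x + i + 1)) * hleft + continuant v E i x * hstep
  | more j ih₀ ih₁ =>
    have hstep := h.sub_mul_apply (x + i + j + 2)
    rw [show i + (j + 2) + 1 = (i + j + 1) + 2 by ring, continuant_add_two,
      continuant_add_two v E j]
    rw [show i + (j + 1) + 1 = i + j + 1 + 1 by ring] at ih₁
    push_cast at *
    rw [show x + (i + j + 1 : ℤ) + 1 = x + i + j + 2 by ring,
      show x + i + 1 + (j : ℤ) + 1 = x + i + j + 2 by ring,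
      show x + i + (j + 2 : ℤ) + 1 = x + i + j + 2 + 1 by ring]
    rw [show x + i + (j + 1 : ℤ) + 1 = x + i + j + 2 by ring] at ih₁
    rw [show x + i + j + 2 - 1 = x + i + (j : ℤ) + 1 by ring] at hstep
    linear_combination (E - v (x + i + j + 2)) * ih₁ - ih₀ + continuant v E i x * hstep

lemma apply_add_add_one (h : IsEigenfunction v E φ) (x : ℤ) (k : ℕ) :
    φ (x + k + 1) =
      continuant v E (k + 1) x * φ x - continuant v E k (x + 1) * φ (x - 1) := by
  have := h.mul_continuant x 0 k
  simp only [Nat.cast_zero, add_zero, zero_add, continuant, one_mul] at this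
  linarith

end IsEigenfunction

section SineDistance

open scoped FourierTransform

lemma distToInt_nonneg (x : ℝ) : 0 ≤ distToInt x := abs_nonneg _

lemma distToInt_le_half (x : ℝ) : distToInt x ≤ 1 / 2 := abs_sub_round x

/-- The chordal distance `|2 sin (π x)| = |1 - e^{2πix}|` from `x` to `ℤ`. It is comparable to
`distToInt` and, unlike it, turns differences of cosines into products. -/
def sinDist (x : ℝ) : ℝ := |2 * sin (π * x)|

lemma sinDist_nonneg (x : ℝ) : 0 ≤ sinDist x := abs_nonneg _

lemma sinDist_neg (x : ℝ) : sinDist (-x) = sinDist x := by simp [sinDist]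

lemma sinDist_sub_comm (x y : ℝ) : sinDist (x - y) = sinDist (y - x) := by
  rw [← sinDist_neg, neg_sub]

lemma norm_one_sub_fourierChar (x : ℝ) : ‖(1 : ℂ) - 𝐞 x‖ = sinDist x := by
  rw [norm_sub_rev, Real.fourierChar_apply, mul_comm, Complex.norm_exp_I_mul_ofReal_sub_one,
    sinDist, norm_eq_abs, mul_assoc, mul_div_cancel_left₀ _ two_ne_zero]

lemma sinDist_le_two (x : ℝ) : sinDist x ≤ 2 := by
  rw [← norm_one_sub_fourierChar]
  refine (norm_sub_le _ _).trans_eq ?_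
  rw [norm_one, Circle.norm_coe]
  norm_num

lemma sinDist_add_le (x y : ℝ) : sinDist (x + y) ≤ sinDist x + sinDist y := by
  have hsplit : (1 : ℂ) - 𝐞 (x + y) = (1 - 𝐞 x) + 𝐞 x * (1 - 𝐞 y) := by
    rw [AddChar.map_add_eq_mul, Circle.coe_mul]
    ring
  simp only [← norm_one_sub_fourierChar, hsplit]
  refine (norm_add_le _ _).trans_eq ?_
  rw [norm_mul, Circle.norm_coe, one_mul]

lemma sinDist_sub_le (x y : ℝ) : sinDist (x - y) ≤ sinDist x + sinDist y := by
  rw [sub_eq_add_neg, ← sinDist_neg y]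
  exact sinDist_add_le x (-y)

lemma sinDist_eq_two_mul_sin (x : ℝ) : sinDist x = 2 * sin (π * distToInt x) := by
  have hperiod : |sin (π * x)| = |sin (π * (x - round x))| := by
    rw [mul_sub, mul_comm π (round x : ℝ), sin_sub_int_mul_pi, abs_mul, abs_zpow]
    simp
  have hsin : 0 ≤ sin (π * distToInt x) :=
    sin_nonneg_of_nonneg_of_le_pi (mul_nonneg pi_pos.le (distToInt_nonneg x))
      (by nlinarith [distToInt_le_half x, pi_pos])
  have habs : |sin (π * (x - round x))| = sin (π * distToInt x) := by
    rw [← abs_of_nonneg hsin]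
    unfold distToInt
    rcases abs_choice (x - round x) with h | h <;> rw [h]
    rw [mul_neg, sin_neg, abs_neg]
  rw [sinDist, abs_mul, hperiod, habs, abs_two]

lemma distToInt_le_sinDist (x : ℝ) : distToInt x ≤ sinDist x := by
  have hjordan := mul_le_sin (mul_nonneg pi_pos.le (distToInt_nonneg x))
    (by nlinarith [distToInt_le_half x, pi_pos])
  have hcancel : 2 / π * (π * distToInt x) = 2 * distToInt x := by field_simp
  linarith [sinDist_eq_two_mul_sin x, distToInt_nonneg x]

lemma sinDist_le_mul_distToInt (x : ℝ) : sinDist x ≤ 7 * distToInt x := by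
  rw [sinDist_eq_two_mul_sin]
  have := sin_le (mul_nonneg pi_pos.le (distToInt_nonneg x))
  nlinarith [distToInt_nonneg x, pi_lt_d2]

/-- The Diophantine condition on `α` with explicit constants, stated for `sinDist` and with the
exponent normalised to be at least `1`. -/
structure IsSinDiophantine (α κ τ : ℝ) : Prop where
  one_le_exponent : 1 ≤ κ
  const_pos : 0 < τ
  le_sinDist : ∀ k : ℤ, k ≠ 0 → τ / |(k : ℝ)| ^ κ ≤ sinDist (k * α)

lemma IsDiophantine.exists_isSinDiophantine {α : ℝ} (h : IsDiophantine α) :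
    ∃ κ τ, IsSinDiophantine α κ τ := by
  obtain ⟨κ, τ, -, hτ, hdist⟩ := h
  refine ⟨max κ 1, τ, le_max_right _ _, hτ, fun k hk => ?_⟩
  refine le_trans ?_ ((hdist k hk).trans (distToInt_le_sinDist _))
  have hk1 : (1 : ℝ) ≤ |(k : ℝ)| := by exact_mod_cast Int.one_le_abs hk
  have := rpow_le_rpow_of_exponent_le hk1 (le_max_left κ 1)
  gcongr

end SineDistance

section RegularizedLogarithm

open scoped FourierTransform

lemma sq_norm_one_sub_mul {z : ℂ} (hz : ‖z‖ = 1) (r : ℝ) :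
    ‖1 - r * z‖ ^ 2 = (1 - r) ^ 2 + r * ‖1 - z‖ ^ 2 := by
  have hz' : z.re * z.re + z.im * z.im = 1 := by
    rw [← Complex.normSq_apply, Complex.normSq_eq_norm_sq, hz, one_pow]
  simp only [← Complex.normSq_eq_norm_sq, Complex.normSq_apply, Complex.sub_re, Complex.sub_im,
    Complex.re_ofReal_mul, Complex.im_ofReal_mul, Complex.one_re, Complex.one_im]
  linear_combination (r ^ 2 - r) * hz'

lemma sq_norm_one_sub_mul_fourierChar (r x : ℝ) :
    ‖(1 : ℂ) - r * 𝐞 x‖ ^ 2 = (1 - r) ^ 2 + r * sinDist x ^ 2 := by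
  rw [sq_norm_one_sub_mul (Circle.norm_coe _), norm_one_sub_fourierChar]

/-- The logarithm `log |1 - r e^{2πix}|`, a smooth surrogate for `log (sinDist x)` as `r ↑ 1`. -/
def regLog (r x : ℝ) : ℝ := Real.log ‖(1 : ℂ) - r * 𝐞 x‖

lemma regLog_eq_re_log (r x : ℝ) : regLog r x = (Complex.log (1 - r * 𝐞 x)).re :=
  (Complex.log_re _).symm

section

variable {r : ℝ}

lemma one_sub_le_norm_one_sub_mul_fourierChar (hr : 0 < r) (x : ℝ) :
    1 - r ≤ ‖(1 : ℂ) - r * 𝐞 x‖ := by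
  have := norm_sub_norm_le (1 : ℂ) (r * 𝐞 x)
  rwa [norm_one, norm_mul, Circle.norm_coe, mul_one, Complex.norm_of_nonneg hr.le] at this

lemma norm_one_sub_mul_fourierChar_pos (hr : 0 < r) (hr1 : r < 1) (x : ℝ) :
    0 < ‖(1 : ℂ) - r * 𝐞 x‖ :=
  (sub_pos.2 hr1).trans_le (one_sub_le_norm_one_sub_mul_fourierChar hr x)

lemma log_one_sub_le_regLog (hr : 0 < r) (hr1 : r < 1) (x : ℝ) :
    Real.log (1 - r) ≤ regLog r x :=
  log_le_log (sub_pos.2 hr1) (one_sub_le_norm_one_sub_mul_fourierChar hr x)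

lemma regLog_le_one (hr : 0 < r) (hr1 : r < 1) (x : ℝ) : regLog r x ≤ 1 := by
  have htwo : ‖(1 : ℂ) - r * 𝐞 x‖ ≤ 2 := by
    refine (norm_sub_le _ _).trans ?_
    rw [norm_one, norm_mul, Circle.norm_coe, mul_one, Complex.norm_of_nonneg hr.le]
    linarith
  have := log_le_log (norm_one_sub_mul_fourierChar_pos hr hr1 x) htwo
  have := log_two_lt_d9
  unfold regLog
  linarith

lemma sinDist_le_exp_regLog (hr : 0 < r) (hr1 : r < 1) (x : ℝ) :
    sinDist x ≤ exp (regLog r x - Real.log r / 2) := by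
  refine le_of_sq_le_sq ?_ (exp_pos _).le
  have hexp : exp (regLog r x - Real.log r / 2) ^ 2 = ‖(1 : ℂ) - r * 𝐞 x‖ ^ 2 / r := by
    rw [← exp_nat_mul, Nat.cast_ofNat, mul_sub, mul_div_cancel₀ _ two_ne_zero, exp_sub,
      exp_log hr, ← Nat.cast_ofNat, exp_nat_mul, regLog,
      exp_log (norm_one_sub_mul_fourierChar_pos hr hr1 x)]
  rw [hexp, sq_norm_one_sub_mul_fourierChar, le_div_iff₀ hr]
  linarith [sq_nonneg (1 - r)]

lemma log_one_add_sq_le {y p : ℝ} (hy : 0 ≤ y) (hp : 0 < p) (hp1 : p ≤ 1) :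
    Real.log (1 + y ^ 2) / 2 ≤ y ^ p / p := by
  have hyp : 0 ≤ y ^ p := rpow_nonneg hy p
  have hsub : (1 + y ^ 2) ^ (p / 2) ≤ 1 + y ^ p := by
    have hpow : (y ^ 2) ^ (p / 2) = y ^ p := by
      rw [← rpow_natCast, ← rpow_mul hy, Nat.cast_ofNat, mul_div_cancel₀ _ two_ne_zero]
    simpa [hpow] using
      rpow_add_le_add_rpow (p := p / 2) zero_le_one (sq_nonneg y) (by positivity) (by linarith)
  have hlog := log_le_log (by positivity) hsub
  rw [log_rpow (by positivity)] at hlog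
  have := log_le_sub_one_of_pos (by linarith : 0 < 1 + y ^ p)
  rw [le_div_iff₀ hp]
  linarith

lemma regLog_sub_le_log_sinDist {x p : ℝ} (hr : 0 < r) (hr1 : r < 1) (hp : 0 < p) (hp1 : p ≤ 1)
    (hx : 0 < sinDist x) :
    regLog r x - (1 - r) ^ p / p * sinDist x ^ (-p) ≤ Real.log (sinDist x) := by
  have h1r : 0 < 1 - r := sub_pos.2 hr1
  have hreg : 2 * regLog r x ≤ 2 * Real.log (sinDist x) +
      Real.log (1 + ((1 - r) / sinDist x) ^ 2) := by
    have hle : ‖(1 : ℂ) - r * 𝐞 x‖ ^ 2 ≤ sinDist x ^ 2 * (1 + ((1 - r) / sinDist x) ^ 2) := by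
      have hexpand : sinDist x ^ 2 * (1 + ((1 - r) / sinDist x) ^ 2) =
          sinDist x ^ 2 + (1 - r) ^ 2 := by field_simp
      rw [hexpand, sq_norm_one_sub_mul_fourierChar]
      nlinarith [sq_nonneg (sinDist x)]
    have hlog := log_le_log (pow_pos (norm_one_sub_mul_fourierChar_pos hr hr1 x) 2) hle
    rwa [log_mul (by positivity) (by positivity), log_pow, log_pow, Nat.cast_ofNat] at hlog
  have hpow : ((1 - r) / sinDist x) ^ p / p = (1 - r) ^ p / p * sinDist x ^ (-p) := by
    rw [div_rpow h1r.le hx.le, rpow_neg hx.le]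
    ring
  have := log_one_add_sq_le (y := (1 - r) / sinDist x) (by positivity) hp hp1
  linarith

end

lemma norm_geom_sum_le_of_norm_eq_one {z : ℂ} (hz : ‖z‖ = 1) (hz1 : z ≠ 1) (N : ℕ) :
    ‖∑ i ∈ Finset.range N, z ^ i‖ ≤ 2 / ‖1 - z‖ := by
  rw [geom_sum_eq hz1, norm_div, norm_sub_rev z]
  gcongr
  refine (norm_sub_le _ _).trans_eq ?_
  rw [norm_pow, hz, one_pow, norm_one]
  norm_num

namespace IsSinDiophantine

variable {α κ τ : ℝ}

lemma sinDist_natCast_mul_pos (hα : IsSinDiophantine α κ τ) {n : ℕ} (hn : n ≠ 0) :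
    0 < sinDist (n * α) := by
  have hpos := hα.const_pos
  refine lt_of_lt_of_le ?_ (hα.le_sinDist n (by exact_mod_cast hn))
  rw [Int.cast_natCast, Nat.abs_cast]
  positivity

lemma two_div_sinDist_le (hα : IsSinDiophantine α κ τ) {n : ℕ} (hn : n ≠ 0) :
    2 / sinDist (n * α) ≤ 2 / τ * (n : ℝ) ^ ⌈κ⌉₊ := by
  have hn1 : (1 : ℝ) ≤ n := by exact_mod_cast Nat.one_le_iff_ne_zero.2 hn
  have hτ := hα.const_pos
  have hdist := hα.le_sinDist n (by exact_mod_cast hn)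
  rw [Int.cast_natCast, Nat.abs_cast] at hdist
  have hceil : (n : ℝ) ^ κ ≤ (n : ℝ) ^ ⌈κ⌉₊ := by
    rw [← rpow_natCast]
    exact rpow_le_rpow_of_exponent_le hn1 (Nat.le_ceil κ)
  calc 2 / sinDist (n * α) ≤ 2 / (τ / (n : ℝ) ^ κ) := by gcongr
    _ = 2 / τ * (n : ℝ) ^ κ := by field_simp
    _ ≤ 2 / τ * (n : ℝ) ^ ⌈κ⌉₊ := by gcongr

lemma norm_sum_pow_div_le (hα : IsSinDiophantine α κ τ) {r : ℝ} (hr : 0 < r) (x : ℝ) (N n : ℕ) :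
    ‖∑ i ∈ Finset.range N, ((r : ℂ) * 𝐞 (x + i * α)) ^ n / n‖ ≤
      2 / τ * ((n : ℝ) ^ ⌈κ⌉₊ * r ^ n) := by
  have hτ := hα.const_pos
  rcases Nat.eq_zero_or_pos n with rfl | hn
  · simp only [Nat.cast_zero, div_zero, Finset.sum_const_zero, norm_zero]
    positivity
  have hgeom : ∑ i ∈ Finset.range N, ((r : ℂ) * 𝐞 (x + i * α)) ^ n / n =
      (r : ℂ) ^ n / n * 𝐞 (n * x) * ∑ i ∈ Finset.range N, (𝐞 (n * α) : ℂ) ^ i := by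
    rw [Finset.mul_sum]
    refine Finset.sum_congr rfl fun i _ => ?_
    have hchar : (𝐞 (x + i * α) : ℂ) ^ n = 𝐞 (n * x) * 𝐞 (n * α) ^ i := by
      simp only [← Circle.coe_pow, ← Circle.coe_mul, ← AddChar.map_nsmul_eq_pow,
        ← AddChar.map_add_eq_mul, nsmul_eq_mul]
      ring_nf
    rw [mul_pow, hchar]
    ring
  have hdist := hα.sinDist_natCast_mul_pos hn.ne'
  have hne : (𝐞 (n * α) : ℂ) ≠ 1 := by
    intro h
    simp [← norm_one_sub_fourierChar, h] at hdist
  have hcoef : ‖(r : ℂ) ^ n / n‖ ≤ r ^ n := by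
    rw [norm_div, norm_pow, Complex.norm_of_nonneg hr.le, Complex.norm_natCast]
    exact div_le_self (by positivity) (by exact_mod_cast hn)
  have hsum := norm_geom_sum_le_of_norm_eq_one (Circle.norm_coe (𝐞 (n * α))) hne N
  rw [norm_one_sub_fourierChar] at hsum
  rw [hgeom, norm_mul, norm_mul, Circle.norm_coe, mul_one]
  calc _ ≤ r ^ n * (2 / τ * (n : ℝ) ^ ⌈κ⌉₊) := by
        gcongr
        exact hsum.trans (hα.two_div_sinDist_le hn.ne')
    _ = _ := by ring

/-- Expanding `log (1 - r e(x))` in powers of `r` reduces the sum to geometric sums with ratios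
`e(n α)`, whose polynomially bounded sizes are beaten by the factor `r ^ n`. -/
lemma exists_abs_sum_range_regLog_le (hα : IsSinDiophantine α κ τ) {r : ℝ} (hr : 0 < r)
    (hr1 : r < 1) :
    ∃ C, 0 ≤ C ∧ ∀ (x : ℝ) (N : ℕ), |∑ i ∈ Finset.range N, regLog r (x + i * α)| ≤ C := by
  have hτ := hα.const_pos
  have hsum : Summable (fun n : ℕ => 2 / τ * ((n : ℝ) ^ ⌈κ⌉₊ * r ^ n)) :=
    Summable.mul_left _
      (summable_pow_mul_geometric_of_norm_lt_one _ (by rwa [Real.norm_of_nonneg hr.le]))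
  refine ⟨∑' n : ℕ, 2 / τ * ((n : ℝ) ^ ⌈κ⌉₊ * r ^ n), tsum_nonneg fun n => by positivity,
    fun x N => ?_⟩
  have hlt (i : ℕ) : ‖(r : ℂ) * 𝐞 (x + i * α)‖ < 1 := by
    rwa [norm_mul, Circle.norm_coe, mul_one, Complex.norm_of_nonneg hr.le]
  have htaylor := hasSum_sum (s := Finset.range N)
    (fun i _ => Complex.hasSum_taylorSeries_neg_log (hlt i))
  have hbound : ‖∑ i ∈ Finset.range N, -Complex.log (1 - (r : ℂ) * 𝐞 (x + i * α))‖ ≤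
      ∑' n : ℕ, 2 / τ * ((n : ℝ) ^ ⌈κ⌉₊ * r ^ n) := by
    rw [← htaylor.tsum_eq]
    exact tsum_of_norm_bounded hsum.hasSum (hα.norm_sum_pow_div_le hr x N)
  rw [Finset.sum_neg_distrib, norm_neg] at hbound
  refine le_trans (le_of_eq ?_) ((Complex.abs_re_le_norm _).trans hbound)
  simp only [Complex.re_sum, regLog_eq_re_log]

lemma exists_abs_sum_Ico_regLog_le (hα : IsSinDiophantine α κ τ) {r : ℝ} (hr : 0 < r)
    (hr1 : r < 1) :
    ∃ C, 0 ≤ C ∧ ∀ (x : ℝ) (a b : ℤ), |∑ i ∈ Finset.Ico a b, regLog r (x + i * α)| ≤ C := by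
  obtain ⟨C, hC0, hC⟩ := hα.exists_abs_sum_range_regLog_le hr hr1
  refine ⟨C, hC0, fun x a b => ?_⟩
  convert hC (x + a * α) (b - a).toNat using 2
  rw [Int.Ico_eq_finset_map, Finset.sum_map]
  refine Finset.sum_congr rfl fun i _ => ?_
  simp only [Function.Embedding.trans_apply, Nat.castEmbedding_apply, addLeftEmbedding_apply]
  push_cast
  ring_nf

end IsSinDiophantine

end RegularizedLogarithm

section SingularWeights

lemma exists_ne_abs_sub_mul_le {a : ℤ} {N m : ℕ} {F : Finset ℤ} (hF : F ⊆ Finset.Ico a (a + N))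
    (hcard : F.card = m + 2) :
    ∃ i ∈ F, ∃ j ∈ F, i ≠ j ∧ |(i : ℝ) - j| * (m + 1) ≤ N := by
  have hN : (0 : ℤ) < N := by
    obtain ⟨i, hi⟩ := Finset.card_pos.1 (by omega : 0 < F.card)
    have := Finset.mem_Ico.1 (hF hi)
    omega
  obtain ⟨i, hi, j, hj, hij, hbox⟩ := Finset.exists_ne_map_eq_of_card_lt_of_maps_to
    (s := F) (t := Finset.Ico (0 : ℤ) (m + 1)) (f := fun i => ((i - a) * (m + 1)) / N)
    (by simp only [Int.card_Ico]; omega) (by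
      intro i hi
      have := Finset.mem_Ico.1 (hF hi)
      simp only [Finset.coe_Ico, Set.mem_Ico]
      constructor
      · apply Int.ediv_nonneg <;> nlinarith
      · apply Int.ediv_lt_of_lt_mul hN; nlinarith)
  refine ⟨i, hi, j, hj, hij, ?_⟩
  have hi_eq := Int.emod_add_mul_ediv ((i - a) * (m + 1)) N
  have hj_eq := Int.emod_add_mul_ediv ((j - a) * (m + 1)) N
  have hi_lt := Int.emod_lt_of_pos ((i - a) * (m + 1)) hN
  have hj_lt := Int.emod_lt_of_pos ((j - a) * (m + 1)) hN
  have hi_nonneg := Int.emod_nonneg ((i - a) * (m + 1)) hN.ne'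
  have hj_nonneg := Int.emod_nonneg ((j - a) * (m + 1)) hN.ne'
  rw [hbox] at hi_eq
  have hint : |(i - j) * (m + 1)| ≤ N := by rw [abs_le]; constructor <;> nlinarith
  have hreal : |((i : ℝ) - j) * (m + 1)| ≤ N := by exact_mod_cast hint
  rwa [abs_mul, abs_of_nonneg (by positivity : (0 : ℝ) ≤ m + 1)] at hreal

lemma inv_sqrt_succ_add_two_mul_sqrt_le (m : ℕ) :
    1 / √((m : ℝ) + 1) + 2 * √m ≤ 2 * √((m : ℝ) + 1) := by
  have hsucc : √((m : ℝ) + 1) ^ 2 = m + 1 := sq_sqrt (by positivity)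
  have hself : √(m : ℝ) ^ 2 = m := sq_sqrt (by positivity)
  rw [← le_sub_iff_add_le, div_le_iff₀ (sqrt_pos.2 (by positivity))]
  nlinarith [sq_nonneg (√((m : ℝ) + 1) - √m)]

variable {w : ℤ → ℝ} {A : ℝ}

/-- Remove the smallest weight and induct: by pigeonhole it is `O(√(N / m))`, and these bounds
add up to `O(√(N m))`. -/
lemma exists_sum_erase_le_mul_sqrt (hA : 0 ≤ A)
    (hw : ∀ i j : ℤ, i ≠ j → min (w i) (w j) ≤ A * √|(i : ℝ) - j|) (a : ℤ) (N m : ℕ)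
    (F : Finset ℤ) (hF : F ⊆ Finset.Ico a (a + N)) (hcard : F.card = m + 1) :
    ∃ i ∈ F, ∑ j ∈ F.erase i, w j ≤ 2 * A * (√N * √m) := by
  induction m generalizing F with
  | zero =>
    obtain ⟨i, rfl⟩ := Finset.card_eq_one.1 hcard
    exact ⟨i, by simp⟩
  | succ m ih =>
    obtain ⟨i₀, hi₀, hmin⟩ := Finset.exists_min_image F w (Finset.card_pos.1 (by omega))
    have hsmall : w i₀ ≤ A * (√N * (1 / √((m : ℝ) + 1))) := by
      obtain ⟨i, hi, j, hj, hij, hclose⟩ := exists_ne_abs_sub_mul_le hF hcard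
      refine (le_min (hmin i hi) (hmin j hj)).trans ((hw i j hij).trans ?_)
      rw [mul_one_div, ← sqrt_div (by positivity)]
      gcongr
      rwa [le_div_iff₀ (by positivity)]
    obtain ⟨i, hi, hsum⟩ := ih (F.erase i₀) ((Finset.erase_subset _ _).trans hF)
      (by rw [Finset.card_erase_of_mem hi₀]; omega)
    obtain ⟨hne, hiF⟩ := Finset.mem_erase.1 hi
    refine ⟨i, hiF, ?_⟩
    rw [← Finset.add_sum_erase (F.erase i) w (Finset.mem_erase.2 ⟨hne.symm, hi₀⟩),
      Finset.erase_right_comm]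
    push_cast
    calc w i₀ + ∑ x ∈ (F.erase i₀).erase i, w x
        ≤ A * (√N * (1 / √((m : ℝ) + 1))) + 2 * A * (√N * √m) := add_le_add hsmall hsum
      _ = A * √N * (1 / √((m : ℝ) + 1) + 2 * √m) := by ring
      _ ≤ A * √N * (2 * √((m : ℝ) + 1)) := by gcongr; exact inv_sqrt_succ_add_two_mul_sqrt_le m
      _ = 2 * A * (√N * √((m : ℝ) + 1)) := by ring

lemma exists_sum_erase_le (hA : 0 ≤ A)
    (hw : ∀ i j : ℤ, i ≠ j → min (w i) (w j) ≤ A * √|(i : ℝ) - j|) {a : ℤ} {N : ℕ}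
    {F : Finset ℤ} (hF : F ⊆ Finset.Ico a (a + N)) (hne : F.Nonempty) :
    ∃ i ∈ F, ∑ j ∈ F.erase i, w j ≤ 2 * A * N := by
  obtain ⟨m, hm⟩ := Nat.exists_eq_succ_of_ne_zero hne.card_pos.ne'
  obtain ⟨i, hi, hsum⟩ := exists_sum_erase_le_mul_sqrt hA hw a N m F hF hm
  refine ⟨i, hi, hsum.trans ?_⟩
  have hmN : m ≤ N := by
    have := Finset.card_le_card hF
    simp only [Int.card_Ico] at this
    omega
  have hsqrt : √(N : ℝ) * √m ≤ N := by
    calc √(N : ℝ) * √m ≤ √(N : ℝ) * √N := by gcongr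
      _ = N := mul_self_sqrt (by positivity)
  gcongr

end SingularWeights

section SineProducts

/-- `S` is the union of two disjoint intervals contained in `[-M, M]`. The phases `x + i α`,
`i ∈ S`, serve as interpolation nodes. -/
def IsTwoWindow (M : ℕ) (S : Finset ℤ) : Prop :=
  S ⊆ Finset.Icc (-(M : ℤ)) M ∧ ∃ a b c d : ℤ, Disjoint (Finset.Ico a b) (Finset.Ico c d) ∧
    S = Finset.Ico a b ∪ Finset.Ico c d

lemma IsTwoWindow.card_le {M : ℕ} {S : Finset ℤ} (h : IsTwoWindow M S) : S.card ≤ 2 * M + 1 := by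
  have := Finset.card_le_card h.1
  rw [Int.card_Icc] at this
  omega

namespace IsSinDiophantine

variable {α κ τ : ℝ}

lemma exists_abs_sum_regLog_le (hα : IsSinDiophantine α κ τ) {r : ℝ} (hr : 0 < r) (hr1 : r < 1) :
    ∃ C, 0 ≤ C ∧ ∀ (x : ℝ) (M : ℕ) (S : Finset ℤ), IsTwoWindow M S →
      |∑ i ∈ S, regLog r (x + i * α)| ≤ C := by
  obtain ⟨C, hC0, hC⟩ := hα.exists_abs_sum_Ico_regLog_le hr hr1
  refine ⟨C + C, by linarith, fun x M S ⟨_, a, b, c, d, hdisj, hS⟩ => ?_⟩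
  rw [hS, Finset.sum_union hdisj]
  exact (abs_add_le _ _).trans (add_le_add (hC x a b) (hC x c d))

lemma exists_prod_sinDist_le (hα : IsSinDiophantine α κ τ) {ε : ℝ} (hε : 0 < ε) :
    ∃ C, 0 ≤ C ∧ ∀ (x : ℝ) (M : ℕ) (S : Finset ℤ), IsTwoWindow M S → ∀ j ∈ S,
      ∏ i ∈ S.erase j, sinDist (x + i * α) ≤ exp (ε * M + C) := by
  set r := exp (-ε) with hr_def
  have hr : 0 < r := exp_pos _
  have hr1 : r < 1 := by rwa [hr_def, exp_lt_one_iff, neg_lt_zero]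
  obtain ⟨C, hC0, hC⟩ := hα.exists_abs_sum_regLog_le hr hr1
  have hlog : Real.log (1 - r) ≤ 0 := log_nonpos (by linarith) (by linarith)
  refine ⟨C - Real.log (1 - r) + ε, by linarith, fun x M S hS j hj => ?_⟩
  calc ∏ i ∈ S.erase j, sinDist (x + i * α)
      ≤ ∏ i ∈ S.erase j, exp (regLog r (x + i * α) - Real.log r / 2) :=
        Finset.prod_le_prod (fun i _ => sinDist_nonneg _)
          (fun i _ => sinDist_le_exp_regLog hr hr1 _)
    _ = exp (∑ i ∈ S.erase j, (regLog r (x + i * α) - Real.log r / 2)) := (exp_sum _ _).symm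
    _ ≤ _ := by
      apply exp_le_exp.2
      rw [Finset.sum_sub_distrib, Finset.sum_const, nsmul_eq_mul, hr_def, log_exp, ← hr_def]
      have hsplit := Finset.add_sum_erase S (fun i : ℤ => regLog r (x + i * α)) hj
      have htotal := (abs_le.1 (hC x M S hS)).2
      have hj_ge := log_one_sub_le_regLog hr hr1 (x + j * α)
      have hcard : ((S.erase j).card : ℝ) ≤ 2 * M + 1 := by
        exact_mod_cast (Finset.card_le_card (Finset.erase_subset j S)).trans hS.card_le
      have hcost : ((S.erase j).card : ℝ) * ε ≤ (2 * M + 1) * ε := by gcongr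
      linarith

/-- Two orbit points cannot both be close to `0`, since `(i - j) α` is not. -/
lemma min_sinDist_rpow_neg_le (hα : IsSinDiophantine α κ τ) (x : ℝ) {i j : ℤ} (hij : i ≠ j) :
    min (sinDist (x + i * α) ^ (-(1 / (2 * κ)))) (sinDist (x + j * α) ^ (-(1 / (2 * κ)))) ≤
      (τ / 2) ^ (-(1 / (2 * κ))) * √|(i : ℝ) - j| := by
  have hκ := zero_lt_one.trans_le hα.one_le_exponent
  have hτ := hα.const_pos
  have hpos : 0 < |(i : ℝ) - j| := abs_pos.2 (sub_ne_zero.2 (by exact_mod_cast hij))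
  have hle (u : ℝ) (hu : τ / |(i : ℝ) - j| ^ κ / 2 ≤ u) :
      u ^ (-(1 / (2 * κ))) ≤ (τ / 2) ^ (-(1 / (2 * κ))) * √|(i : ℝ) - j| := by
    have hp : 0 < 1 / (2 * κ) := by positivity
    calc u ^ (-(1 / (2 * κ))) ≤ (τ / |(i : ℝ) - j| ^ κ / 2) ^ (-(1 / (2 * κ))) :=
          rpow_le_rpow_of_nonpos (by positivity) hu (by linarith)
      _ = (τ / 2 * |(i : ℝ) - j| ^ (-κ)) ^ (-(1 / (2 * κ))) := by
          rw [rpow_neg hpos.le]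
          congr 1
          ring
      _ = _ := by
          rw [mul_rpow (by positivity) (by positivity), ← rpow_mul hpos.le, sqrt_eq_rpow]
          congr 2
          field_simp
  have hdioph := hα.le_sinDist (i - j) (sub_ne_zero.2 hij)
  push_cast at hdioph
  have htri := sinDist_sub_le (x + i * α) (x + j * α)
  rw [show x + i * α - (x + j * α) = ((i : ℝ) - j) * α by ring] at htri
  rcases le_total (sinDist (x + i * α)) (sinDist (x + j * α)) with h | h
  · exact (min_le_right _ _).trans (hle _ (by linarith))
  · exact (min_le_left _ _).trans (hle _ (by linarith))

lemma exists_regularization (hα : IsSinDiophantine α κ τ) {ε : ℝ} (hε : 0 < ε) :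
    ∃ p r : ℝ, 0 < p ∧ p ≤ 1 ∧ 0 < r ∧ r < 1 ∧
      ∀ (x : ℝ) (M : ℕ) (F : Finset ℤ), F ⊆ Finset.Icc (-(M : ℤ)) M → F.Nonempty →
        ∃ i ∈ F, (1 - r) ^ p / p * ∑ z ∈ F.erase i, sinDist (x + z * α) ^ (-p) ≤ ε * (M + 1) := by
  have hκ := hα.one_le_exponent
  have hτ := hα.const_pos
  set p := 1 / (2 * κ) with hp
  have hp0 : 0 < p := by positivity
  have hp1 : p ≤ 1 := by rw [hp, div_le_one (by positivity)]; linarith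
  set A := (τ / 2) ^ (-p)
  have hA : 0 < A := by positivity
  set s := min (1 / 2) ((ε * p / (4 * A)) ^ (1 / p))
  have hs0 : 0 < s := lt_min (by norm_num) (by positivity)
  have hs1 : s ≤ 1 / 2 := min_le_left _ _
  have hsp : s ^ p ≤ ε * p / (4 * A) := by
    calc s ^ p ≤ ((ε * p / (4 * A)) ^ (1 / p)) ^ p := by gcongr; exact min_le_right _ _
      _ = _ := by rw [← rpow_mul (by positivity), one_div_mul_cancel hp0.ne', rpow_one]
  refine ⟨p, 1 - s, hp0, hp1, by linarith, by linarith, fun x M F hF hne => ?_⟩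
  have hF' : F ⊆ Finset.Ico (-(M : ℤ)) (-(M : ℤ) + (2 * M + 1 : ℕ)) := by
    intro z hz
    have := Finset.mem_Icc.1 (hF hz)
    rw [Finset.mem_Ico]
    omega
  obtain ⟨i, hi, hsum⟩ := exists_sum_erase_le hA.le
    (fun i j hij => hα.min_sinDist_rpow_neg_le x hij) hF' hne
  refine ⟨i, hi, ?_⟩
  rw [sub_sub_cancel]
  calc s ^ p / p * ∑ z ∈ F.erase i, sinDist (x + z * α) ^ (-p)
      ≤ (ε * p / (4 * A)) / p * (2 * A * (2 * M + 1 : ℕ)) := by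
        have : 0 ≤ ∑ z ∈ F.erase i, sinDist (x + z * α) ^ (-p) :=
          Finset.sum_nonneg fun z _ => rpow_nonneg (sinDist_nonneg _) _
        gcongr
    _ = ε * M + ε / 2 := by push_cast; field_simp; ring
    _ ≤ ε * (M + 1) := by linarith

lemma exists_le_prod_sinDist (hα : IsSinDiophantine α κ τ) {ε : ℝ} (hε : 0 < ε) :
    ∃ C, 0 ≤ C ∧ ∀ (x : ℝ) (M : ℕ) (S : Finset ℤ), IsTwoWindow M S → ∀ j ∈ S,
      ∀ ρ : ℝ, 0 < ρ → ρ ≤ 1 → (∀ i ∈ S.erase j, ρ ≤ sinDist (x + i * α)) →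
      ρ * exp (-(ε * M + C)) ≤ ∏ i ∈ S.erase j, sinDist (x + i * α) := by
  obtain ⟨p, r, hp0, hp1, hr, hr1, hweights⟩ := hα.exists_regularization hε
  obtain ⟨C, hC0, hC⟩ := hα.exists_abs_sum_regLog_le hr hr1
  refine ⟨C + 2 + ε, by linarith, fun x M S hS j hj ρ hρ hρ1 hfar => ?_⟩
  rcases (S.erase j).eq_empty_or_nonempty with hempty | hne
  · rw [hempty, Finset.prod_empty]
    have : 0 ≤ ε * M := by positivity
    exact mul_le_one₀ hρ1 (exp_pos _).le (exp_le_one_iff.2 (by linarith))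
  obtain ⟨i, hi, hsum⟩ := hweights x M (S.erase j) ((Finset.erase_subset _ _).trans hS.1) hne
  have hpos : ∀ i ∈ S.erase j, 0 < sinDist (x + i * α) := fun i hi => hρ.trans_le (hfar i hi)
  rw [← exp_log (Finset.prod_pos hpos), ← exp_log hρ, ← exp_add, exp_le_exp,
    log_prod (fun i hi => (hpos i hi).ne'), ← Finset.add_sum_erase _ _ hi]
  have hi_ge : Real.log ρ ≤ Real.log (sinDist (x + i * α)) := log_le_log hρ (hfar i hi)
  have hreg : ∑ z ∈ (S.erase j).erase i,
      (regLog r (x + z * α) - (1 - r) ^ p / p * sinDist (x + z * α) ^ (-p)) ≤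
        ∑ z ∈ (S.erase j).erase i, Real.log (sinDist (x + z * α)) :=
    Finset.sum_le_sum fun z hz =>
      regLog_sub_le_log_sinDist hr hr1 hp0 hp1 (hpos z (Finset.mem_of_mem_erase hz))
  rw [Finset.sum_sub_distrib, ← Finset.mul_sum] at hreg
  have hsplit_i := Finset.add_sum_erase (S.erase j) (fun z : ℤ => regLog r (x + z * α)) hi
  have hsplit_j := Finset.add_sum_erase S (fun z : ℤ => regLog r (x + z * α)) hj
  have hi_le := regLog_le_one hr hr1 (x + i * α)
  have hj_le := regLog_le_one hr hr1 (x + j * α)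
  have htotal := (abs_le.1 (hC x M S hS)).1
  linarith

end IsSinDiophantine

end SineProducts

section Determinants

open scoped FourierTransform

/-- The determinant of `E - H` on the `k` sites `0, …, k - 1`, for the almost Mathieu operator with
phase `t`. Covariance turns a shift of the sites into a shift of `t`. -/
def amoDet (lam α E : ℝ) (k : ℕ) (t : ℝ) : ℝ := continuant (amoPot lam α t) E k 0

variable (lam α E : ℝ)

lemma continuant_amoPot_eq_amoDet (θ : ℝ) (k : ℕ) (x : ℤ) :
    continuant (amoPot lam α θ) E k x = amoDet lam α E k (θ + x * α) := by
  have hcov : (fun n => amoPot lam α θ (x + n)) = amoPot lam α (θ + x * α) := by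
    funext n
    simp only [amoPot]
    push_cast
    ring_nf
  have hshift := continuant_shift (amoPot lam α θ) E k x 0
  rwa [add_zero, hcov] at hshift

lemma amoDet_zero (t : ℝ) : amoDet lam α E 0 t = 1 := rfl

lemma amoDet_one (t : ℝ) : amoDet lam α E 1 t = E - 2 * lam * cos (2 * π * t) := by
  simp [amoDet, continuant, amoPot]

lemma amoDet_add_two (k : ℕ) (t : ℝ) :
    amoDet lam α E (k + 2) t =
      (E - 2 * lam * cos (2 * π * (t + (k + 1) * α))) * amoDet lam α E (k + 1) t -
        amoDet lam α E k t := by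
  simp [amoDet, continuant, amoPot]

lemma amoDet_add_add_two (j k : ℕ) (t : ℝ) :
    amoDet lam α E (j + k + 2) t =
      amoDet lam α E (j + 1) t * amoDet lam α E (k + 1) (t + (j + 1) * α) -
        amoDet lam α E j t * amoDet lam α E k (t + (j + 2) * α) := by
  have hsplit := continuant_add_add_two (amoPot lam α t) E j k 0
  simp only [continuant_amoPot_eq_amoDet] at hsplit
  push_cast at hsplit
  simpa [add_assoc] using hsplit

lemma amoDet_neg (k : ℕ) (t : ℝ) :
    amoDet lam α E k (-t) = amoDet lam α E k (t + (1 - k) * α) := by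
  have hpot : amoPot lam α (-t) = fun n => amoPot lam α t (-n) := by
    funext n
    simp only [amoPot]
    push_cast
    rw [← cos_neg]
    ring_nf
  rw [amoDet, hpot, continuant_comp_neg, continuant_amoPot_eq_amoDet]
  push_cast
  ring_nf

lemma cos_two_pi_mul_add (s b : ℝ) :
    cos (2 * π * (s + b)) =
      cos (2 * π * b) * cos (2 * π * s) - sin (2 * π * b) * sin (2 * π * s) := by
  rw [mul_add, cos_add]
  ring

open Polynomial in
lemma exists_polynomials_amoDet_add (c : ℝ) (k : ℕ) :
    ∃ P Q : ℝ[X], P.natDegree ≤ k ∧ Q.natDegree ≤ k - 1 ∧ ∀ s, amoDet lam α E k (s + c) =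
      P.eval (cos (2 * π * s)) + sin (2 * π * s) * Q.eval (cos (2 * π * s)) := by
  induction k using Nat.twoStepInduction with
  | zero => exact ⟨1, 0, by simp, by simp, by simp [amoDet_zero]⟩
  | one =>
    refine ⟨C E - C (2 * lam * cos (2 * π * c)) * X, C (2 * lam * sin (2 * π * c)),
      by compute_degree, (natDegree_C _).le, fun s => ?_⟩
    rw [amoDet_one, cos_two_pi_mul_add]
    simp
    ring
  | more k ih₀ ih₁ =>
    obtain ⟨P₀, Q₀, hP₀, hQ₀, h₀⟩ := ih₀
    obtain ⟨P₁, Q₁, hP₁, hQ₁, h₁⟩ := ih₁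
    set a := 2 * lam * cos (2 * π * (c + (k + 1) * α))
    set b := 2 * lam * sin (2 * π * (c + (k + 1) * α))
    have hlin : (C E - C a * X).natDegree ≤ 1 := by compute_degree
    have hquad : (C b * (1 - X ^ 2)).natDegree ≤ 2 := by compute_degree
    refine ⟨(C E - C a * X) * P₁ + C b * (1 - X ^ 2) * Q₁ - P₀,
      (C E - C a * X) * Q₁ + C b * P₁ - Q₀, ?_, ?_, fun s => ?_⟩
    · have hP := natDegree_mul_le_of_le hlin hP₁
      have hQ := natDegree_mul_le_of_le hquad hQ₁
      exact natDegree_sub_le_of_le (natDegree_add_le_of_le (hP.trans (by omega) :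
        _ ≤ k + 2) (hQ.trans (by omega) : _ ≤ k + 2)) (hP₀.trans (by omega) : _ ≤ k + 2)
        |>.trans (by simp)
    · have hQ := natDegree_mul_le_of_le hlin hQ₁
      exact natDegree_sub_le_of_le (natDegree_add_le_of_le (hQ.trans (by omega) :
        _ ≤ k + 1) ((natDegree_C_mul_le b P₁).trans hP₁)) (hQ₀.trans (by omega) : _ ≤ k + 1)
        |>.trans (by simp)
    · have hcos : 2 * lam * cos (2 * π * (s + c + (k + 1) * α)) =
          a * cos (2 * π * s) - b * sin (2 * π * s) := by
        rw [add_assoc, cos_two_pi_mul_add]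
        ring
      rw [amoDet_add_two, hcos, h₀, h₁]
      simp
      linear_combination b * Q₁.eval (cos (2 * π * s)) * sin_sq_add_cos_sq (2 * π * s)

open Polynomial in
lemma exists_polynomial_amoDet (k : ℕ) :
    ∃ P : ℝ[X], P.natDegree ≤ k ∧
      ∀ s, amoDet lam α E k (s - (k - 1) * α / 2) = P.eval (cos (2 * π * s)) := by
  obtain ⟨P, Q, hP, -, h⟩ := exists_polynomials_amoDet_add lam α E (-((k - 1) * α / 2)) k
  refine ⟨P, hP, fun s => ?_⟩
  -- The centred determinant is even in `s`, so its odd part `sin * Q (cos)` vanishes.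
  have heven : amoDet lam α E k (-s - (k - 1) * α / 2) =
      amoDet lam α E k (s - (k - 1) * α / 2) := by
    rw [show -s - (k - 1) * α / 2 = -(s + (k - 1) * α / 2) by ring, amoDet_neg]
    ring_nf
  have hpos := h s
  have hneg := h (-s)
  rw [mul_neg, cos_neg, sin_neg, ← sub_eq_add_neg] at hneg
  rw [← sub_eq_add_neg] at hpos
  linarith

/-- The entire function equal to `z ^ k * amoDet lam α E k t` at the point `z = e^{2πit}` of the
unit circle. Its value at the origin yields Herman's lower bound for the determinants. -/
def hermanExtension : ℕ → ℂ → ℂ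
  | 0, _ => 1
  | 1, z => E * z - lam * (z ^ 2 + 1)
  | k + 2, z =>
      (E * z - lam * (𝐞 ((k + 1) * α) * z ^ 2 + 𝐞 (-((k + 1) * α)))) * hermanExtension (k + 1) z -
        z ^ 2 * hermanExtension k z

lemma two_mul_cos_two_pi_mul (x : ℝ) :
    ((2 * cos (2 * π * x) : ℝ) : ℂ) = 𝐞 x + 𝐞 (-x) := by
  simp only [Real.fourierChar_apply]
  push_cast
  rw [Complex.two_cos]
  ring_nf

lemma hermanExtension_fourierChar (k : ℕ) (t : ℝ) :
    hermanExtension lam α E k (𝐞 t) = (𝐞 t : ℂ) ^ k * (amoDet lam α E k t : ℂ) := by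
  have hcos (b : ℝ) : lam * ((𝐞 b : ℂ) * (𝐞 t : ℂ) ^ 2 + 𝐞 (-b)) =
      (𝐞 t : ℂ) * ((2 * lam * cos (2 * π * (t + b)) : ℝ) : ℂ) := by
    have hinv : (𝐞 t : ℂ) * 𝐞 (-t) = 1 := by
      rw [← Circle.coe_mul, ← AddChar.map_add_eq_mul]
      simp
    have hsum := two_mul_cos_two_pi_mul (t + b)
    rw [neg_add, AddChar.map_add_eq_mul, AddChar.map_add_eq_mul] at hsum
    push_cast at hsum ⊢
    linear_combination -lam * (𝐞 (-b) : ℂ) * hinv - lam * (𝐞 t : ℂ) * hsum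
  induction k using Nat.twoStepInduction with
  | zero => simp [hermanExtension, amoDet_zero]
  | one =>
    have hone : (𝐞 (0 : ℝ) : ℂ) = 1 := by simp
    have hcos_zero := hcos 0
    rw [neg_zero, add_zero, hone, one_mul] at hcos_zero
    rw [hermanExtension, hcos_zero, amoDet_one]
    push_cast
    ring
  | more k ih₀ ih₁ =>
    rw [hermanExtension, ih₀, ih₁, hcos, amoDet_add_two]
    push_cast
    ring

lemma norm_hermanExtension_zero (k : ℕ) : ‖hermanExtension lam α E k 0‖ = |lam| ^ k := by
  induction k using Nat.twoStepInduction with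
  | zero => simp [hermanExtension]
  | one => simp [hermanExtension]
  | more k _ ih₁ =>
    rw [hermanExtension]
    simp only [mul_zero, ne_eq, OfNat.ofNat_ne_zero, not_false_eq_true, zero_pow, zero_add,
      zero_sub, zero_mul, sub_zero, neg_mul, norm_neg, norm_mul, Complex.norm_real, norm_eq_abs,
      Circle.norm_coe, mul_one, ih₁]
    ring

lemma differentiable_hermanExtension (k : ℕ) : Differentiable ℂ (hermanExtension lam α E k) := by
  induction k using Nat.twoStepInduction with
  | zero => exact differentiable_const 1
  | one =>
    change Differentiable ℂ fun z : ℂ => E * z - lam * (z ^ 2 + 1)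
    fun_prop
  | more k ih₀ ih₁ =>
    change Differentiable ℂ fun z : ℂ =>
      (E * z - lam * (𝐞 ((k + 1) * α) * z ^ 2 + 𝐞 (-((k + 1) * α)))) *
        hermanExtension lam α E (k + 1) z - z ^ 2 * hermanExtension lam α E k z
    fun_prop

lemma exists_fourierChar_eq {z : ℂ} (hz : ‖z‖ = 1) : ∃ t : ℝ, (𝐞 t : ℂ) = z := by
  refine ⟨z.arg / (2 * π), ?_⟩
  rw [Real.fourierChar_apply, mul_div_cancel₀ _ two_pi_pos.ne']
  simpa [hz] using Complex.norm_mul_exp_arg_mul_I z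

variable {lam α E}

/-- Herman's bound: the maximum principle for `hermanExtension` on the unit disc. -/
lemma abs_pow_le_of_forall_abs_amoDet_le {k : ℕ} {B : ℝ} (h : ∀ t, |amoDet lam α E k t| ≤ B) :
    |lam| ^ k ≤ B := by
  rw [← norm_hermanExtension_zero lam α E k]
  refine Complex.norm_le_of_forall_mem_frontier_norm_le (U := Metric.ball 0 1)
    Metric.isBounded_ball (differentiable_hermanExtension lam α E k).diffContOnCl
    (fun z hz => ?_) (subset_closure (by simp))
  rw [frontier_ball _ one_ne_zero] at hz
  obtain ⟨t, rfl⟩ := exists_fourierChar_eq (by simpa using hz)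
  rw [hermanExtension_fourierChar, norm_mul, norm_pow, Circle.norm_coe]
  simpa using h t

lemma abs_amoDet_le_pow {Em : ℝ} (hl : 0 ≤ lam) (hE : |E| ≤ Em) (k : ℕ) (t : ℝ) :
    |amoDet lam α E k t| ≤ (Em + 2 * lam + 1) ^ k := by
  have hEm : 0 ≤ Em := (abs_nonneg _).trans hE
  have hdiag (c : ℝ) : |E - 2 * lam * cos c| ≤ Em + 2 * lam := by
    refine (abs_sub _ _).trans (add_le_add hE ?_)
    rw [abs_mul, abs_of_nonneg (by positivity : 0 ≤ 2 * lam)]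
    exact mul_le_of_le_one_right (by positivity) (abs_cos_le_one _)
  induction k using Nat.twoStepInduction with
  | zero => simp [amoDet_zero]
  | one =>
    rw [amoDet_one]
    linarith [hdiag (2 * π * t)]
  | more k ih₀ ih₁ =>
    have hpow : (Em + 2 * lam + 1) ^ k ≤ (Em + 2 * lam + 1) ^ (k + 1) :=
      pow_le_pow_right₀ (by linarith) k.le_succ
    rw [amoDet_add_two]
    refine (abs_sub _ _).trans ?_
    rw [abs_mul]
    calc _ ≤ (Em + 2 * lam) * (Em + 2 * lam + 1) ^ (k + 1) + (Em + 2 * lam + 1) ^ (k + 1) :=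
          add_le_add (mul_le_mul (hdiag _) ih₁ (abs_nonneg _) (by positivity)) (ih₀.trans hpow)
      _ = _ := by ring

end Determinants

section Interpolation

open Polynomial in
lemma exists_abs_eval_le_mul_of_prod_le {ι : Type*} [DecidableEq ι] {P : ℝ[X]} {S : Finset ι}
    {v : ι → ℝ} {x B : ℝ} (hP : P.natDegree < S.card) (hv : Set.InjOn v S)
    (hB : ∀ j ∈ S, ∏ i ∈ S.erase j, |x - v i| ≤ B * ∏ i ∈ S.erase j, |v j - v i|) :
    ∃ j ∈ S, |P.eval x| ≤ S.card * B * |P.eval (v j)| := by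
  obtain ⟨j, hj, hmax⟩ :=
    S.exists_max_image (fun j => |P.eval (v j)|) (Finset.card_pos.1 (Nat.zero_lt_of_lt hP))
  have hbasis : ∀ i ∈ S, |(Lagrange.basis S v i).eval x| ≤ B := fun i hi => by
    have hfactor (l : ι) : |(Lagrange.basisDivisor (v i) (v l)).eval x| =
        |x - v l| / |v i - v l| := by
      simp [Lagrange.basisDivisor, abs_mul, abs_inv, div_eq_inv_mul]
    simp only [Lagrange.basis, eval_prod, Finset.abs_prod, hfactor, Finset.prod_div_distrib]
    have hpos : 0 < ∏ l ∈ S.erase i, |v i - v l| := Finset.prod_pos fun l hl =>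
      abs_pos.2 (sub_ne_zero.2 fun h =>
        Finset.ne_of_mem_erase hl (hv hi (Finset.mem_of_mem_erase hl) h).symm)
    exact (div_le_iff₀ hpos).2 (hB i hi)
  have hexpand : P.eval x = ∑ i ∈ S, P.eval (v i) * (Lagrange.basis S v i).eval x := by
    conv_lhs => rw [Lagrange.eq_interpolate hv (f := P) (degree_le_natDegree.trans_lt
      (by exact_mod_cast hP)), Lagrange.interpolate_apply, eval_finsetSum]
    simp only [eval_mul, eval_C]
  refine ⟨j, hj, ?_⟩
  calc |P.eval x| ≤ ∑ i ∈ S, |P.eval (v i)| * |(Lagrange.basis S v i).eval x| := by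
        rw [hexpand]
        exact (S.abs_sum_le_sum_abs _).trans_eq (Finset.sum_congr rfl fun _ _ => abs_mul _ _)
    _ ≤ ∑ _ ∈ S, |P.eval (v j)| * B := Finset.sum_le_sum fun i hi =>
        mul_le_mul (hmax i hi) (hbasis i hi) (abs_nonneg _) (abs_nonneg _)
    _ = S.card * B * |P.eval (v j)| := by
        rw [Finset.sum_const, nsmul_eq_mul]
        ring

lemma abs_cos_sub_cos_eq_sinDist_mul (x y : ℝ) :
    |cos (2 * π * x) - cos (2 * π * y)| = sinDist (x - y) * sinDist (x + y) / 2 := by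
  rw [cos_sub_cos, sinDist, sinDist, show (2 * π * x + 2 * π * y) / 2 = π * (x + y) by ring,
    show (2 * π * x - 2 * π * y) / 2 = π * (x - y) by ring]
  simp only [abs_mul, abs_neg, abs_two]
  ring

lemma exists_abs_amoDet_le_of_prod_sinDist_le {ι : Type*} [DecidableEq ι] (lam α E : ℝ)
    {S : Finset ι} {k : ℕ} (hcard : S.card = k + 1) {σ : ι → ℝ} {s B : ℝ}
    (hσ : ∀ i ∈ S, ∀ j ∈ S, i ≠ j → 0 < sinDist (σ i - σ j) ∧ 0 < sinDist (σ i + σ j))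
    (hB : ∀ j ∈ S, (∏ i ∈ S.erase j, sinDist (s - σ i)) * ∏ i ∈ S.erase j, sinDist (s + σ i) ≤
      B * ((∏ i ∈ S.erase j, sinDist (σ j - σ i)) * ∏ i ∈ S.erase j, sinDist (σ j + σ i))) :
    ∃ j ∈ S, |amoDet lam α E k (s - (k - 1) * α / 2)| ≤
      (k + 1) * B * |amoDet lam α E k (σ j - (k - 1) * α / 2)| := by
  obtain ⟨P, hdeg, hP⟩ := exists_polynomial_amoDet lam α E k
  have hinj : Set.InjOn (fun j => cos (2 * π * σ j)) S := fun i hi j hj hij => by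
    by_contra hne
    have hdiff := abs_cos_sub_cos_eq_sinDist_mul (σ i) (σ j)
    obtain ⟨hsub, hadd⟩ := hσ i hi j hj hne
    rw [sub_eq_zero.2 hij, abs_zero] at hdiff
    linarith [mul_pos hsub hadd]
  have hbound := exists_abs_eval_le_mul_of_prod_le (P := P) (x := cos (2 * π * s)) (B := B)
    (by omega) hinj fun j hj => by
      simp only [abs_cos_sub_cos_eq_sinDist_mul, Finset.prod_div_distrib, Finset.prod_mul_distrib,
        ← mul_div_assoc]
      exact div_le_div_of_nonneg_right (hB j hj) (by positivity)
  simpa only [hP, hcard, Nat.cast_add, Nat.cast_one] using hbound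

lemma exists_two_mul_add_one_le_exp {ε : ℝ} (hε : 0 < ε) :
    ∃ C, 0 ≤ C ∧ ∀ x : ℝ, 0 ≤ x → 2 * x + 1 ≤ exp (ε * x + C) := by
  have hε' : 0 < 2 / ε := by positivity
  refine ⟨Real.log (2 / ε + 1), log_nonneg (by linarith), fun x hx => ?_⟩
  rw [exp_add, exp_log (by linarith)]
  calc 2 * x + 1 ≤ 2 * x + 1 + (ε * x + 2 / ε) := by linarith [mul_nonneg hε.le hx]
    _ = (ε * x + 1) * (2 / ε + 1) := by
        field_simp
        ring
    _ ≤ exp (ε * x) * (2 / ε + 1) := by gcongr; exact add_one_le_exp _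

/-- The interpolation estimate: for almost Mathieu determinants of length `k`, the values at
the `k + 1` phases `θ + jα`, `j ∈ S`, control all other values up to a factor `exp (εM + C) / ρ`,
provided `S` is a union of two windows in `[-M, M]` and the sums of the centred phases are
`ρ`-separated from the integers. -/
def HasInterpolationBound (lam α ε C : ℝ) : Prop :=
  ∀ (θ : ℝ) (M : ℕ) (S : Finset ℤ) (k : ℕ) (ρ : ℝ),
    IsTwoWindow M S → S.card = k + 1 → 0 < ρ → ρ ≤ 1 →
    (∀ i ∈ S, ∀ j ∈ S, i ≠ j → ρ ≤ sinDist (2 * θ + ((i + j + k - 1 : ℤ) : ℝ) * α)) →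
    ∀ E t, ∃ j ∈ S,
      |amoDet lam α E k t| ≤ exp (ε * M + C) * ρ⁻¹ * |amoDet lam α E k (θ + j * α)|

namespace IsSinDiophantine

variable {α κ τ : ℝ}

lemma exists_exp_neg_le_sinDist (hα : IsSinDiophantine α κ τ) {ε : ℝ} (hε : 0 < ε) :
    ∃ C, 0 ≤ C ∧ ∀ (x : ℝ) (k : ℤ), 0 ≤ x → k ≠ 0 → |(k : ℝ)| ≤ 2 * x →
      exp (-(ε * x + C)) ≤ sinDist (k * α) := by
  have hκ := zero_lt_one.trans_le hα.one_le_exponent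
  obtain ⟨C, hC, hexp⟩ := exists_two_mul_add_one_le_exp (ε := ε / κ) (by positivity)
  refine ⟨κ * C + |Real.log τ|, by positivity, fun x k hx hk hkx => ?_⟩
  refine le_trans ?_ (hα.le_sinDist k hk)
  have : 0 < |(k : ℝ)| := abs_pos.2 (by exact_mod_cast hk)
  rw [le_div_iff₀ (by positivity)]
  calc exp (-(ε * x + (κ * C + |Real.log τ|))) * |(k : ℝ)| ^ κ
      ≤ exp (-(ε * x + (κ * C + |Real.log τ|))) * exp (ε / κ * x + C) ^ κ := by
        gcongr
        linarith [hexp x hx]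
    _ = exp (-|Real.log τ|) := by
        rw [← exp_mul, ← exp_add]
        congr 1
        field_simp
        ring
    _ ≤ exp (Real.log τ) := exp_le_exp.2 (neg_abs_le _)
    _ = τ := exp_log hα.const_pos

lemma exists_exp_neg_le_sinDist_sub (hα : IsSinDiophantine α κ τ) {ε : ℝ} (hε : 0 < ε) :
    ∃ C, 0 ≤ C ∧ ∀ (M : ℕ) (S : Finset ℤ), IsTwoWindow M S → ∀ i ∈ S, ∀ j ∈ S, i ≠ j →
      exp (-(ε * M + C)) ≤ sinDist (((i - j : ℤ) : ℝ) * α) := by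
  obtain ⟨C, hC, hdioph⟩ := hα.exists_exp_neg_le_sinDist hε
  refine ⟨C, hC, fun M S hS i hi j hj hij =>
    hdioph M (i - j) (by positivity) (sub_ne_zero.2 hij) ?_⟩
  have hi := Finset.mem_Icc.1 (hS.1 hi)
  have hj := Finset.mem_Icc.1 (hS.1 hj)
  have : |i - j| ≤ 2 * (M : ℤ) := by rw [abs_le]; omega
  exact_mod_cast this

lemma exists_prod_mul_prod_sinDist_le (hα : IsSinDiophantine α κ τ) {ε : ℝ} (hε : 0 < ε) :
    ∃ C, 0 ≤ C ∧ ∀ (s β : ℝ) (M : ℕ) (S : Finset ℤ), IsTwoWindow M S → ∀ j ∈ S,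
      (∏ i ∈ S.erase j, sinDist (s - (β + i * α))) * ∏ i ∈ S.erase j, sinDist (s + (β + i * α)) ≤
        exp (ε * M + C) := by
  obtain ⟨C, hC, hprod⟩ := hα.exists_prod_sinDist_le (half_pos hε)
  refine ⟨C + C, by linarith, fun s β M S hS j hj => ?_⟩
  have hsub (i : ℤ) : sinDist (s - (β + i * α)) = sinDist (β - s + i * α) := by
    rw [sinDist_sub_comm]
    ring_nf
  simp only [hsub, ← add_assoc s β]
  calc _ ≤ exp (ε / 2 * M + C) * exp (ε / 2 * M + C) :=
        mul_le_mul (hprod _ M S hS j hj) (hprod _ M S hS j hj)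
          (Finset.prod_nonneg fun _ _ => sinDist_nonneg _) (exp_pos _).le
    _ = exp (ε * M + (C + C)) := by
        rw [← exp_add]
        ring_nf

lemma exists_le_prod_mul_prod_sinDist (hα : IsSinDiophantine α κ τ) {ε : ℝ} (hε : 0 < ε) :
    ∃ C, 0 ≤ C ∧ ∀ (β : ℝ) (M : ℕ) (S : Finset ℤ) (ρ : ℝ), IsTwoWindow M S → 0 < ρ → ρ ≤ 1 →
      (∀ i ∈ S, ∀ j ∈ S, i ≠ j → ρ ≤ sinDist (β + i * α + (β + j * α))) → ∀ j ∈ S,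
      ρ * exp (-(ε * M + C)) ≤
        (∏ i ∈ S.erase j, sinDist (β + j * α - (β + i * α))) *
          ∏ i ∈ S.erase j, sinDist (β + j * α + (β + i * α)) := by
  obtain ⟨C₁, hC₁, hprod⟩ := hα.exists_le_prod_sinDist (by positivity : 0 < ε / 3)
  obtain ⟨C₂, hC₂, hdiff⟩ := hα.exists_exp_neg_le_sinDist_sub (by positivity : 0 < ε / 3)
  refine ⟨2 * C₁ + C₂, by positivity, fun β M S ρ hS hρ hρ1 hsum j hj => ?_⟩
  have hgap_le_one : exp (-(ε / 3 * M + C₂)) ≤ 1 := exp_le_one_iff.2 (by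
    have : 0 ≤ ε / 3 * M := by positivity
    linarith)
  have hsub : exp (-(ε / 3 * M + C₂)) * exp (-(ε / 3 * M + C₁)) ≤
      ∏ i ∈ S.erase j, sinDist (β + j * α - (β + i * α)) := by
    have hshift (i : ℤ) : sinDist (β + j * α - (β + i * α)) = sinDist (-j * α + i * α) := by
      rw [sinDist_sub_comm]
      ring_nf
    simp only [hshift]
    refine hprod _ M S hS j hj _ (exp_pos _) hgap_le_one fun i hi => ?_
    convert hdiff M S hS i (Finset.mem_of_mem_erase hi) j hj (Finset.ne_of_mem_erase hi) using 2
    push_cast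
    ring
  have hadd : ρ * exp (-(ε / 3 * M + C₁)) ≤
      ∏ i ∈ S.erase j, sinDist (β + j * α + (β + i * α)) := by
    simp only [← add_assoc _ β]
    refine hprod _ M S hS j hj ρ hρ hρ1 fun i hi => ?_
    simpa only [← add_assoc _ β] using
      hsum j hj i (Finset.mem_of_mem_erase hi) (Finset.ne_of_mem_erase hi).symm
  calc ρ * exp (-(ε * M + (2 * C₁ + C₂)))
      = exp (-(ε / 3 * M + C₂)) * exp (-(ε / 3 * M + C₁)) * (ρ * exp (-(ε / 3 * M + C₁))) := by
        rw [mul_mul_mul_comm, ← mul_assoc, mul_comm (exp _) ρ, mul_assoc, mul_assoc, ← exp_add,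
          ← exp_add]
        ring_nf
    _ ≤ _ := mul_le_mul hsub hadd (by positivity)
        (Finset.prod_nonneg fun _ _ => sinDist_nonneg _)

lemma exists_prod_sinDist_le_mul_prod (hα : IsSinDiophantine α κ τ) {ε : ℝ} (hε : 0 < ε) :
    ∃ C, 0 ≤ C ∧ ∀ (s β : ℝ) (M : ℕ) (S : Finset ℤ) (ρ : ℝ), IsTwoWindow M S → 0 < ρ → ρ ≤ 1 →
      (∀ i ∈ S, ∀ j ∈ S, i ≠ j → ρ ≤ sinDist (β + i * α + (β + j * α))) → ∀ j ∈ S,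
      (∏ i ∈ S.erase j, sinDist (s - (β + i * α))) * ∏ i ∈ S.erase j, sinDist (s + (β + i * α)) ≤
        exp (ε * M + C) * ρ⁻¹ * ((∏ i ∈ S.erase j, sinDist (β + j * α - (β + i * α))) *
          ∏ i ∈ S.erase j, sinDist (β + j * α + (β + i * α))) := by
  obtain ⟨C₁, hC₁, hnum⟩ := hα.exists_prod_mul_prod_sinDist_le (half_pos hε)
  obtain ⟨C₂, hC₂, hden⟩ := hα.exists_le_prod_mul_prod_sinDist (half_pos hε)
  refine ⟨C₁ + C₂, by positivity, fun s β M S ρ hS hρ hρ1 hsum j hj => ?_⟩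
  calc _ ≤ exp (ε / 2 * M + C₁) := hnum s β M S hS j hj
    _ = exp (ε * M + (C₁ + C₂)) * ρ⁻¹ * (ρ * exp (-(ε / 2 * M + C₂))) := by
        rw [mul_assoc, inv_mul_cancel_left₀ hρ.ne', ← exp_add]
        ring_nf
    _ ≤ _ := mul_le_mul_of_nonneg_left (hden β M S ρ hS hρ hρ1 hsum j hj) (by positivity)

lemma exists_hasInterpolationBound (hα : IsSinDiophantine α κ τ) (lam : ℝ) {ε : ℝ} (hε : 0 < ε) :
    ∃ C, 0 ≤ C ∧ HasInterpolationBound lam α ε C := by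
  obtain ⟨C₁, hC₁, hratio⟩ := hα.exists_prod_sinDist_le_mul_prod (half_pos hε)
  obtain ⟨C₂, -, hdiff⟩ := hα.exists_exp_neg_le_sinDist_sub hε
  obtain ⟨C₃, hC₃, hexp⟩ := exists_two_mul_add_one_le_exp (half_pos hε)
  refine ⟨C₁ + C₃, by positivity, fun θ M S k ρ hS hcard hρ hρ1 hres E t => ?_⟩
  set β := θ + (k - 1) * α / 2 with hβ
  have hsum : ∀ i ∈ S, ∀ j ∈ S, i ≠ j → ρ ≤ sinDist (β + i * α + (β + j * α)) :=
    fun i hi j hj hij => by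
      convert hres i hi j hj hij using 2
      push_cast
      ring
  obtain ⟨j, hj, hbound⟩ := exists_abs_amoDet_le_of_prod_sinDist_le lam α E hcard
    (σ := fun i : ℤ => β + i * α) (fun i hi j hj hij => by
      refine ⟨(exp_pos _).trans_le ((hdiff M S hS i hi j hj hij).trans_eq ?_),
        hρ.trans_le (hsum i hi j hj hij)⟩
      push_cast
      ring_nf) (hratio (t + (k - 1) * α / 2) β M S ρ hS hρ hρ1 hsum)
  rw [add_sub_cancel_right, show β + j * α - (k - 1) * α / 2 = θ + j * α by rw [hβ]; ring]
    at hbound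
  refine ⟨j, hj, hbound.trans ?_⟩
  have hk : (k : ℝ) + 1 ≤ exp (ε / 2 * M + C₃) := by
    have hcard_le := hcard ▸ hS.card_le
    exact le_trans (by exact_mod_cast hcard_le) (hexp M (by positivity))
  calc _ ≤ exp (ε / 2 * M + C₃) * (exp (ε / 2 * M + C₁) * ρ⁻¹) * |amoDet lam α E k (θ + j * α)| :=
        by gcongr
    _ = exp (ε * M + (C₁ + C₃)) * ρ⁻¹ * |amoDet lam α E k (θ + j * α)| := by
        rw [← mul_assoc, ← exp_add]
        ring_nf

end IsSinDiophantine

end Interpolation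

section Growth

/-- The largest absolute value of the almost Mathieu determinants of length at most `k`, over all
phases. -/
def maxDet (lam α E : ℝ) (k : ℕ) : ℝ := ⨆ p : Fin (k + 1) × ℝ, |amoDet lam α E p.1 p.2|

/-- The logarithm of `2 * maxDet`; the factor `2` makes it subadditive in the length. -/
def logMaxDet (lam α E : ℝ) (k : ℕ) : ℝ := Real.log (2 * maxDet lam α E k)

/-- A bound for `logMaxDet lam α E 1`, and hence for the exponential growth rate of the
determinants, valid for all energies `|E| ≤ Em`. -/
def maxGrowthRate (lam Em : ℝ) : ℝ := Real.log (2 * (Em + 2 * lam + 1))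

variable {lam α E Em : ℝ}

lemma maxDet_le {k : ℕ} {B : ℝ} (h : ∀ i ≤ k, ∀ t, |amoDet lam α E i t| ≤ B) :
    maxDet lam α E k ≤ B :=
  ciSup_le fun p => h _ (by omega) _

lemma abs_amoDet_le_maxDet (hl : 0 ≤ lam) {i k : ℕ} (hik : i ≤ k) (t : ℝ) :
    |amoDet lam α E i t| ≤ maxDet lam α E k := by
  refine le_ciSup (f := fun p : Fin (k + 1) × ℝ => |amoDet lam α E p.1 p.2|)
    ⟨(|E| + 2 * lam + 1) ^ k, ?_⟩ (⟨⟨i, by omega⟩, t⟩ : Fin (k + 1) × ℝ)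
  rintro _ ⟨p, rfl⟩
  exact (abs_amoDet_le_pow hl le_rfl _ _).trans
    (pow_le_pow_right₀ (by linarith [abs_nonneg E]) (by omega))

lemma one_le_maxDet (hl : 0 ≤ lam) (k : ℕ) : 1 ≤ maxDet lam α E k := by
  simpa [amoDet_zero] using abs_amoDet_le_maxDet (α := α) (E := E) hl (Nat.zero_le k) 0

lemma exists_maxDet_le_two_mul (hl : 0 ≤ lam) (k : ℕ) :
    ∃ i ≤ k, ∃ t, maxDet lam α E k ≤ 2 * |amoDet lam α E i t| := by
  by_contra! h
  have hhalf : maxDet lam α E k ≤ maxDet lam α E k / 2 :=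
    maxDet_le fun i hi t => by linarith [h i hi t]
  linarith [one_le_maxDet (α := α) (E := E) hl k]

lemma maxDet_mono (hl : 0 ≤ lam) : Monotone (maxDet lam α E) :=
  fun _ _ h => maxDet_le fun _ hj t => abs_amoDet_le_maxDet hl (hj.trans h) t

lemma maxDet_add_le (hl : 0 ≤ lam) (j k : ℕ) :
    maxDet lam α E (j + k) ≤ 2 * (maxDet lam α E j * maxDet lam α E k) := by
  have hj := one_le_maxDet (α := α) (E := E) hl j
  have hk := one_le_maxDet (α := α) (E := E) hl k
  refine maxDet_le fun i hi t => ?_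
  rcases le_or_gt i j with hij | hji
  · nlinarith [abs_amoDet_le_maxDet (α := α) (E := E) hl hij t]
  rcases Nat.eq_zero_or_pos j with rfl | hj_pos
  · nlinarith [abs_amoDet_le_maxDet (α := α) (E := E) hl (show i ≤ k by omega) t]
  obtain ⟨j, rfl⟩ := Nat.exists_eq_add_one.2 hj_pos
  obtain ⟨l, rfl⟩ : ∃ l, i = j + l + 2 := ⟨i - j - 2, by omega⟩
  rw [amoDet_add_add_two]
  refine (abs_sub _ _).trans ?_
  rw [abs_mul, abs_mul, two_mul]
  gcongr <;> exact abs_amoDet_le_maxDet hl (by omega) _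

lemma logMaxDet_nonneg (hl : 0 ≤ lam) (k : ℕ) : 0 ≤ logMaxDet lam α E k :=
  log_nonneg (by linarith [one_le_maxDet (α := α) (E := E) hl k])

lemma exp_logMaxDet (hl : 0 ≤ lam) (k : ℕ) :
    exp (logMaxDet lam α E k) = 2 * maxDet lam α E k :=
  exp_log (by linarith [one_le_maxDet (α := α) (E := E) hl k])

lemma logMaxDet_mono (hl : 0 ≤ lam) : Monotone (logMaxDet lam α E) := fun i j h => by
  rw [← exp_le_exp, exp_logMaxDet hl, exp_logMaxDet hl]
  linarith [maxDet_mono (α := α) (E := E) hl h]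

lemma subadditive_logMaxDet (hl : 0 ≤ lam) : Subadditive (logMaxDet lam α E) := fun j k => by
  rw [← exp_le_exp, exp_add, exp_logMaxDet hl, exp_logMaxDet hl, exp_logMaxDet hl]
  linarith [maxDet_add_le (α := α) (E := E) hl j k]

lemma mul_log_le_logMaxDet (hl : 1 < lam) (k : ℕ) : k * Real.log lam ≤ logMaxDet lam α E k := by
  have hl₀ : 0 ≤ lam := by linarith
  have hherman : |lam| ^ k ≤ maxDet lam α E k :=
    abs_pow_le_of_forall_abs_amoDet_le fun t => abs_amoDet_le_maxDet hl₀ le_rfl t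
  rw [abs_of_nonneg hl₀] at hherman
  rw [← exp_le_exp, exp_logMaxDet hl₀, ← Real.log_pow, exp_log (by positivity)]
  linarith [one_le_maxDet (α := α) (E := E) hl₀ k]

lemma logMaxDet_one_le (hl : 0 ≤ lam) (hE : |E| ≤ Em) :
    logMaxDet lam α E 1 ≤ maxGrowthRate lam Em := by
  have hEm := (abs_nonneg _).trans hE
  rw [← exp_le_exp, exp_logMaxDet hl, maxGrowthRate, exp_log (by positivity)]
  have : maxDet lam α E 1 ≤ Em + 2 * lam + 1 := maxDet_le fun i hi t =>
    (abs_amoDet_le_pow hl hE i t).trans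
      ((pow_le_pow_right₀ (by linarith) hi).trans_eq (pow_one _))
  linarith

lemma abs_amoDet_le_exp_logMaxDet (hl : 0 ≤ lam) (j : ℕ) (t : ℝ) :
    |amoDet lam α E j t| ≤ exp (logMaxDet lam α E j) := by
  rw [exp_logMaxDet hl]
  linarith [abs_amoDet_le_maxDet (α := α) (E := E) hl le_rfl t (i := j), one_le_maxDet (α := α)
    (E := E) hl j]

lemma maxGrowthRate_pos (hl : 1 < lam) (hEm : 0 ≤ Em) : 0 < maxGrowthRate lam Em :=
  log_pos (by linarith)

section Subadditive

variable {f : ℕ → ℝ}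

lemma le_mul_apply_one_of_subadditive (hsub : Subadditive f) {k : ℕ} (hk : 0 < k) :
    f k ≤ k * f 1 := by
  obtain ⟨k, rfl⟩ := Nat.exists_eq_add_one.2 hk
  have := hsub.apply_mul_add_le k 1 1
  push_cast
  rw [mul_one] at this
  linarith

lemma le_add_mul_div_of_subadditive (hsub : Subadditive f) (hmono : Monotone f)
    (hf : ∀ k, 0 ≤ f k) (j : ℕ) {k : ℕ} (hk : 0 < k) : f j ≤ (j + k) * (f k / k) := by
  have hdiv : ((j / k : ℕ) : ℝ) * k ≤ j := by exact_mod_cast Nat.div_mul_le_self j k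
  have hk' : (0 : ℝ) < k := by exact_mod_cast hk
  have := div_nonneg (hf k) hk'.le
  calc f j = f (j / k * k + j % k) := by rw [mul_comm, Nat.div_add_mod]
    _ ≤ (j / k : ℕ) * f k + f k := (hsub.apply_mul_add_le _ _ _).trans
        (add_le_add_right (hmono (Nat.mod_lt j hk).le) _)
    _ = ((j / k : ℕ) * k + k) * (f k / k) := by field_simp
    _ ≤ (j + k) * (f k / k) := by gcongr

/-- Along the scales `k₀ B ^ n` the averages `f k / k` lie in `[0, Γ]`, so two consecutive ones
differ by at most `e` for some `n ≤ Γ / e`; the larger of those two scales works. -/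
lemma exists_forall_exists_scale {Γ e : ℝ} (hΓ : 0 < Γ) (he : 0 < e) :
    ∃ A : ℕ, 0 < A ∧ ∀ f : ℕ → ℝ, Subadditive f → Monotone f → (∀ k, 0 ≤ f k) → f 1 ≤ Γ →
      ∀ k₀, 0 < k₀ → ∃ k, k₀ ≤ k ∧ k ≤ k₀ * A ∧ ∀ j : ℕ, f j ≤ (f k / k + e) * j + e * k := by
  obtain ⟨B, hB⟩ := exists_nat_gt (Γ / e)
  obtain ⟨N, hN⟩ := exists_nat_gt (Γ / e)
  rw [div_lt_iff₀ he] at hB hN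
  have hB_pos : 0 < B := Nat.cast_pos.1 (pos_of_mul_pos_left (hΓ.trans hB) he.le)
  refine ⟨B ^ N, by positivity, fun f hsub hmono hf hf1 k₀ hk₀ => ?_⟩
  set a : ℕ → ℝ := fun n => f (k₀ * B ^ n) / (k₀ * B ^ n : ℕ)
  have hpos (n : ℕ) : 0 < k₀ * B ^ n := by positivity
  have ha_le (n : ℕ) : a n ≤ Γ := by
    refine (div_le_iff₀ (by exact_mod_cast hpos n)).2 ?_
    rw [mul_comm Γ]
    exact (le_mul_apply_one_of_subadditive hsub (hpos n)).trans (by gcongr)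
  obtain ⟨n, hn, hdrop⟩ : ∃ n < N, a n - a (n + 1) ≤ e := by
    by_contra! hcon
    have hsum : ∑ _ ∈ Finset.range N, e ≤ ∑ n ∈ Finset.range N, (a n - a (n + 1)) :=
      Finset.sum_le_sum fun n hn => (hcon n (Finset.mem_range.1 hn)).le
    rw [Finset.sum_range_sub', Finset.sum_const, Finset.card_range, nsmul_eq_mul] at hsum
    have : 0 ≤ a N := div_nonneg (hf _) (Nat.cast_nonneg _)
    linarith [ha_le 0]
  refine ⟨k₀ * B ^ (n + 1), Nat.le_mul_of_pos_right _ (by positivity),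
    Nat.mul_le_mul_left _ (Nat.pow_le_pow_right hB_pos hn), fun j => ?_⟩
  have hscale : ((k₀ * B ^ n : ℕ) : ℝ) * Γ ≤ e * (k₀ * B ^ (n + 1) : ℕ) := by
    calc ((k₀ * B ^ n : ℕ) : ℝ) * Γ ≤ (k₀ * B ^ n : ℕ) * (B * e) := by gcongr
      _ = e * (k₀ * B ^ (n + 1) : ℕ) := by push_cast; ring
  calc f j ≤ (j + (k₀ * B ^ n : ℕ)) * a n :=
        le_add_mul_div_of_subadditive hsub hmono hf j (hpos n)
    _ = a n * j + (k₀ * B ^ n : ℕ) * a n := by ring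
    _ ≤ (a (n + 1) + e) * j + (k₀ * B ^ n : ℕ) * Γ := by
        gcongr
        · linarith
        · exact ha_le n
    _ ≤ (a (n + 1) + e) * j + e * (k₀ * B ^ (n + 1) : ℕ) := by gcongr

end Subadditive

/-- At the scale `k` some determinant realises the exponential growth rate `ℓ`, while at every
scale the growth rate is at most `ℓ + e`, up to a factor `exp (e * k)`. -/
structure IsGrowthScale (lam α E e ℓ : ℝ) (k : ℕ) : Prop where
  exists_exp_le : ∃ t, exp (ℓ * k) ≤ 4 * |amoDet lam α E k t|
  abs_le_exp : ∀ (j : ℕ) t, |amoDet lam α E j t| ≤ exp ((ℓ + e) * j + e * k)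

/-- The growth bound `hf` makes the determinants of length at most `k / 2` too small. -/
lemma half_le_of_exp_le_abs_amoDet (hl : 0 ≤ lam) {ℓ e t : ℝ} {k k' : ℕ} (he : 0 < e)
    (hℓ : 12 * e ≤ ℓ) (hk : Real.log 4 ≤ e * k)
    (hf : ∀ j : ℕ, logMaxDet lam α E j ≤ (ℓ + e) * j + e * k)
    (hk' : exp (ℓ * k) ≤ 4 * |amoDet lam α E k' t|) : (k : ℝ) / 2 ≤ k' := by
  have hlower : ℓ * k ≤ Real.log 4 + logMaxDet lam α E k' := by
    rw [← exp_le_exp, exp_add, exp_log (by norm_num)]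
    linarith [abs_amoDet_le_exp_logMaxDet (α := α) (E := E) hl k' t]
  by_contra! hshort
  have hupper : (ℓ + e) * k' ≤ (ℓ + e) * (k / 2) := by gcongr; linarith
  nlinarith [hf k']

lemma exists_isGrowthScale_le (hl : 1 < lam) {e : ℝ} (he : 0 < e) (hEm : 0 ≤ Em) :
    ∃ (A : ℕ) (K : ℝ), 0 < A ∧ ∀ k₀ : ℕ, 0 < k₀ → K ≤ k₀ → ∀ E, |E| ≤ Em → ∃ (k : ℕ) (ℓ : ℝ),
      (k₀ : ℝ) / 2 ≤ k ∧ k ≤ k₀ * A ∧ Real.log lam ≤ ℓ ∧ ℓ ≤ maxGrowthRate lam Em ∧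
      IsGrowthScale lam α E e ℓ k := by
  have hl₀ : 0 ≤ lam := by linarith
  have hlog := log_pos hl
  obtain ⟨e', he', hee, hel⟩ : ∃ e' : ℝ, 0 < e' ∧ 4 * e' ≤ e ∧ 12 * e' ≤ Real.log lam :=
    ⟨min (e / 4) (Real.log lam / 12), by positivity,
      by linarith [min_le_left (e / 4) (Real.log lam / 12)],
      by linarith [min_le_right (e / 4) (Real.log lam / 12)]⟩
  obtain ⟨A, hA, hscale⟩ := exists_forall_exists_scale (maxGrowthRate_pos hl hEm) he'
  refine ⟨A, Real.log 4 / e', hA, fun k₀ hk₀ hk₀_large E hE => ?_⟩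
  obtain ⟨k, hk₀k, hkA, hf⟩ := hscale (logMaxDet lam α E) (subadditive_logMaxDet hl₀)
    (logMaxDet_mono hl₀) (logMaxDet_nonneg hl₀) (logMaxDet_one_le hl₀ hE) k₀ hk₀
  have hk : (0 : ℝ) < k := by exact_mod_cast hk₀.trans_le hk₀k
  have hk₀k' : (k₀ : ℝ) ≤ k := by exact_mod_cast hk₀k
  set ℓ := logMaxDet lam α E k / k
  have hℓk : ℓ * k = logMaxDet lam α E k := div_mul_cancel₀ _ hk.ne'
  have hℓ : Real.log lam ≤ ℓ := (le_div_iff₀' hk).2 (mul_log_le_logMaxDet hl k)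
  have hℓ_le : ℓ ≤ maxGrowthRate lam Em := (div_le_iff₀' hk).2
    ((le_mul_apply_one_of_subadditive (subadditive_logMaxDet hl₀) (by exact_mod_cast hk)).trans
      (by gcongr; exact logMaxDet_one_le hl₀ hE))
  obtain ⟨k', hk'k, t, ht⟩ := exists_maxDet_le_two_mul (α := α) (E := E) hl₀ k
  have hexp : exp (ℓ * k) ≤ 4 * |amoDet lam α E k' t| := by
    rw [hℓk, exp_logMaxDet hl₀]
    linarith
  have hlog4 : Real.log 4 ≤ e' * k :=
    ((div_le_iff₀' he').1 hk₀_large).trans (by gcongr)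
  have hhalf := half_le_of_exp_le_abs_amoDet hl₀ he' (by linarith) hlog4 hf hexp
  have hk'k_real : (k' : ℝ) ≤ k := by exact_mod_cast hk'k
  refine ⟨k', ℓ, by linarith, hk'k.trans hkA, hℓ, hℓ_le,
    ⟨t, (exp_le_exp.2 (by gcongr; linarith)).trans hexp⟩, fun j t => ?_⟩
  refine (abs_amoDet_le_exp_logMaxDet hl₀ j t).trans (exp_le_exp.2 ((hf j).trans ?_))
  have hj : e' * (j : ℝ) ≤ e * j := by gcongr; linarith
  have hrest : e' * (k : ℝ) ≤ e * k' := by nlinarith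
  linarith

lemma exists_isGrowthScale (hl : 1 < lam) (α : ℝ) (hEm : 0 ≤ Em) {e h' : ℝ} (he : 0 < e)
    (hh' : 0 < h') :
    ∃ h : ℝ, 0 < h ∧ ∃ R₀ : ℕ, ∀ R : ℕ, R₀ ≤ R → ∀ E, |E| ≤ Em → ∃ (k : ℕ) (ℓ : ℝ),
      h * R ≤ k ∧ k ≤ h' * R ∧ Real.log lam ≤ ℓ ∧ ℓ ≤ maxGrowthRate lam Em ∧
      IsGrowthScale lam α E e ℓ k := by
  obtain ⟨A, K, hA, hscale⟩ := exists_isGrowthScale_le (α := α) hl he hEm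
  have : (0 : ℝ) < A := by exact_mod_cast hA
  set h := h' / (2 * A) with hh_def
  have hh : 0 < h := by positivity
  obtain ⟨R₀, hR₀⟩ := exists_nat_ge (max 1 K / h)
  refine ⟨h / 2, by positivity, R₀, fun R hR E hE => ?_⟩
  have hlarge : max 1 K ≤ h * R :=
    (div_le_iff₀' hh).1 (hR₀.trans (by exact_mod_cast hR))
  have hone := (le_max_left 1 K).trans hlarge
  have hceil := Nat.le_ceil (h * R)
  obtain ⟨k, ℓ, hk, hkA, hℓ⟩ := hscale ⌈h * R⌉₊ (Nat.ceil_pos.2 (by linarith))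
    (((le_max_right 1 K).trans hlarge).trans hceil) E hE
  have hkA' : (k : ℝ) ≤ ⌈h * R⌉₊ * A := by exact_mod_cast hkA
  refine ⟨k, ℓ, by linarith, hkA'.trans ?_, hℓ⟩
  calc (⌈h * R⌉₊ : ℝ) * A ≤ 2 * (h * R) * A := by
        gcongr
        linarith [Nat.ceil_lt_add_one (by linarith : 0 ≤ h * R)]
    _ = h' * R := by
        rw [hh_def]
        field_simp

end Growth

section RegularSites

variable {lam α θ E ε C ρ ℓ e : ℝ} {φ : ℤ → ℝ} {k : ℕ}

lemma IsEigenfunction.abs_mul_abs_amoDet_le (h : IsEigenfunction (amoPot lam α θ) E φ)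
    {b : ℕ → ℝ} (hb : ∀ j t, |amoDet lam α E j t| ≤ b j) (z : ℤ) {t : ℕ} (ht : t < k) :
    |φ z| * |amoDet lam α E k (θ + ((z - t : ℤ) : ℝ) * α)| ≤
      b (k - 1 - t) * |φ (z - t - 1)| + b t * |φ (z - t + k)| := by
  have hgreen := h.mul_continuant (z - t) t (k - 1 - t)
  rw [show t + (k - 1 - t) + 1 = k by lia, show z - (t : ℤ) + t = z by ring,
    show z + ((k - 1 - t : ℕ) : ℤ) + 1 = z - t + k by lia] at hgreen
  simp only [continuant_amoPot_eq_amoDet] at hgreen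
  rw [← abs_mul, hgreen]
  refine (abs_add_le _ _).trans ?_
  rw [abs_mul, abs_mul]
  gcongr <;> exact hb _ _

/-- The window of sites `z - q, …, z - p`: the left endpoints of the intervals of a fixed length
that contain `z` at an offset between `p` and `q`. -/
def backwardWindow (z : ℤ) (p q : ℕ) : Finset ℤ := Finset.Ico (z - q) (z - p + 1)

lemma mem_backwardWindow {z j : ℤ} {p q : ℕ} :
    j ∈ backwardWindow z p q ↔ ∃ t : ℕ, p ≤ t ∧ t ≤ q ∧ j = z - t := by
  simp only [backwardWindow, Finset.mem_Ico]
  constructor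
  · exact fun h => ⟨(z - j).toNat, by lia, by lia, by lia⟩
  · rintro ⟨t, hpt, htq, rfl⟩
    lia

lemma card_backwardWindow (z : ℤ) {p q : ℕ} (hpq : p ≤ q) :
    (backwardWindow z p q).card = q - p + 1 := by
  rw [backwardWindow, Int.card_Ico]
  lia

lemma isTwoWindow_union_backwardWindow {M k p₁ q₁ p₂ q₂ : ℕ} {z₁ z₂ : ℤ} (hq₁ : q₁ < k)
    (hq₂ : q₂ < k) (hz₁ : |z₁| + k ≤ M) (hz₂ : |z₂| + k ≤ M)
    (hdisj : Disjoint (backwardWindow z₁ p₁ q₁) (backwardWindow z₂ p₂ q₂)) :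
    IsTwoWindow M (backwardWindow z₁ p₁ q₁ ∪ backwardWindow z₂ p₂ q₂) := by
  refine ⟨fun j hj => ?_, _, _, _, _, hdisj, rfl⟩
  have hz₁' := abs_le.1 (le_sub_iff_add_le.2 hz₁)
  have hz₂' := abs_le.1 (le_sub_iff_add_le.2 hz₂)
  rcases Finset.mem_union.1 hj with hj | hj <;>
    simp only [backwardWindow, Finset.mem_Ico, Finset.mem_Icc] at hj ⊢ <;> lia

lemma HasInterpolationBound.exists_le_of_disjoint_backwardWindow
    (hC : HasInterpolationBound lam α ε C) (hρ : 0 < ρ) (hρ1 : ρ ≤ 1) {M p₁ q₁ p₂ q₂ : ℕ}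
    {z₁ z₂ : ℤ} (hq₁ : q₁ < k) (hq₂ : q₂ < k) (hz₁ : |z₁| + k ≤ M) (hz₂ : |z₂| + k ≤ M)
    (hdisj : Disjoint (backwardWindow z₁ p₁ q₁) (backwardWindow z₂ p₂ q₂))
    (hcard : (backwardWindow z₁ p₁ q₁).card + (backwardWindow z₂ p₂ q₂).card = k + 1)
    (hsep₁ : ∀ t t' : ℕ, t ≠ t' → p₁ ≤ t → t ≤ q₁ → p₁ ≤ t' → t' ≤ q₁ →
      ρ ≤ sinDist (2 * θ + ((2 * z₁ + k - 1 - t - t' : ℤ) : ℝ) * α))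
    (hsep₂ : ∀ t t' : ℕ, t ≠ t' → p₂ ≤ t → t ≤ q₂ → p₂ ≤ t' → t' ≤ q₂ →
      ρ ≤ sinDist (2 * θ + ((2 * z₂ + k - 1 - t - t' : ℤ) : ℝ) * α))
    (hsep₁₂ : ∀ t t' : ℕ, p₁ ≤ t → t ≤ q₁ → p₂ ≤ t' → t' ≤ q₂ →
      ρ ≤ sinDist (2 * θ + ((z₁ + z₂ + k - 1 - t - t' : ℤ) : ℝ) * α)) (E x : ℝ) :
    (∃ t : ℕ, p₁ ≤ t ∧ t ≤ q₁ ∧ |amoDet lam α E k x| ≤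
      exp (ε * M + C) * ρ⁻¹ * |amoDet lam α E k (θ + ((z₁ - t : ℤ) : ℝ) * α)|) ∨
    (∃ t : ℕ, p₂ ≤ t ∧ t ≤ q₂ ∧ |amoDet lam α E k x| ≤
      exp (ε * M + C) * ρ⁻¹ * |amoDet lam α E k (θ + ((z₂ - t : ℤ) : ℝ) * α)|) := by
  obtain ⟨j, hj, hbound⟩ := hC θ M _ k ρ
    (isTwoWindow_union_backwardWindow hq₁ hq₂ hz₁ hz₂ hdisj)
    ((Finset.card_union_of_disjoint hdisj).trans hcard) hρ hρ1 (fun i hi j hj hij => by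
      rcases Finset.mem_union.1 hi with hi | hi <;> rcases Finset.mem_union.1 hj with hj | hj <;>
        obtain ⟨t, hpt, htq, rfl⟩ := mem_backwardWindow.1 hi <;>
        obtain ⟨t', hpt', htq', rfl⟩ := mem_backwardWindow.1 hj
      · convert hsep₁ t t' (by lia) hpt htq hpt' htq' using 5; ring
      · convert hsep₁₂ t t' hpt htq hpt' htq' using 5; ring
      · convert hsep₁₂ t' t hpt' htq' hpt htq using 5; ring
      · convert hsep₂ t t' (by lia) hpt htq hpt' htq' using 5; ring) E x
  refine (Finset.mem_union.1 hj).imp ?_ ?_ <;> intro hj <;>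
    obtain ⟨t, hpt, htq, rfl⟩ := mem_backwardWindow.1 hj <;> exact ⟨t, hpt, htq, hbound⟩

/-- The offset `t` of a site in an interval of length `k` is central if the site is at distance at
least `k / 6` from the two sites adjacent to the interval. -/
def IsCentralOffset (k t : ℕ) : Prop := k ≤ 6 * (t + 1) ∧ k + 6 * t ≤ 6 * k

/-- One of the two windows is centred. The other one has a third of its length and is shifted
to the side where the sums of its phases avoid the resonance `n₀`. -/
lemma HasInterpolationBound.exists_isCentralOffset (hC : HasInterpolationBound lam α ε C)
    (hρ : 0 < ρ) (hρ1 : ρ ≤ 1) {M : ℕ} {n₀ z₁ z₂ : ℤ} (hk : 0 < k)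
    (hres : ∀ n : ℤ, n ≠ n₀ → |n| ≤ 2 * M → ρ ≤ sinDist (2 * θ + n * α))
    (hz₁ : |z₁| + k ≤ M) (hz₂ : |z₂| + k ≤ M) (hsub : (k : ℤ) ≤ |z₁ - z₂|)
    (hadd : (k : ℤ) ≤ |z₁ + z₂ - n₀|) (hself : (k : ℤ) ≤ |2 * z₁ - n₀|) (E x : ℝ) :
    ∃ z, (z = z₁ ∨ z = z₂) ∧ ∃ t : ℕ, IsCentralOffset k t ∧ |amoDet lam α E k x| ≤
      exp (ε * M + C) * ρ⁻¹ * |amoDet lam α E k (θ + ((z - t : ℤ) : ℝ) * α)| := by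
  obtain ⟨u, hu, hu'⟩ : ∃ u : ℕ, 6 * u + 1 ≤ k ∧ k ≤ 6 * u + 6 := ⟨(k - 1) / 6, by lia, by lia⟩
  obtain ⟨p, hup, hpk, hp⟩ : ∃ p : ℕ, u ≤ p ∧ p + 3 * u + 1 ≤ k ∧
      ∀ t t' : ℕ, t ≠ t' → p ≤ t → t ≤ p + 2 * u → p ≤ t' → t' ≤ p + 2 * u →
        2 * z₂ + k - 1 - t - t' ≠ n₀ := by
    rcases le_or_gt n₀ (2 * z₂) with hside | hside
    · exact ⟨u, by lia, by lia, by lia⟩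
    · exact ⟨k - 1 - 3 * u, by lia, by lia, by lia⟩
  have hz₁' := abs_le.1 (le_sub_iff_add_le.2 hz₁)
  have hz₂' := abs_le.1 (le_sub_iff_add_le.2 hz₂)
  have hsub' := le_abs.1 hsub
  have hadd' := le_abs.1 hadd
  have hself' := le_abs.1 hself
  have hres' (n : ℤ) (hn : n ≠ n₀) (hlow : -(2 * M) ≤ n) (hupp : n ≤ 2 * M) :
      ρ ≤ sinDist (2 * θ + n * α) := hres n hn (abs_le.2 ⟨hlow, hupp⟩)
  have hdisj : Disjoint (backwardWindow z₁ u (k - 1 - u)) (backwardWindow z₂ p (p + 2 * u)) :=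
    Finset.disjoint_left.2 fun j hj hj' => by
      simp only [backwardWindow, Finset.mem_Ico] at hj hj'
      lia
  have hcard : (backwardWindow z₁ u (k - 1 - u)).card + (backwardWindow z₂ p (p + 2 * u)).card =
      k + 1 := by
    rw [card_backwardWindow _ (by lia), card_backwardWindow _ (by lia)]
    lia
  rcases hC.exists_le_of_disjoint_backwardWindow hρ hρ1 (by lia) (by lia) hz₁ hz₂ hdisj hcard
    (fun t t' _ _ _ _ _ => hres' _ (by lia) (by lia) (by lia))
    (fun t t' hne h₁ h₂ h₃ h₄ => hres' _ (hp t t' hne h₁ h₂ h₃ h₄) (by lia) (by lia))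
    (fun t t' _ _ _ _ => hres' _ (by lia) (by lia) (by lia)) E x with
    ⟨t, hpt, htq, hbound⟩ | ⟨t, hpt, htq, hbound⟩
  · exact ⟨z₁, Or.inl rfl, t, ⟨by lia, by lia⟩, hbound⟩
  · exact ⟨z₂, Or.inr rfl, t, ⟨by lia, by lia⟩, hbound⟩

/-- The site `x` is regular at scale `k` if `φ x` is controlled by the values of `φ` next to the
two ends of an interval of length `k` containing `x` centrally, with weights decaying
exponentially at rate `ℓ` in the distance to `x`, up to an error `exp (3 * e * k)`. -/
def IsRegularSite (φ : ℤ → ℝ) (ℓ e : ℝ) (k : ℕ) (x : ℤ) : Prop :=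
  ∃ t : ℕ, IsCentralOffset k t ∧
    |φ x| ≤ exp (-ℓ * (t + 1) + 3 * e * k) * |φ (x - t - 1)| +
      exp (-ℓ * (k - t) + 3 * e * k) * |φ (x - t + k)|

lemma IsGrowthScale.isRegularSite (hscale : IsGrowthScale lam α E e ℓ k)
    (h : IsEigenfunction (amoPot lam α θ) E φ) (he : 0 < e) (hk : 0 < k) {B t₀ : ℝ} {z : ℤ} {t : ℕ}
    (ht : IsCentralOffset k t) (ht₀ : exp (ℓ * k) ≤ 4 * |amoDet lam α E k t₀|)
    (hB : 4 * B ≤ exp (e * k))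
    (hbound : |amoDet lam α E k t₀| ≤ B * |amoDet lam α E k (θ + ((z - t : ℤ) : ℝ) * α)|) :
    IsRegularSite φ ℓ e k z := by
  have htk : t < k := by
    have := ht.2
    lia
  refine ⟨t, ht, ?_⟩
  have hgreen := h.abs_mul_abs_amoDet_le hscale.abs_le_exp z htk
  set D := |amoDet lam α E k (θ + ((z - t : ℤ) : ℝ) * α)|
  have hD : exp (ℓ * k - e * k) ≤ D := by
    rw [exp_sub, div_le_iff₀ (exp_pos _)]
    calc exp (ℓ * k) ≤ 4 * (B * D) := by linarith
      _ = D * (4 * B) := by ring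
      _ ≤ D * exp (e * k) := mul_le_mul_of_nonneg_left hB (abs_nonneg _)
  have hφz := (mul_le_mul_of_nonneg_left hD (abs_nonneg (φ z))).trans hgreen
  rw [← le_div_iff₀ (exp_pos _), add_div, mul_div_right_comm, mul_div_right_comm, ← exp_sub,
    ← exp_sub, Nat.sub_sub, Nat.cast_sub (by lia)] at hφz
  have het : e * (t + 1) ≤ e * k := mul_le_mul_of_nonneg_left (by exact_mod_cast htk) he.le
  have het₀ : 0 ≤ e * t := by positivity
  push_cast at hφz
  refine hφz.trans (add_le_add ?_ ?_) <;> gcongr <;> linarith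

lemma not_isRegularSite_of_forall_abs_le {K : ℝ} {m : ℤ} (hmax : ∀ n, |φ n| ≤ K * |φ m|)
    (hm : 0 < |φ m|) (he : 0 < e) (hℓ : 72 * e ≤ ℓ) (hK : 2 * K < exp (9 * e * k)) :
    ¬ IsRegularSite φ ℓ e k m := by
  rintro ⟨t, ⟨htk, hkt⟩, hreg⟩
  have htk' : (k : ℝ) ≤ 6 * (t + 1) := by exact_mod_cast htk
  have hkt' : (k : ℝ) + 6 * t ≤ 6 * k := by exact_mod_cast hkt
  have hweight {b : ℝ} (hb : (k : ℝ) / 6 ≤ b) :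
      exp (-ℓ * b + 3 * e * k) ≤ exp (-(9 * e * k)) := by
    have hℓb : ℓ * (k / 6) ≤ ℓ * b := mul_le_mul_of_nonneg_left hb (by linarith)
    have : 72 * e * k ≤ ℓ * k := by gcongr
    exact exp_le_exp.2 (by linarith)
  have hterm {b : ℝ} (hb : (k : ℝ) / 6 ≤ b) (n : ℤ) :
      exp (-ℓ * b + 3 * e * k) * |φ n| ≤ exp (-(9 * e * k)) * (K * |φ m|) :=
    mul_le_mul (hweight hb) (hmax n) (abs_nonneg _) (exp_pos _).le
  have hself : |φ m| ≤ exp (-(9 * e * k)) * (2 * K * |φ m|) := by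
    have h₁ := hterm (b := t + 1) (by linarith) (m - t - 1)
    have h₂ := hterm (b := k - t) (by linarith) (m - t + k)
    linarith
  rw [exp_neg, ← div_eq_inv_mul, le_div_iff₀ (exp_pos _), mul_comm (2 * K)] at hself
  exact hK.not_ge (le_of_mul_le_mul_left hself hm)

/-- The interpolation estimate makes one of the sites `m`, `x` regular, and it cannot be the almost
maximum `m`. -/
lemma isRegularSite_of_le_abs_sub (hC : HasInterpolationBound lam α ε C) (hρ : 0 < ρ) (hρ1 : ρ ≤ 1)
    (h : IsEigenfunction (amoPot lam α θ) E φ) {M : ℕ} {K : ℝ} {n₀ m x : ℤ} (he : 0 < e)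
    (hk : 0 < k) (hscale : IsGrowthScale lam α E e ℓ k)
    (hB : 4 * (exp (ε * M + C) * ρ⁻¹) ≤ exp (e * k)) (hmM : |m| + k ≤ M) (hxM : |x| + k ≤ M)
    (hres : ∀ n : ℤ, n ≠ n₀ → |n| ≤ 2 * M → ρ ≤ sinDist (2 * θ + n * α))
    (hmax : ∀ n, |φ n| ≤ K * |φ m|) (hm : 0 < |φ m|) (hℓ : 72 * e ≤ ℓ)
    (hK : 2 * K < exp (9 * e * k)) (hxm : (k : ℤ) ≤ |x - m|) (hxm' : (k : ℤ) ≤ |x - (n₀ - m)|) :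
    IsRegularSite φ ℓ e k x := by
  obtain ⟨t₀, ht₀⟩ := hscale.exists_exp_le
  obtain ⟨z, hz, t, ht, hbound⟩ : ∃ z, (z = m ∨ z = x) ∧ ∃ t : ℕ, IsCentralOffset k t ∧
      |amoDet lam α E k t₀| ≤
        exp (ε * M + C) * ρ⁻¹ * |amoDet lam α E k (θ + ((z - t : ℤ) : ℝ) * α)| := by
    by_cases hself : (k : ℤ) ≤ |2 * m - n₀|
    · exact hC.exists_isCentralOffset hρ hρ1 hk hres hmM hxM (by rwa [abs_sub_comm])
        (by convert hxm' using 2; ring) hself E t₀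
    · simp only [or_comm (b := _ = x)]
      refine hC.exists_isCentralOffset hρ hρ1 hk hres hxM hmM hxm
        (by convert hxm' using 2; ring) ?_ E t₀
      simp only [le_abs] at hself hxm hxm' ⊢
      lia
  have hreg := hscale.isRegularSite h he hk ht ht₀ hB hbound
  rcases hz with rfl | rfl
  · exact absurd hreg (not_isRegularSite_of_forall_abs_le hmax hm he hℓ hK)
  · exact hreg

end RegularSites

section MaximumPrinciple

variable {ℓ e : ℝ} {φ : ℤ → ℝ} {k : ℕ}

lemma IsCentralOffset.div_six_le_add_one {t : ℕ} (ht : IsCentralOffset k t) :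
    (k : ℝ) / 6 ≤ t + 1 := by
  have : (k : ℝ) ≤ 6 * (t + 1) := by exact_mod_cast ht.1
  linarith

lemma IsCentralOffset.div_six_le_sub {t : ℕ} (ht : IsCentralOffset k t) : (k : ℝ) / 6 ≤ k - t := by
  have : (k : ℝ) + 6 * t ≤ 6 * k := by exact_mod_cast ht.2
  linarith

lemma IsCentralOffset.le {t : ℕ} (ht : IsCentralOffset k t) : t ≤ k := by
  have := ht.2
  lia

lemma IsRegularSite.eq_zero_of_weighted_le {w : ℤ} (hreg : IsRegularSite φ ℓ e k w) (he : 0 < e)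
    (hℓ : 36 * e ≤ ℓ) (hk : Real.log 2 < 3 * e * k) {D : ℤ → ℤ}
    (hD : ∀ x, D w ≤ D x + |x - w|)
    (hmax : ∀ x, |φ x| * exp ((ℓ - 36 * e) * D x) ≤ |φ w| * exp ((ℓ - 36 * e) * D w)) :
    φ w = 0 := by
  have hterm {x : ℤ} {b : ℝ} (hx : ((|x - w| : ℤ) : ℝ) = b) (hb : (k : ℝ) / 6 ≤ b) :
      exp (-ℓ * b + 3 * e * k) * |φ x| ≤ |φ w| * exp (-(3 * e * k)) := by
    have hDx : (D w : ℝ) ≤ D x + b := by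
      rw [← hx]
      exact_mod_cast hD x
    have hφx : |φ x| ≤ |φ w| * exp ((ℓ - 36 * e) * b) := by
      refine ((le_div_iff₀ (exp_pos _)).2 (hmax x)).trans ?_
      rw [mul_div_assoc, ← exp_sub, ← mul_sub]
      gcongr
      linarith
    calc exp (-ℓ * b + 3 * e * k) * |φ x|
        ≤ exp (-ℓ * b + 3 * e * k) * (|φ w| * exp ((ℓ - 36 * e) * b)) := by gcongr
      _ = |φ w| * exp (-(36 * e) * b + 3 * e * k) := by
          rw [mul_left_comm, ← exp_add]
          ring_nf
      _ ≤ |φ w| * exp (-(3 * e * k)) := by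
          have : e * (k / 6) ≤ e * b := by gcongr
          gcongr
          linarith
  obtain ⟨t, ht, hφw⟩ := hreg
  have hleft : |φ w| ≤ |φ w| * (2 * exp (-(3 * e * k))) := by
    have h₁ := hterm (x := w - t - 1) (b := t + 1) (by
      rw [show w - t - 1 - w = -((t + 1 : ℕ) : ℤ) by push_cast; ring, abs_neg, Nat.abs_cast]
      push_cast
      ring) ht.div_six_le_add_one
    have h₂ := hterm (x := w - t + k) (b := k - t) (by
      rw [show w - t + k - w = ((k - t : ℕ) : ℤ) by have := ht.le; lia, Nat.abs_cast]
      push_cast [ht.le]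
      rfl) ht.div_six_le_sub
    linarith
  have hsmall : 2 * exp (-(3 * e * k)) < 1 := by
    rw [exp_neg, ← div_eq_mul_inv, div_lt_one (exp_pos _)]
    exact (Real.log_lt_iff_lt_exp (by norm_num)).1 hk
  by_contra hne
  nlinarith [abs_pos.2 hne]

/-- A maximum principle: the function `|φ x| exp (c D x)` cannot have a nonzero maximum at a
regular site, because the weight changes by less than the decay in `IsRegularSite`. -/
lemma abs_le_mul_exp_of_forall_isRegularSite (he : 0 < e) (hℓ : 36 * e ≤ ℓ)
    (hk : Real.log 2 < 3 * e * k) {A : ℝ} (hA : ∀ n, |φ n| ≤ A) {D : ℤ → ℤ}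
    (hD : ∀ x y, D x ≤ D y + |y - x|) (hfin : {x | (k : ℤ) < D x}.Finite)
    (hreg : ∀ x, (k : ℤ) < D x → IsRegularSite φ ℓ e k x) (z : ℤ) :
    |φ z| ≤ A * exp ((ℓ - 36 * e) * k - (ℓ - 36 * e) * D z) := by
  set c := ℓ - 36 * e
  have hA₀ : 0 ≤ A := (abs_nonneg _).trans (hA 0)
  set F : ℤ → ℝ := fun x => |φ x| * exp (c * D x)
  suffices hF : ∀ x, F x ≤ A * exp (c * k) by
    rw [exp_sub, ← mul_div_assoc, le_div_iff₀ (exp_pos _)]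
    exact hF z
  have hF_of_le {x : ℤ} (hx : ¬ (k : ℤ) < D x) : F x ≤ A * exp (c * k) := by
    have : (D x : ℝ) ≤ k := by exact_mod_cast not_lt.1 hx
    exact mul_le_mul (hA x) (exp_le_exp.2 (mul_le_mul_of_nonneg_left this (by linarith)))
      (exp_pos _).le hA₀
  by_contra! hlarge
  obtain ⟨x₀, hx₀⟩ := hlarge
  obtain ⟨w, hw, hmax⟩ := Set.exists_max_image _ F hfin
    ⟨x₀, not_imp_comm.1 hF_of_le hx₀.not_ge⟩
  have hFw : A * exp (c * k) < F w := hx₀.trans_le (hmax x₀ (not_imp_comm.1 hF_of_le hx₀.not_ge))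
  have hφw := (hreg w hw).eq_zero_of_weighted_le he hℓ hk (hD w) fun x => by
    by_cases hx : (k : ℤ) < D x
    · exact hmax x hx
    · exact (hF_of_le hx).trans hFw.le
  have : F w = 0 := by simp [F, hφw]
  exact (this ▸ hFw).not_ge (by positivity)

/-- The distance of `z` to the set consisting of `m`, `y` and the sites of modulus at
least `N`. -/
def resonantDist (m y N z : ℤ) : ℤ := min (min |z - m| |z - y|) (N - |z|)

lemma resonantDist_le_add (m y N x z : ℤ) :
    resonantDist m y N x ≤ resonantDist m y N z + |z - x| := by
  simp only [resonantDist]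
  have h₁ := abs_sub_le x z m
  have h₂ := abs_sub_le x z y
  have h₃ := abs_sub_abs_le_abs_sub z x
  rw [abs_sub_comm x z] at h₁ h₂
  lia

lemma finite_setOf_lt_resonantDist (m y N k : ℤ) : {x | k < resonantDist m y N x}.Finite := by
  refine (Set.finite_Icc (k - N) (N - k)).subset fun x hx => ?_
  have hx' := lt_min_iff.1 (Set.mem_ofPred.1 hx)
  exact ⟨by linarith [neg_abs_le x], by linarith [le_abs_self x]⟩

end MaximumPrinciple

section ExponentialDecay

variable {lam α θ K Em E : ℝ} {φ : ℤ → ℝ} {m n₀ : ℤ}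

/-- `φ` is a nonzero eigenfunction of the almost Mathieu operator with energy `E` in `[-Em, Em]`
that attains its maximum at `m` up to the factor `K`. -/
structure HasAlmostMax (lam α θ K Em E : ℝ) (φ : ℤ → ℝ) (m : ℤ) : Prop where
  isEigenfunction : IsEigenfunction (amoPot lam α θ) E φ
  abs_le_mul : ∀ n, |φ n| ≤ K * |φ m|
  abs_pos : 0 < |φ m|
  energy_le : |E| ≤ Em

lemma HasAlmostMax.one_le (h : HasAlmostMax lam α θ K Em E φ m) : 1 ≤ K :=
  le_of_mul_le_mul_right ((one_mul _).trans_le (h.abs_le_mul m)) h.abs_pos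

/-- Among the frequencies `n` with `|n| ≤ 60 R`, only `n₀` can bring `2θ + nα` exponentially
close to an integer at rate `ε₁ R`. -/
def IsNonresonantExcept (α θ ε₁ : ℝ) (R : ℕ) (n₀ : ℤ) : Prop :=
  ∀ n : ℤ, n ≠ n₀ → |n| ≤ 60 * R → exp (-(ε₁ * R)) ≤ sinDist (2 * θ + n * α)

/-- At scale `R` and up to errors `exp (ν R)`, determinants grow at most at rate `ℓ` while `φ`
decays at rate `ℓ` away from `m` and from its reflection `n₀ - m`, as long as the distance
to these points does not exceed the one to the boundary of `[-20 R, 20 R]`. -/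
structure HasExpDecay (lam α E K : ℝ) (φ : ℤ → ℝ) (m n₀ : ℤ) (ν : ℝ) (R : ℕ) (ℓ : ℝ) : Prop where
  abs_amoDet_le : ∀ (j : ℕ) t, |amoDet lam α E j t| ≤ exp (ℓ * j + ν * (R + j))
  abs_apply_le : ∀ z d : ℤ, d ≤ |z - m| → d ≤ |z - (n₀ - m)| → d ≤ 20 * R - |z| →
    |φ z| ≤ K * |φ m| * exp (-ℓ * d + ν * R)

variable {ε ε₁ C ℓ e ν : ℝ} {k R : ℕ}

lemma HasAlmostMax.isRegularSite (hφ : HasAlmostMax lam α θ K Em E φ m)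
    (hC : HasInterpolationBound lam α ε C) (hres : IsNonresonantExcept α θ ε₁ R n₀)
    (hε₁ : 0 ≤ ε₁) (he : 0 < e) (hk : 0 < k) (hkR : k ≤ R) (hm : |m| ≤ R)
    (hscale : IsGrowthScale lam α E e ℓ k) (hℓ : 72 * e ≤ ℓ)
    (hB : Real.log 4 + (30 * ε * R + C) + ε₁ * R ≤ e * k) (hK : Real.log (2 * K) < 9 * e * k)
    {x : ℤ} (hx : k < resonantDist m (n₀ - m) (20 * R) x) : IsRegularSite φ ℓ e k x := by
  obtain ⟨⟨hxm, hxm'⟩, hxR⟩ : ((k : ℤ) < |x - m| ∧ (k : ℤ) < |x - (n₀ - m)|) ∧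
      (k : ℤ) < 20 * R - |x| := by
    simpa only [resonantDist, lt_min_iff] using hx
  have hε₁R : -(ε₁ * R) ≤ 0 := neg_nonpos.2 (by positivity)
  refine isRegularSite_of_le_abs_sub hC (exp_pos _) (exp_le_one_iff.2 hε₁R) hφ.isEigenfunction
    (M := 30 * R) he hk hscale ?_ (by push_cast; lia) (by push_cast; lia)
    (fun n hn hnR => hres n hn (by push_cast at hnR; linarith)) hφ.abs_le_mul hφ.abs_pos hℓ
    ((Real.log_lt_iff_lt_exp (by linarith [hφ.one_le])).1 hK) hxm.le hxm'.le
  calc 4 * (exp (ε * (30 * R : ℕ) + C) * (exp (-(ε₁ * R)))⁻¹)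
      = exp (Real.log 4 + (30 * ε * R + C) + ε₁ * R) := by
        rw [exp_add _ (ε₁ * R), exp_add (Real.log 4), exp_log (by norm_num), exp_neg, inv_inv,
          mul_assoc]
        push_cast
        ring_nf
    _ ≤ exp (e * k) := exp_le_exp.2 hB

lemma HasAlmostMax.hasExpDecay (hφ : HasAlmostMax lam α θ K Em E φ m) (he : 0 < e) (hkR : k ≤ R)
    (hscale : IsGrowthScale lam α E e ℓ k) (hℓ : 36 * e ≤ ℓ) (heν : 1440 * e ≤ ν)
    (hℓk : ℓ * k ≤ ν / 2 * R) (hk : Real.log 2 < 3 * e * k)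
    (hreg : ∀ x, k < resonantDist m (n₀ - m) (20 * R) x → IsRegularSite φ ℓ e k x) :
    HasExpDecay lam α E K φ m n₀ ν R ℓ where
  abs_amoDet_le j t := by
    refine (hscale.abs_le_exp j t).trans (exp_le_exp.2 ?_)
    have hekR : e * k ≤ e * R := by gcongr
    have hj : 0 ≤ (ν - e) * j := mul_nonneg (by linarith) j.cast_nonneg
    have hR : 0 ≤ (ν - e) * R := mul_nonneg (by linarith) R.cast_nonneg
    linarith
  abs_apply_le z d hzm hzm' hdR := by
    have hKφ : 0 ≤ K * |φ m| := (abs_nonneg _).trans (hφ.abs_le_mul z)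
    have hνR : 0 ≤ ν * R := mul_nonneg (by linarith) R.cast_nonneg
    rcases le_or_gt d 0 with hd | -
    · refine (hφ.abs_le_mul z).trans (le_mul_of_one_le_right hKφ (one_le_exp ?_))
      have hd' : (d : ℝ) ≤ 0 := by exact_mod_cast hd
      linarith [mul_nonneg (by linarith : 0 ≤ ℓ) (neg_nonneg.2 hd')]
    · refine (abs_le_mul_exp_of_forall_isRegularSite he hℓ hk hφ.abs_le_mul
        (resonantDist_le_add m (n₀ - m) (20 * R)) (finite_setOf_lt_resonantDist _ _ _ _) hreg
        z).trans ?_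
      have hdz : (d : ℝ) ≤ resonantDist m (n₀ - m) (20 * R) z := by
        exact_mod_cast le_min (le_min hzm hzm') hdR
      have hdR' : (d : ℝ) ≤ 20 * R := by exact_mod_cast hdR.trans (sub_le_self _ (abs_nonneg _))
      have hcd := mul_le_mul_of_nonneg_left hdz (by linarith : 0 ≤ ℓ - 36 * e)
      have hed : e * d ≤ e * (20 * R) := by gcongr
      have heR : 1440 * e * R ≤ ν * R := by gcongr
      have hek : 0 ≤ e * k := by positivity
      gcongr
      linarith

lemma IsSinDiophantine.exists_hasExpDecay {κ τ : ℝ} (hα : IsSinDiophantine α κ τ) (hl : 1 < lam)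
    (θ K : ℝ) (hEm : 0 ≤ Em) (hν : 0 < ν) :
    ∃ ε₁, 0 < ε₁ ∧ ∃ R₀ : ℕ, ∀ R : ℕ, R₀ ≤ R → ∀ n₀ : ℤ, IsNonresonantExcept α θ ε₁ R n₀ →
      ∀ E φ m, HasAlmostMax lam α θ K Em E φ m → |m| ≤ R →
      ∃ ℓ, Real.log lam ≤ ℓ ∧ ℓ ≤ maxGrowthRate lam Em ∧
        HasExpDecay lam α E K φ m n₀ ν R ℓ := by
  have hΓ := maxGrowthRate_pos hl hEm
  set Γ := maxGrowthRate lam Em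
  have hlog := log_pos hl
  obtain ⟨e, he, heν, helog⟩ : ∃ e : ℝ, 0 < e ∧ 1440 * e ≤ ν ∧ 72 * e ≤ Real.log lam :=
    ⟨min (ν / 1440) (Real.log lam / 72), by positivity,
      by linarith [min_le_left (ν / 1440) (Real.log lam / 72)],
      by linarith [min_le_right (ν / 1440) (Real.log lam / 72)]⟩
  obtain ⟨h', hh', hh'_one, hh'Γ⟩ : ∃ h' : ℝ, 0 < h' ∧ h' ≤ 1 ∧ h' ≤ ν / 2 / Γ :=
    ⟨min 1 (ν / 2 / Γ), by positivity, min_le_left _ _, min_le_right _ _⟩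
  rw [le_div_iff₀' hΓ] at hh'Γ
  obtain ⟨h, hh, R₁, hgrowth⟩ := exists_isGrowthScale hl α hEm he hh'
  obtain ⟨C, hC₀, hC⟩ := hα.exists_hasInterpolationBound lam (ε := e * h / 120) (by positivity)
  obtain ⟨R₂, hR₂⟩ := exists_nat_ge (2 * (C + Real.log 4 + |Real.log (2 * K)| + 1) / (e * h))
  refine ⟨e * h / 4, by positivity, max R₁ R₂, fun R hR n₀ hres E φ m hφ hm => ?_⟩
  obtain ⟨k, ℓ, hhk, hkh', hℓ, hℓΓ, hscale⟩ := hgrowth R ((le_max_left _ _).trans hR) E hφ.energy_le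
  have hlarge : 2 * (C + Real.log 4 + |Real.log (2 * K)| + 1) ≤ e * h * R :=
    (div_le_iff₀' (by positivity)).1
      (hR₂.trans (by exact_mod_cast (le_max_right _ _).trans hR))
  have hek : e * (h * R) ≤ e * k := by gcongr
  have hlog4 : Real.log 4 = 2 * Real.log 2 := by
    rw [show (4 : ℝ) = 2 ^ 2 by norm_num, Real.log_pow]
    norm_num
  have hlog2 : 0 < Real.log 2 := log_pos (by norm_num)
  have habs := abs_nonneg (Real.log (2 * K))
  have hk : 0 < k := Nat.cast_pos.1 (pos_of_mul_pos_right (by linarith : 0 < e * (k : ℝ)) he.le)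
  have hkR : k ≤ R := by
    have : (k : ℝ) ≤ R := hkh'.trans (mul_le_of_le_one_left R.cast_nonneg hh'_one)
    exact_mod_cast this
  have hℓk : ℓ * k ≤ ν / 2 * R :=
    calc ℓ * k ≤ Γ * (h' * R) := by gcongr
      _ = Γ * h' * R := by ring
      _ ≤ ν / 2 * R := by gcongr
  exact ⟨ℓ, hℓ, hℓΓ, hφ.hasExpDecay he hkR hscale (by linarith) heν hℓk (by linarith) fun x hx =>
    hφ.isRegularSite hC hres (by positivity) he hk hkR hm hscale (by linarith) (by linarith)
      (by linarith [le_abs_self (Real.log (2 * K))]) hx⟩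

end ExponentialDecay

section ReflectedSite

variable {lam α θ K Em E : ℝ} {φ : ℤ → ℝ} {m n₀ x : ℤ} {ε₁ C ℓ ν ρ Q : ℝ} {k R e₀ D : ℕ}

lemma IsSinDiophantine.exists_isNonresonantExcept {κ τ : ℝ} (hα : IsSinDiophantine α κ τ) (θ : ℝ)
    (hε₁ : 0 < ε₁) : ∃ R₀ : ℕ, ∀ R : ℕ, R₀ ≤ R → ∃ n₀, IsNonresonantExcept α θ ε₁ R n₀ := by
  obtain ⟨C, -, hC⟩ := hα.exists_exp_neg_le_sinDist (ε := ε₁ / 120) (by positivity)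
  obtain ⟨R₀, hR₀⟩ := exists_nat_ge (2 * (C + Real.log 2) / ε₁)
  refine ⟨R₀, fun R hR => ?_⟩
  have hlarge : 2 * (C + Real.log 2) ≤ ε₁ * R :=
    (div_le_iff₀' hε₁).1 (hR₀.trans (by exact_mod_cast hR))
  by_cases hex : ∃ n : ℤ, |n| ≤ 60 * R ∧ sinDist (2 * θ + n * α) < exp (-(ε₁ * R))
  · obtain ⟨n₀, hn₀R, hn₀⟩ := hex
    refine ⟨n₀, fun n hn hnR => ?_⟩
    by_contra! hlt
    have hdioph := hC (60 * R) (n - n₀) (by positivity) (sub_ne_zero.2 hn) (by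
      have : |n - n₀| ≤ 2 * (60 * R) := by rw [abs_le] at *; lia
      exact_mod_cast this)
    have htri := sinDist_sub_le (2 * θ + n * α) (2 * θ + n₀ * α)
    rw [show 2 * θ + n * α - (2 * θ + n₀ * α) = ((n - n₀ : ℤ) : ℝ) * α by push_cast; ring] at htri
    have hexp : 2 * exp (-(ε₁ * R)) ≤ exp (-(ε₁ / 120 * (60 * R) + C)) :=
      calc 2 * exp (-(ε₁ * R)) = exp (Real.log 2 + -(ε₁ * R)) := by
            rw [exp_add, exp_log (by norm_num)]
        _ ≤ exp (-(ε₁ / 120 * (60 * R) + C)) := exp_le_exp.2 (by linarith)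
    linarith
  · push Not at hex
    exact ⟨0, fun n _ hn => hex n hn⟩

lemma IsEigenfunction.abs_apply_sub_one_le (h : IsEigenfunction (amoPot lam α θ) E φ)
    (hl : 0 ≤ lam) (x : ℤ) (k : ℕ) :
    |φ (x - 1)| ≤ maxDet lam α E (k + 1) * (|φ (x + k)| + |φ (x + k + 1)|) := by
  rw [h.apply_sub_one x k, continuant_amoPot_eq_amoDet, continuant_amoPot_eq_amoDet, mul_add]
  refine (abs_sub _ _).trans ?_
  rw [abs_mul, abs_mul]
  gcongr <;> exact abs_amoDet_le_maxDet hl (by lia) _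

lemma IsEigenfunction.abs_apply_add_add_one_le (h : IsEigenfunction (amoPot lam α θ) E φ)
    (hl : 0 ≤ lam) (x : ℤ) (k : ℕ) :
    |φ (x + k + 1)| ≤ maxDet lam α E (k + 1) * (|φ x| + |φ (x - 1)|) := by
  rw [h.apply_add_add_one x k, continuant_amoPot_eq_amoDet, continuant_amoPot_eq_amoDet, mul_add]
  refine (abs_sub _ _).trans ?_
  rw [abs_mul, abs_mul]
  gcongr <;> exact abs_amoDet_le_maxDet hl (by lia) _

lemma HasExpDecay.exp_sub_le_maxDet (hdecay : HasExpDecay lam α E K φ m n₀ ν R ℓ)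
    (hφ : HasAlmostMax lam α θ K Em E φ m) (hl : 0 ≤ lam) (hm : |m| ≤ R) (hk : k + 1 ≤ 4 * R) :
    exp (ℓ * (k + 1 : ℕ) - ν * R) ≤ 2 * K * maxDet lam α E (k + 1) := by
  have hm' := abs_le.1 hm
  set q := maxDet lam α E (k + 1)
  have hq : 0 ≤ q := zero_le_one.trans (one_le_maxDet hl _)
  set s := ℓ * (k + 1 : ℕ) - ν * R
  have hfar {z : ℤ} (hz : |z| ≤ 10 * R) (hzm : k + 1 ≤ |z - m|) (hzm' : k + 1 ≤ |z - (n₀ - m)|) :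
      |φ z| ≤ K * |φ m| * exp (-s) := by
    have := hdecay.abs_apply_le z (k + 1) hzm hzm' (by lia)
    convert this using 3
    push_cast [s]
    ring
  have hφm : |φ m| ≤ q * (K * |φ m| * exp (-s) + K * |φ m| * exp (-s)) := by
    rcases le_total m (n₀ - m) with hside | hside
    · have h := hφ.isEigenfunction.abs_apply_add_add_one_le hl (m - k - 1) k
      rw [show m - k - 1 + k + 1 = m by ring] at h
      refine h.trans (mul_le_mul_of_nonneg_left (add_le_add (hfar ?_ ?_ ?_) (hfar ?_ ?_ ?_)) hq) <;>
        first | exact abs_le.2 (by lia) | exact le_abs.2 (by lia)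
    · have h := hφ.isEigenfunction.abs_apply_sub_one_le hl (m + 1) k
      rw [add_sub_cancel_right] at h
      refine h.trans (mul_le_mul_of_nonneg_left (add_le_add (hfar ?_ ?_ ?_) (hfar ?_ ?_ ?_)) hq) <;>
        first | exact abs_le.2 (by lia) | exact le_abs.2 (by lia)
  have hone : 1 ≤ 2 * K * q * exp (-s) :=
    le_of_mul_le_mul_left (by linarith : |φ m| * 1 ≤ |φ m| * (2 * K * q * exp (-s))) hφ.abs_pos
  rwa [exp_neg, ← div_eq_mul_inv, one_le_div (exp_pos _)] at hone

lemma HasExpDecay.exists_exp_sub_le_abs_amoDet (hdecay : HasExpDecay lam α E K φ m n₀ ν R ℓ)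
    (hφ : HasAlmostMax lam α θ K Em E φ m) (hl : 0 ≤ lam) (hν : 0 ≤ ν) (hℓ : 0 ≤ ℓ)
    (hm : |m| ≤ R) (hDR : D ≤ 2 * R) (hD : 4 * K * exp (ν * R) < exp (ℓ * (D - 1))) :
    ∃ k, 0 < k ∧ k + 2 ≤ 2 * D ∧ ∃ t,
      exp (ℓ * (2 * D - 2) - ν * R) ≤ 4 * K * |amoDet lam α E k t| := by
  have hK := hφ.one_le
  have hD_two : 2 ≤ D := by
    by_contra! hlt
    have hD_one : (D : ℝ) ≤ 1 := by exact_mod_cast (by lia : D ≤ 1)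
    have h₁ : exp (ℓ * (D - 1)) ≤ 1 := exp_le_one_iff.2 (by nlinarith)
    have h₂ := one_le_exp (show 0 ≤ ν * R by positivity)
    nlinarith
  have hlow := hdecay.exp_sub_le_maxDet hφ hl hm (k := 2 * D - 3) (by lia)
  rw [show 2 * D - 3 + 1 = 2 * D - 2 by lia] at hlow
  obtain ⟨k, hk, t, ht⟩ := exists_maxDet_le_two_mul (α := α) (E := E) hl (2 * D - 2)
  rw [show ((2 * D - 2 : ℕ) : ℝ) = 2 * D - 2 by push_cast [show 2 ≤ 2 * D by lia]; ring] at hlow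
  have hlarge : exp (ℓ * (2 * D - 2) - ν * R) ≤ 4 * K * |amoDet lam α E k t| := by nlinarith
  refine ⟨k, Nat.pos_of_ne_zero ?_, by lia, t, hlarge⟩
  rintro rfl
  rw [amoDet_zero, abs_one, exp_sub, div_le_iff₀ (exp_pos _), mul_one] at hlarge
  have : (1 : ℝ) ≤ D := by exact_mod_cast one_le_two.trans hD_two
  have : exp (ℓ * (D - 1)) ≤ exp (ℓ * (2 * D - 2)) := exp_le_exp.2 (by nlinarith)
  linarith

lemma HasExpDecay.exp_mul_abs_le (hdecay : HasExpDecay lam α E K φ m n₀ ν R ℓ) (hK : 0 ≤ K)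
    (hν : 0 ≤ ν) (hℓ : 0 ≤ ℓ) (hm : |m| ≤ R) (hx : |x| ≤ R) (hD : |x - m| = D)
    (hxn₀ : |x - (n₀ - m)| ≤ e₀) {z p : ℤ} (hz : z = m ∨ z = x) {a b : ℕ} (hp : |p - z| = a)
    (hba : b ≤ 3 * a) (hDab : a + b + 2 ≤ 2 * D) :
    exp (ℓ * b + ν * (R + b)) * |φ p| ≤
      K * |φ m| * exp (ℓ * (D - 1) + ℓ * e₀ + 6 * ν * R) := by
  set d : ℤ := min a |(D : ℤ) - a|
  have hφp : |φ p| ≤ K * |φ m| * exp (-ℓ * ((d - e₀ : ℤ) : ℝ) + ν * R) := by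
    have hDx : x - m = D ∨ x - m = -D := by rcases abs_choice (x - m) <;> lia
    have hpz : p - z = a ∨ p - z = -a := by rcases abs_choice (p - z) <;> lia
    refine hdecay.abs_apply_le p (d - e₀) ?_ ?_ ?_ <;> rcases hz with rfl | rfl <;>
      rcases hDx with hDx | hDx <;> rcases hpz with hpz | hpz <;> grind
  have hb : (b : ℝ) ≤ 4 * R := by
    have : b ≤ 4 * R := by grind
    exact_mod_cast this
  have hd : (b : ℝ) - d ≤ D - 1 := by
    have : (b : ℤ) - d ≤ D - 1 := by grind
    exact_mod_cast this
  calc exp (ℓ * b + ν * (R + b)) * |φ p|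
      ≤ exp (ℓ * b + ν * (R + b)) * (K * |φ m| * exp (-ℓ * ((d - e₀ : ℤ) : ℝ) + ν * R)) := by
        gcongr
    _ = K * |φ m| * exp (ℓ * b + ν * (R + b) + (-ℓ * ((d - e₀ : ℤ) : ℝ) + ν * R)) := by
        rw [exp_add (ℓ * b + ν * (R + b)), mul_left_comm]
    _ ≤ K * |φ m| * exp (ℓ * (D - 1) + ℓ * e₀ + 6 * ν * R) := by
        rw [Int.cast_sub, Int.cast_natCast]
        have hℓd := mul_le_mul_of_nonneg_left hd hℓ
        have hνb := mul_le_mul_of_nonneg_left hb hν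
        refine mul_le_mul_of_nonneg_left (exp_le_exp.2 ?_) (by positivity)
        linarith

lemma HasExpDecay.abs_le_of_abs_amoDet_le (hdecay : HasExpDecay lam α E K φ m n₀ ν R ℓ)
    (hφ : HasAlmostMax lam α θ K Em E φ m) (hν : 0 ≤ ν) (hℓ : 0 ≤ ℓ) (hm : |m| ≤ R)
    (hx : |x| ≤ R) (hD : |x - m| = D) (hxn₀ : |x - (n₀ - m)| ≤ e₀) (hkD : k + 2 ≤ 2 * D) {t₀ B : ℝ}
    (hlow : exp (ℓ * (2 * D - 2) - ν * R) ≤ 4 * K * |amoDet lam α E k t₀|) (hB : 0 ≤ B)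
    {z : ℤ} (hz : z = m ∨ z = x) {t : ℕ} (htk : t < k) (ht : k ≤ 4 * (t + 1))
    (ht' : k + 4 * t ≤ 4 * k)
    (hdet : |amoDet lam α E k t₀| ≤ B * |amoDet lam α E k (θ + ((z - t : ℤ) : ℝ) * α)|) :
    |φ z| ≤ 8 * K ^ 2 * B * exp (7 * ν * R + ℓ * e₀ - ℓ * (D - 1)) * |φ m| := by
  have hK : 0 ≤ K := zero_le_one.trans hφ.one_le
  have hgreen :=
    hφ.isEigenfunction.abs_mul_abs_amoDet_le (fun j s => hdecay.abs_amoDet_le j s) z htk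
  have hleft := hdecay.exp_mul_abs_le hK hν hℓ hm hx hD hxn₀ hz (p := z - t - 1) (a := t + 1)
    (b := k - 1 - t)
    (by rw [show z - t - 1 - z = -((t + 1 : ℕ) : ℤ) by push_cast; ring, abs_neg, Nat.abs_cast])
    (by lia) (by lia)
  have hright := hdecay.exp_mul_abs_le hK hν hℓ hm hx hD hxn₀ hz (p := z - t + k) (a := k - t)
    (b := t) (by rw [show z - t + k - z = ((k - t : ℕ) : ℤ) by lia, Nat.abs_cast]) (by lia) (by lia)
  set W := exp (ℓ * (D - 1) + ℓ * e₀ + 6 * ν * R) with hW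
  set Y := |amoDet lam α E k (θ + ((z - t : ℤ) : ℝ) * α)|
  have hφz : |φ z| * exp (ℓ * (2 * D - 2) - ν * R) ≤ 8 * K ^ 2 * B * W * |φ m| :=
    calc |φ z| * exp (ℓ * (2 * D - 2) - ν * R)
        ≤ |φ z| * (4 * K * (B * Y)) := by
          refine mul_le_mul_of_nonneg_left (hlow.trans ?_) (abs_nonneg _)
          gcongr
      _ = 4 * K * B * (|φ z| * Y) := by ring
      _ ≤ 4 * K * B * (2 * (K * |φ m| * W)) :=
          mul_le_mul_of_nonneg_left (by linarith) (by positivity)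
      _ = 8 * K ^ 2 * B * W * |φ m| := by ring
  calc |φ z| ≤ 8 * K ^ 2 * B * W * |φ m| / exp (ℓ * (2 * D - 2) - ν * R) :=
        (le_div_iff₀ (exp_pos _)).2 hφz
    _ = 8 * K ^ 2 * B * (W * exp (-(ℓ * (2 * D - 2) - ν * R))) * |φ m| := by
        rw [exp_neg]
        ring
    _ = 8 * K ^ 2 * B * exp (7 * ν * R + ℓ * e₀ - ℓ * (D - 1)) * |φ m| := by
        rw [hW, ← exp_add]
        ring_nf

/-- Interpolation at sites around both `m` and `x` produces a large determinant on an interval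
containing one of them; since `φ` is small at both edges, it is small at that site, which cannot
be the almost maximum `m`. -/
lemma HasExpDecay.abs_le_of_abs_sub_reflection_le
    (hdecay : HasExpDecay lam α E K φ m n₀ ν R ℓ) (hφ : HasAlmostMax lam α θ K Em E φ m)
    (hl : 0 ≤ lam) (hν : 0 ≤ ν) (hℓ : 0 ≤ ℓ) (hC₀ : 0 ≤ C)
    (hC : HasInterpolationBound lam α (ν / 5) C) (hρ : 0 < ρ) (hρ1 : ρ ≤ 1)
    (hres : ∀ n : ℤ, |n| ≤ 60 * R → ρ ≤ sinDist (2 * θ + n * α)) (hm : |m| ≤ R) (hx : |x| ≤ R)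
    (hD : |x - m| = D) (hxn₀ : |x - (n₀ - m)| ≤ e₀)
    (hQ : 8 * K ^ 2 * exp (C + 8 * ν * R + ℓ * e₀ - ℓ * (D - 1)) * ρ⁻¹ ≤ Q) (hQ1 : Q < 1) :
    |φ x| ≤ Q * |φ m| := by
  have hK := hφ.one_le
  have hm' := abs_le.1 hm
  have hx' := abs_le.1 hx
  have hDx : x - m = D ∨ x - m = -D := by rcases abs_choice (x - m) <;> lia
  have hDlarge : 4 * K * exp (ν * R) < exp (ℓ * (D - 1)) := by
    suffices 4 * K * exp (ν * R - ℓ * (D - 1)) < 1 by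
      rwa [exp_sub, ← mul_div_assoc, div_lt_one (exp_pos _)] at this
    refine lt_of_le_of_lt ?_ (hQ.trans_lt hQ1)
    have hexp : exp (ν * R - ℓ * (D - 1)) ≤ exp (C + 8 * ν * R + ℓ * e₀ - ℓ * (D - 1)) := by
      have : 0 ≤ ν * R := by positivity
      have : 0 ≤ ℓ * e₀ := by positivity
      exact exp_le_exp.2 (by linarith)
    refine (le_mul_of_one_le_right (by positivity) ((one_le_inv₀ hρ).2 hρ1)).trans' ?_
    exact mul_le_mul (by nlinarith) hexp (exp_pos _).le (by positivity)
  obtain ⟨k, hk, hkD, t₀, hlow⟩ := hdecay.exists_exp_sub_le_abs_amoDet hφ hl hν hℓ hm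
    (D := D) (by lia) hDlarge
  have hwindow {z : ℤ} (hz : z = m ∨ z = x) {t : ℕ} (htk : t < k) (ht : k ≤ 4 * (t + 1))
      (ht' : k + 4 * t ≤ 4 * k)
      (hdet : |amoDet lam α E k t₀| ≤ exp (ν / 5 * (5 * R : ℕ) + C) * ρ⁻¹ *
        |amoDet lam α E k (θ + ((z - t : ℤ) : ℝ) * α)|) : |φ z| ≤ Q * |φ m| := by
    refine (hdecay.abs_le_of_abs_amoDet_le hφ hν hℓ hm hx hD hxn₀ hkD hlow (by positivity) hz htk
      ht ht' hdet).trans (mul_le_mul_of_nonneg_right (hQ.trans' (le_of_eq ?_)) (abs_nonneg _))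
    have hsplit : exp (C + 8 * ν * R + ℓ * e₀ - ℓ * (D - 1)) =
        exp (ν / 5 * (5 * R : ℕ) + C) * exp (7 * ν * R + ℓ * e₀ - ℓ * (D - 1)) := by
      rw [← exp_add]
      push_cast
      ring_nf
    rw [hsplit]
    ring
  have hcard : (backwardWindow m (k / 4) (k / 4 + k / 2)).card +
      (backwardWindow x (k / 4) (k / 4 + (k - k / 2 - 1))).card = k + 1 := by
    rw [card_backwardWindow m (by lia), card_backwardWindow x (by lia)]
    lia
  have hdisj : Disjoint (backwardWindow m (k / 4) (k / 4 + k / 2))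
      (backwardWindow x (k / 4) (k / 4 + (k - k / 2 - 1))) := by
    simp only [Finset.disjoint_left, backwardWindow, Finset.mem_Ico]
    lia
  rcases hC.exists_le_of_disjoint_backwardWindow hρ hρ1 (M := 5 * R) (z₁ := m) (z₂ := x)
    (by lia) (by lia) (by push_cast; lia) (by push_cast; lia) hdisj hcard
    (fun t t' _ _ _ _ _ => hres _ (abs_le.2 (by lia)))
    (fun t t' _ _ _ _ _ => hres _ (abs_le.2 (by lia)))
    (fun t t' _ _ _ _ => hres _ (abs_le.2 (by lia))) E t₀ with
    ⟨t, htl, htr, hdet⟩ | ⟨t, htl, htr, hdet⟩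
  · have hφm := hwindow (Or.inl rfl) (by lia) (by lia) (by lia) hdet
    exact absurd hφm (not_le.2 (mul_lt_of_lt_one_left hφ.abs_pos hQ1))
  · exact hwindow (Or.inr rfl) (by lia) (by lia) (by lia) hdet

end ReflectedSite

section Localization

variable {lam α θ K Em E : ℝ} {φ : ℤ → ℝ} {m n₀ x : ℤ} {d ε ε₁ ε₂ δ C ℓ ν c r : ℝ} {R e₀ : ℕ}

lemma HasExpDecay.abs_le_exp_mul (hdecay : HasExpDecay lam α E K φ m n₀ ν R ℓ) (hK : 0 < K)
    (he₀ : e₀ ≤ R) (hx : |x| ≤ R) (hxm : e₀ ≤ |x - m|) (hxn₀ : e₀ ≤ |x - (n₀ - m)|)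
    (hc : Real.log K + ν * R + c ≤ ℓ * e₀) : |φ x| ≤ exp (-c) * |φ m| :=
  calc |φ x| ≤ K * |φ m| * exp (-ℓ * ((e₀ : ℤ) : ℝ) + ν * R) :=
        hdecay.abs_apply_le x e₀ hxm hxn₀ (by lia)
    _ = exp (Real.log K + (-ℓ * e₀ + ν * R)) * |φ m| := by
        rw [exp_add (Real.log K), exp_log hK, Int.cast_natCast]
        ring
    _ ≤ exp (-c) * |φ m| := by
        gcongr
        linarith

lemma HasExpDecay.abs_le_exp_mul_of_abs_sub_reflection_le
    (hdecay : HasExpDecay lam α E K φ m n₀ ν R ℓ) (hφ : HasAlmostMax lam α θ K Em E φ m)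
    (hl : 0 ≤ lam) (hν : 0 ≤ ν) (hℓ : 0 ≤ ℓ) (hC₀ : 0 ≤ C)
    (hC : HasInterpolationBound lam α (ν / 5) C) (hr : 0 ≤ r)
    (hres : ∀ n : ℤ, |n| ≤ 60 * R → exp (-r) ≤ sinDist (2 * θ + n * α)) (hm : |m| ≤ R)
    (hx : |x| ≤ R) (hxn₀ : |x - (n₀ - m)| ≤ e₀) (hc₀ : 0 < c)
    (hc : Real.log (8 * K ^ 2) + C + 8 * ν * R + 2 * ℓ * e₀ + ℓ + r + c ≤
      ℓ * |((n₀ - 2 * m : ℤ) : ℝ)|) : |φ x| ≤ exp (-c) * |φ m| := by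
  have hK := hφ.one_le
  obtain ⟨D, hD⟩ : ∃ D : ℕ, |x - m| = D := ⟨(x - m).natAbs, by simp⟩
  have hDn₀ : |((n₀ - 2 * m : ℤ) : ℝ)| ≤ D + e₀ := by
    have : |n₀ - 2 * m| ≤ D + e₀ := by grind
    exact_mod_cast this
  have hℓD := mul_le_mul_of_nonneg_left hDn₀ hℓ
  refine hdecay.abs_le_of_abs_sub_reflection_le hφ hl hν hℓ hC₀ hC (exp_pos _)
    (exp_le_one_iff.2 (by linarith)) hres hm hx hD hxn₀ ?_ (exp_lt_one_iff.2 (neg_neg_of_pos hc₀))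
  rw [← exp_log (show 0 < 8 * K ^ 2 by positivity), ← exp_neg, ← exp_add, ← exp_add]
  exact exp_le_exp.2 (by linarith)

lemma IsNonresonantExcept.exp_neg_le_sinDist (hres : IsNonresonantExcept α θ ε₂ R n₀)
    (hε₂ : 0 ≤ ε₂) (hr : 0 ≤ r) (hn₀ : exp (-r) ≤ sinDist (2 * θ + n₀ * α)) {n : ℤ}
    (hn : |n| ≤ 60 * R) : exp (-(ε₂ * R + r)) ≤ sinDist (2 * θ + n * α) := by
  have hεR : 0 ≤ ε₂ * R := by positivity
  rcases eq_or_ne n n₀ with rfl | hne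
  · exact hn₀.trans' (exp_le_exp.2 (by linarith))
  · exact (hres n hne hn).trans' (exp_le_exp.2 (by linarith))

lemma IsNonresonantExcept.mono (h : IsNonresonantExcept α θ ε₁ R n₀) (hε : ε₁ ≤ ε₂) :
    IsNonresonantExcept α θ ε₂ R n₀ := fun n hn hnR =>
  (h n hn hnR).trans' (exp_le_exp.2 (neg_le_neg (by gcongr)))

/-- `2θ + nα` approaches the integers at most at the exponential rate `δ`, that is,
`δ(α, θ) ≤ δ`. -/
def HasResonanceRate (α θ δ : ℝ) : Prop :=
  ∀ ε : ℝ, 0 < ε → ∃ N : ℕ, ∀ n : ℤ, N < |(n : ℝ)| →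
    exp (-((δ + ε) * |(n : ℝ)|)) ≤ sinDist (2 * θ + n * α)

/-- The alternatives for the size of `φ` at `n`, compared to its almost maximum `m`, when `p` is
the only strong resonance: up to errors `r`, either `n` is `m`, or `n` is the reflection `p - m`
(which then requires `m` to be near the fixed point `p / 2`, or `p` to be small), or `φ` is
smaller by a factor `exp (-c)`. -/
def IsLocalizedAt (φ : ℤ → ℝ) (m p : ℤ) (d r c : ℝ) (n : ℤ) : Prop :=
  |(n : ℝ) - m| ≤ r ∨
    (|(n : ℝ) - (p - m)| ≤ r ∧ (|(p : ℝ) - 2 * m| ≤ d * |(p : ℝ)| + r ∨ |(p : ℝ)| ≤ r)) ∨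
      |φ n| ≤ exp (-c) * |φ m|

lemma HasExpDecay.abs_le_exp_mul_of_le_abs_sub_two_mul {L : ℝ}
    (hdecay : HasExpDecay lam α E K φ m n₀ ν R ℓ) (hφ : HasAlmostMax lam α θ K Em E φ m)
    (hl : 0 ≤ lam) (hν : 0 ≤ ν) (hL : 0 ≤ L) (hLℓ : L ≤ ℓ) (hd : 0 ≤ d) (hε : 0 ≤ ε)
    (hC₀ : 0 ≤ C) (hC : HasInterpolationBound lam α (ν / 5) C) (hε₂ : 0 ≤ ε₂)
    (hres : IsNonresonantExcept α θ ε₂ R n₀)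
    (hn₀ : exp (-((d * L + ε) * |(n₀ : ℝ)|)) ≤ sinDist (2 * θ + n₀ * α)) (hm : |m| ≤ R)
    (hx : |x| ≤ R) (hxn₀ : |x - (n₀ - m)| ≤ e₀) (hc₀ : 0 < c)
    (hfixed : d * |(n₀ : ℝ)| + r ≤ |(n₀ : ℝ) - 2 * m|)
    (hc : Real.log (8 * K ^ 2) + C + 8 * ν * R + 2 * ℓ * e₀ + ℓ + ε₂ * R + ε * |(n₀ : ℝ)| + c ≤
      L * r) : |φ x| ≤ exp (-c) * |φ m| := by
  have hrate : 0 ≤ (d * L + ε) * |(n₀ : ℝ)| := by positivity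
  have hfixed' : L * (d * |(n₀ : ℝ)| + r) ≤ ℓ * |((n₀ - 2 * m : ℤ) : ℝ)| := by
    push_cast
    exact (mul_le_mul_of_nonneg_left hfixed hL).trans (by gcongr)
  exact hdecay.abs_le_exp_mul_of_abs_sub_reflection_le hφ hl hν (hL.trans hLℓ) hC₀ hC
    (r := ε₂ * R + (d * L + ε) * |(n₀ : ℝ)|) (by positivity)
    (fun n hn => hres.exp_neg_le_sinDist hε₂ hrate hn₀ hn) hm hx hxn₀ hc₀ (by linarith)

/-- `e₀` is the width of the neighbourhoods of `m` and `n₀ - m` that are excluded, and `β` is the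
common bound for all other error rates. -/
lemma HasExpDecay.isLocalizedAt {Γ ε₀ β L : ℝ} {N : ℕ}
    (hdecay : HasExpDecay lam α E K φ m n₀ β R ℓ) (hφ : HasAlmostMax lam α θ K Em E φ m)
    (hl : 0 ≤ lam) (hL : 0 < L) (hLℓ : L ≤ ℓ) (hℓΓ : ℓ ≤ Γ) (hβ : β = L * ε₀ / 64) (hε₀ : 0 < ε₀)
    (hε₀_one : ε₀ ≤ 1) (hε₀ε : 16 * (Γ + L + 1) * ε₀ ≤ ε) (hεr : ε * R ≤ r) (hεLr : ε * R ≤ L * r)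
    (hC₀ : 0 ≤ C) (hC : HasInterpolationBound lam α (β / 5) C)
    (hN : ∀ n : ℤ, N < |(n : ℝ)| →
      exp (-((d * L + ε / 24) * |(n : ℝ)|)) ≤ sinDist (2 * θ + n * α))
    (hd : 0 ≤ d) (hε₂ : 0 ≤ ε₂) (hε₂β : ε₂ ≤ β) (hres : IsNonresonantExcept α θ ε₂ R n₀)
    (hR : N + |Real.log (8 * K ^ 2)| + |Real.log K| + C + Γ + L + 1 ≤ β * R)
    (hm : |m| ≤ R) (hx : |x| ≤ R) : IsLocalizedAt φ m n₀ d r (β * R) x := by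
  have hK := hφ.one_le
  have hlogK := le_abs_self (Real.log K)
  have hlogK' := le_abs_self (Real.log (8 * K ^ 2))
  have habs := abs_nonneg (Real.log K)
  have habs' := abs_nonneg (Real.log (8 * K ^ 2))
  have : (0 : ℝ) ≤ N := N.cast_nonneg
  have hβ₀ : 0 < β := by rw [hβ]; positivity
  have hR₀ : (0 : ℝ) ≤ R := R.cast_nonneg
  have hℓ : 0 ≤ ℓ := hL.le.trans hLℓ
  have hβR : L * (ε₀ * R) = 64 * (β * R) := by
    rw [hβ]
    ring
  have hεR : 16 * (Γ * (ε₀ * R)) + 16 * (L * (ε₀ * R)) + 16 * (ε₀ * R) ≤ ε * R := by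
    nlinarith [mul_le_mul_of_nonneg_right hε₀ε hR₀]
  have hΓR : 0 ≤ Γ * (ε₀ * R) := mul_nonneg (hℓ.trans hℓΓ) (by positivity)
  have hεR₀ : 0 ≤ ε₀ * R := by positivity
  obtain ⟨e₀, he₀_le, hle_e₀, he₀R⟩ : ∃ e₀ : ℕ, e₀ ≤ ε₀ * R ∧ ε₀ * R - 1 ≤ e₀ ∧ e₀ ≤ R :=
    ⟨⌊ε₀ * R⌋₊, Nat.floor_le hεR₀, (Nat.sub_one_lt_floor _).le,
      Nat.floor_le_of_le (mul_le_of_le_one_left hR₀ hε₀_one)⟩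
  by_contra hcon
  simp only [IsLocalizedAt, not_or, not_and_or, not_le] at hcon
  obtain ⟨hxm, hxn₀, hφx⟩ := hcon
  refine hφx.not_ge ?_
  by_cases hcase : (e₀ : ℤ) ≤ |x - (n₀ - m)|
  · refine hdecay.abs_le_exp_mul (by linarith) he₀R hx (e₀ := e₀) ?_ hcase ?_
    · have : (e₀ : ℝ) ≤ |(x : ℝ) - m| := by linarith
      exact_mod_cast this
    · have hLe₀ := mul_le_mul_of_nonneg_left hle_e₀ hL.le
      have hℓe₀ : L * e₀ ≤ ℓ * e₀ := by gcongr
      linarith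
  · have hcase' : |(x : ℝ) - (n₀ - m)| ≤ e₀ := by exact_mod_cast (not_le.1 hcase).le
    obtain ⟨hfixed, hn₀⟩ := hxn₀.resolve_left (not_lt.2 (by linarith))
    have hn₀R : |(n₀ : ℝ)| ≤ 3 * R := by
      have : |n₀| ≤ 3 * R := by grind
      exact_mod_cast this
    have hΓ : 0 ≤ Γ := hℓ.trans hℓΓ
    have hΓe₀ : ℓ * e₀ ≤ Γ * (ε₀ * R) := by gcongr
    have hε : 0 ≤ ε := by nlinarith
    have hεn₀ : ε / 24 * |(n₀ : ℝ)| ≤ ε / 24 * (3 * R) := by gcongr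
    have hε₂R : ε₂ * R ≤ β * R := by gcongr
    exact hdecay.abs_le_exp_mul_of_le_abs_sub_two_mul hφ hl hβ₀.le hL.le hLℓ hd
      (by positivity) hC₀ hC hε₂ hres (hN n₀ (by linarith)) hm hx (not_le.1 hcase).le
      (by linarith) hfixed.le (by linarith)

lemma IsSinDiophantine.exists_isLocalizedAt {κ τ : ℝ} (hα : IsSinDiophantine α κ τ)
    (hl : 1 < lam) (hd : 0 ≤ d) (hrate : HasResonanceRate α θ (d * Real.log lam)) (K : ℝ)
    (hEm : 0 ≤ Em) (hε : 0 < ε) :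
    ∃ γ, 0 < γ ∧ ∃ R₀ : ℕ, ∀ R : ℕ, R₀ ≤ R → ∃ p : ℤ, ∀ E φ m,
      HasAlmostMax lam α θ K Em E φ m → |m| ≤ R → ∀ n : ℤ, |n| ≤ R →
        IsLocalizedAt φ m p d (ε * R) (γ * R) n := by
  have hΓ := maxGrowthRate_pos hl hEm
  set Γ := maxGrowthRate lam Em
  have hL := log_pos hl
  set L := Real.log lam
  obtain ⟨ε', hε', hε'ε, hε'L⟩ : ∃ ε', 0 < ε' ∧ ε' ≤ ε ∧ ε' ≤ L * ε :=
    ⟨min ε (L * ε), by positivity, min_le_left _ _, min_le_right _ _⟩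
  obtain ⟨ε₀, hε₀, hε₀_one, hε₀ε⟩ : ∃ ε₀, 0 < ε₀ ∧ ε₀ ≤ 1 ∧ ε₀ ≤ ε' / (16 * (Γ + L + 1)) :=
    ⟨min 1 (ε' / (16 * (Γ + L + 1))), by positivity, min_le_left _ _, min_le_right _ _⟩
  rw [le_div_iff₀' (by positivity)] at hε₀ε
  set β := L * ε₀ / 64
  have hβ : 0 < β := by positivity
  obtain ⟨ε₁, hε₁, R₁, hdecay⟩ := hα.exists_hasExpDecay hl θ K hEm hβ
  obtain ⟨R₂, hres⟩ := hα.exists_isNonresonantExcept θ (lt_min hε₁ hβ)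
  obtain ⟨C, hC₀, hC⟩ := hα.exists_hasInterpolationBound lam (ε := β / 5) (by positivity)
  obtain ⟨N, hN⟩ := hrate (ε' / 24) (by positivity)
  obtain ⟨R₃, hR₃⟩ :=
    exists_nat_ge ((N + |Real.log (8 * K ^ 2)| + |Real.log K| + C + Γ + L + 1) / β)
  refine ⟨β, hβ, max R₁ (max R₂ R₃), fun R hR => ?_⟩
  simp only [max_le_iff] at hR
  obtain ⟨hR₁, hR₂, hR₃'⟩ := hR
  obtain ⟨p, hp⟩ := hres R hR₂
  refine ⟨p, fun E φ m hφ hm n hn => ?_⟩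
  obtain ⟨ℓ, hℓ, hℓΓ, hdecay⟩ := hdecay R hR₁ p (hp.mono (min_le_left _ _)) E φ m hφ hm
  exact hdecay.isLocalizedAt hφ (by linarith) hL hℓ hℓΓ rfl hε₀ hε₀_one hε₀ε (by gcongr)
    ((mul_le_mul_of_nonneg_right hε'L R.cast_nonneg).trans_eq (mul_assoc _ _ _)) hC₀ hC hN hd
    (by positivity) (min_le_right _ _) hp
    ((div_le_iff₀' hβ).1 (hR₃.trans (by exact_mod_cast hR₃'))) hm hn

end Localization

section Counting

variable {ι β : Type*}

lemma sub_le_sum_of_hasSum {f g : β → ℝ} {a η : ℝ} {J : Finset β} (hf : HasSum f a)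
    (hf₀ : ∀ b, 0 ≤ f b) (hfg : ∀ b ∉ J, f b ≤ g b) (hg : ∀ V : Finset β, ∑ b ∈ V, g b ≤ η) :
    a - η ≤ ∑ b ∈ J, f b := by
  classical
  refine sub_le_iff_le_add.2 (hasSum_le_of_sum_le hf fun V => ?_)
  rw [← Finset.sum_inter_add_sum_sdiff V J]
  refine add_le_add ?_ ?_
  · exact Finset.sum_le_sum_of_subset_of_nonneg Finset.inter_subset_right fun b _ _ => hf₀ b
  · exact (Finset.sum_le_sum fun b hb => hfg b (Finset.mem_sdiff.1 hb).2).trans (hg _)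

lemma card_mul_le_card_of_le_sum {w : ι → β → ℝ} {c : ℝ} {S : Finset ι} {J : Finset β}
    (hw : ∀ s b, 0 ≤ w s b) (hcol : ∀ b, HasSum (fun s => w s b) 1)
    (hrow : ∀ s ∈ S, c ≤ ∑ b ∈ J, w s b) : S.card * c ≤ J.card :=
  calc (S.card : ℝ) * c = ∑ _ ∈ S, c := by rw [Finset.sum_const, nsmul_eq_mul]
    _ ≤ ∑ s ∈ S, ∑ b ∈ J, w s b := Finset.sum_le_sum hrow
    _ = ∑ b ∈ J, ∑ s ∈ S, w s b := Finset.sum_comm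
    _ ≤ ∑ _ ∈ J, (1 : ℝ) := Finset.sum_le_sum fun b _ =>
        sum_le_hasSum S (fun s _ => hw s b) (hcol b)
    _ = J.card := by simp

lemma sum_mul_apply_le_tsum {w : ι → β → ℝ} {g : β → ℝ} (hw : ∀ s b, 0 ≤ w s b)
    (hcol : ∀ b, HasSum (fun s => w s b) 1) (hg₀ : ∀ b, 0 ≤ g b) (hg : Summable g) (m : ι → β)
    (U : Finset ι) : ∑ s ∈ U, g (m s) * w s (m s) ≤ ∑' b, g b := by
  classical
  calc ∑ s ∈ U, g (m s) * w s (m s) ≤ ∑ s ∈ U, ∑ b ∈ U.image m, g b * w s b :=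
        Finset.sum_le_sum fun s hs =>
          Finset.single_le_sum (f := fun b => g b * w s b)
            (fun b _ => mul_nonneg (hg₀ b) (hw s b)) (Finset.mem_image_of_mem m hs)
    _ = ∑ b ∈ U.image m, g b * ∑ s ∈ U, w s b := by
        rw [Finset.sum_comm]
        simp only [Finset.mul_sum]
    _ ≤ ∑ b ∈ U.image m, g b := Finset.sum_le_sum fun b _ =>
        mul_le_of_le_one_right (hg₀ b) (sum_le_hasSum U (fun s _ => hw s b) (hcol b))
    _ ≤ ∑' b, g b := hg.sum_le_tsum _ fun b _ => hg₀ b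

lemma summable_exp_neg_mul_abs_intCast {γ : ℝ} (hγ : 0 < γ) :
    Summable fun n : ℤ => exp (-(γ * |(n : ℝ)|)) := by
  have hnat : Summable fun n : ℕ => exp (-(γ * n)) := by
    refine (summable_geometric_of_lt_one (exp_pos (-γ)).le
      (exp_lt_one_iff.2 (neg_neg_of_pos hγ))).congr fun n => ?_
    rw [← exp_nat_mul]
    ring_nf
  exact .of_nat_of_neg (by simpa using hnat) (by simpa using hnat)

end Counting

section IntegerPoints

variable {X a b d r : ℝ} {p n : ℤ}

lemma mem_Icc_ceil_neg_floor : n ∈ Finset.Icc ⌈-X⌉ ⌊X⌋ ↔ |(n : ℝ)| ≤ X := by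
  rw [Finset.mem_Icc, Int.ceil_le, Int.le_floor, abs_le]

lemma two_mul_sub_one_le_card_Icc (X : ℝ) : 2 * X - 1 ≤ (Finset.Icc ⌈-X⌉ ⌊X⌋).card := by
  have hcard : ((⌊X⌋ + 1 - ⌈-X⌉ : ℤ) : ℝ) ≤ (Finset.Icc ⌈-X⌉ ⌊X⌋).card := by
    rw [Int.card_Icc]
    exact_mod_cast Int.self_le_toNat _
  rw [Int.ceil_neg] at hcard ⊢
  push_cast at hcard
  linarith [Int.lt_floor_add_one X]

lemma card_le_of_forall_cast_mem_Icc {S : Finset ℤ} (hab : 0 ≤ b - a + 1)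
    (hS : ∀ n ∈ S, (n : ℝ) ∈ Set.Icc a b) : S.card ≤ b - a + 1 := by
  have hsub : S ⊆ Finset.Icc ⌈a⌉ ⌊b⌋ := fun n hn =>
    Finset.mem_Icc.2 ⟨Int.ceil_le.2 (hS n hn).1, Int.le_floor.2 (hS n hn).2⟩
  have hcard : (S.card : ℤ) ≤ max (⌊b⌋ + 1 - ⌈a⌉) 0 := by
    have := Finset.card_le_card hsub
    rw [Int.card_Icc] at this
    lia
  have hcard' : (S.card : ℝ) ≤ max ((⌊b⌋ : ℝ) + 1 - ⌈a⌉) 0 := by exact_mod_cast hcard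
  exact hcard'.trans (max_le (by linarith [Int.floor_le b, Int.le_ceil a]) hab)

lemma card_Icc_le_two_mul_add_one (hX : 0 ≤ X) :
    (Finset.Icc ⌈-X⌉ ⌊X⌋).card ≤ 2 * X + 1 := by
  refine (card_le_of_forall_cast_mem_Icc (a := -X) (b := X) (by linarith) fun n hn =>
    abs_le.1 (mem_Icc_ceil_neg_floor.1 hn)).trans_eq (by ring)

/-- The sites in `[-X, X]` at distance at most `(d |p| + r) / 2` from the fixed point of the
reflection `k ↦ p - k` which this reflection moves away from the origin. Only these can exchange
mass across the boundary of a box. -/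
def reflectionSites (p : ℤ) (d r X : ℝ) : Finset ℤ :=
  {k ∈ Finset.Icc ⌈-X⌉ ⌊X⌋ | |(p : ℝ) - 2 * k| ≤ d * |(p : ℝ)| + r ∧ |(k : ℝ)| < |(p : ℝ) - k|}

lemma mem_reflectionSites : n ∈ reflectionSites p d r X ↔
    |(n : ℝ)| ≤ X ∧ |(p : ℝ) - 2 * n| ≤ d * |(p : ℝ)| + r ∧ |(n : ℝ)| < |(p : ℝ) - n| := by
  rw [reflectionSites, Finset.mem_filter, mem_Icc_ceil_neg_floor]

lemma neg_mem_reflectionSites (hn : n ∈ reflectionSites p d r X) :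
    -n ∈ reflectionSites (-p) d r X := by
  rw [mem_reflectionSites] at hn ⊢
  push_cast
  rwa [abs_neg, abs_neg, ← abs_neg (-(p : ℝ) - 2 * -n), ← abs_neg (-(p : ℝ) - -n),
    show -(-(p : ℝ) - 2 * -n) = p - 2 * n by ring, show -(-(p : ℝ) - -n) = p - n by ring]

lemma card_reflectionSites_le (p : ℤ) (hd : 0 ≤ d) (hd_one : d ≤ 1) (hr : 0 ≤ r) (hX : 0 ≤ X) :
    (reflectionSites p d r X).card ≤ d * X + r / 2 + 1 := by
  wlog hp : 0 ≤ p generalizing p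
  · refine le_trans ?_ (this (-p) (by lia))
    exact_mod_cast Finset.card_le_card_of_injOn Neg.neg
      (fun n hn => neg_mem_reflectionSites hn) neg_injective.injOn
  have hp' : (0 : ℝ) ≤ p := by exact_mod_cast hp
  refine (card_le_of_forall_cast_mem_Icc (a := (1 - d) / 2 * p - r / 2)
    (b := (1 - d) / 2 * p + d * X) (by nlinarith) fun n hn => ?_).trans_eq (by ring)
  obtain ⟨hnX, hfixed, hmoved⟩ := mem_reflectionSites.1 hn
  rw [abs_of_nonneg hp'] at hfixed
  have hlt : 2 * (n : ℝ) < p := by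
    rw [← sq_lt_sq] at hmoved
    nlinarith
  constructor
  · linarith [(abs_le.1 hfixed).2]
  · calc (n : ℝ) = (1 - d) * n + d * n := by ring
      _ ≤ (1 - d) * (p / 2) + d * X := by
          gcongr <;> linarith [le_abs_self (n : ℝ)]
      _ = (1 - d) / 2 * p + d * X := by ring

end IntegerPoints

section ScaleLocalization

variable {ι : Type*} {F : ι → ℤ → ℝ} {m : ι → ℤ} {φ : ℤ → ℝ} {s : ι} {n p : ℤ}
  {c d η γ r : ℝ} {L : ℕ}

/-- The functions `F s` are localized at the sites `m s` up to reflections: at each large scale `R`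
there is a single resonance `p` that governs all of them. -/
def IsLocalizedFamily (F : ι → ℤ → ℝ) (m : ι → ℤ) (d : ℝ) : Prop :=
  ∀ ε : ℝ, 0 < ε → ∃ γ, 0 < γ ∧ ∃ R₀ : ℕ, ∀ R : ℕ, R₀ ≤ R → ∃ p : ℤ, ∀ s, |m s| ≤ R →
    ∀ n : ℤ, |n| ≤ R → IsLocalizedAt (F s) (m s) p d (ε * R) (γ * R) n

/-- Localization relative to the box `[-L, L]`, with only one of the two sites `m s` and `n`
required to lie in the box. -/
def IsLocalizedAtScale (F : ι → ℤ → ℝ) (m : ι → ℤ) (d η γ : ℝ) (L : ℕ) (p : ℤ) : Prop :=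
  ∀ s (n : ℤ), |m s| ≤ L ∨ |n| ≤ L →
    IsLocalizedAt (F s) (m s) p d (η * L) (γ * (L + |(n : ℝ)| + |(m s : ℝ)|)) n

lemma IsLocalizedAt.abs_le_of_min_le {m : ℤ} (h : IsLocalizedAt φ m p d r c n) (hd : 0 ≤ d)
    (hr : 0 < r) (hmin : min |(m : ℝ)| |(n : ℝ)| ≤ r)
    (hmax : d * max |(m : ℝ)| |(n : ℝ)| + 10 * r ≤ max |(m : ℝ)| |(n : ℝ)|) :
    |φ n| ≤ exp (-c) * |φ m| := by
  have hdM : 0 ≤ d * max |(m : ℝ)| |(n : ℝ)| := by positivity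
  have hd_one : 0 ≤ 1 - d := by nlinarith
  have hdr : d * r ≤ r := by nlinarith
  rcases h with hnear | ⟨hrefl, hfixed | hp⟩ | hdecay
  · grind
  · exfalso
    obtain ⟨M, hM⟩ : ∃ M, max |(m : ℝ)| |(n : ℝ)| = M := ⟨_, rfl⟩
    rw [hM] at hmax hdM
    rcases min_le_iff.1 hmin with hm | hn
    · have hp_le : |(p : ℝ)| ≤ d * |(p : ℝ)| + 3 * r := by grind
      have hle_p : M - 2 * r ≤ |(p : ℝ)| := by grind
      nlinarith
    · have hp_le : |(p : ℝ)| ≤ M + 2 * r := by grind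
      have hM_le : M ≤ d * |(p : ℝ)| + 3 * r := by grind
      nlinarith
  · grind
  · exact hdecay

lemma IsLocalizedAt.mono {m : ℤ} {c' : ℝ} (h : IsLocalizedAt φ m p d r c n) (hc : c' ≤ c) :
    IsLocalizedAt φ m p d r c' n := by
  refine h.imp_right (Or.imp_right fun h => h.trans ?_)
  gcongr

/-- The larger one of the two sites serves as the scale. The reflection cannot exchange it with a
much smaller one because `d < 1`. -/
lemma IsLocalizedFamily.exists_abs_le_of_mul_min_le (hF : IsLocalizedFamily F m d) (hd : 0 ≤ d)
    (hd_lt : d < 1) : ∃ γ, 0 < γ ∧ ∃ C : ℕ, 0 < C ∧ ∃ R₀ : ℕ, ∀ s (n : ℤ),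
      R₀ ≤ max |m s| |n| → C * min |m s| |n| ≤ max |m s| |n| →
        |F s n| ≤ exp (-(γ * max |(m s : ℝ)| |(n : ℝ)|)) * |F s (m s)| := by
  set ε := (1 - d) / 10 with hε
  have hε₀ : 0 < ε := by linarith
  obtain ⟨C, hC⟩ := exists_nat_ge (1 / ε)
  rw [div_le_iff₀ hε₀] at hC
  have hC₀ : (0 : ℝ) < C := by nlinarith
  obtain ⟨γ, hγ, R₀, hfar⟩ := hF ε hε₀
  refine ⟨γ, hγ, C, by exact_mod_cast hC₀, R₀ + 1, fun s n hlarge hmin => ?_⟩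
  obtain ⟨R, hR⟩ : ∃ R : ℕ, max |m s| |n| = R := ⟨(max |m s| |n|).natAbs, by grind⟩
  have hR' : max |(m s : ℝ)| |(n : ℝ)| = R := by exact_mod_cast hR
  have hR₀ : (0 : ℝ) < R := by
    have : 0 < R := by lia
    exact_mod_cast this
  obtain ⟨q, hq⟩ := hfar R (by lia)
  rw [hR] at hmin
  have hmin' : C * min |(m s : ℝ)| |(n : ℝ)| ≤ R := by exact_mod_cast hmin
  rw [hR']
  refine (hq s (hR ▸ le_max_left _ _) n (hR ▸ le_max_right _ _)).abs_le_of_min_le hd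
    (by positivity) ?_ ?_
  · have hnonneg : 0 ≤ min |(m s : ℝ)| |(n : ℝ)| := by positivity
    nlinarith
  · rw [hR', hε]
    linarith

lemma IsLocalizedFamily.exists_isLocalizedAtScale (hF : IsLocalizedFamily F m d) (hd : 0 ≤ d)
    (hd_lt : d < 1) (hη : 0 < η) : ∃ γ, 0 < γ ∧ ∃ L₀ : ℕ, ∀ L : ℕ, L₀ ≤ L →
      ∃ p : ℤ, IsLocalizedAtScale F m d η γ L p := by
  obtain ⟨γ₁, hγ₁, C, hC, R₁, hfar⟩ := hF.exists_abs_le_of_mul_min_le hd hd_lt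
  have hC₀ : (0 : ℝ) < C := by exact_mod_cast hC
  obtain ⟨γ₂, hγ₂, R₂, hnear⟩ := hF (η / C) (by positivity)
  refine ⟨min γ₁ γ₂ / 3, by positivity, max R₁ R₂, fun L hL => ?_⟩
  have hLC : L ≤ C * L := Nat.le_mul_of_pos_left _ hC
  have hrate {R γ : ℝ} {s : ι} {n : ℤ} (hLR : L ≤ R) (hm : |(m s : ℝ)| ≤ R)
      (hn : |(n : ℝ)| ≤ R) (hγ : min γ₁ γ₂ ≤ γ) :
      min γ₁ γ₂ / 3 * (L + |(n : ℝ)| + |(m s : ℝ)|) ≤ γ * R :=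
    have hR : 0 ≤ R := L.cast_nonneg.trans hLR
    calc min γ₁ γ₂ / 3 * (L + |(n : ℝ)| + |(m s : ℝ)|) ≤ min γ₁ γ₂ / 3 * (3 * R) := by
          gcongr
          linarith
      _ = min γ₁ γ₂ * R := by ring
      _ ≤ γ * R := by gcongr
  obtain ⟨p, hp⟩ := hnear (C * L) (by lia)
  refine ⟨p, fun s n hsn => ?_⟩
  by_cases hbox : |m s| ≤ (C * L : ℕ) ∧ |n| ≤ (C * L : ℕ)
  · have h := (hp s hbox.1 n hbox.2).mono (hrate (by exact_mod_cast hLC)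
      (by exact_mod_cast hbox.1) (by exact_mod_cast hbox.2) (min_le_right _ _))
    rwa [Nat.cast_mul, ← mul_assoc, div_mul_cancel₀ _ hC₀.ne'] at h
  · have hmax : C * L ≤ max |m s| |n| := by grind
    have hmin : C * min |m s| |n| ≤ C * L :=
      mul_le_mul_of_nonneg_left (min_le_iff.2 hsn) C.cast_nonneg
    have hL_le : (L : ℤ) ≤ max |m s| |n| := hmax.trans' (by exact_mod_cast hLC)
    refine .inr (.inr ((hfar s n (by lia) (hmin.trans hmax)).trans
      (mul_le_mul_of_nonneg_right (exp_le_exp.2 (neg_le_neg ?_)) (abs_nonneg _))))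
    exact hrate (by exact_mod_cast hL_le) (le_max_left _ _) (le_max_right _ _) (min_le_left _ _)

lemma IsLocalizedAtScale.abs_le_of_lt_abs (h : IsLocalizedAtScale F m d η γ L p)
    (hη : 0 ≤ η) (hm : |m s| ≤ L) (hn : (1 + 2 * η) * L < |(n : ℝ)|)
    (hsite : p - n ∉ reflectionSites p d (3 * (η * L)) ((1 + 2 * η) * L)) :
    |F s n| ≤ exp (-(γ * (L + |(n : ℝ)| + |(m s : ℝ)|))) * |F s (m s)| := by
  have hm' : |(m s : ℝ)| ≤ L := by exact_mod_cast hm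
  have hηL : 0 ≤ η * L := by positivity
  rw [add_mul, one_mul, mul_assoc] at hn hsite
  rcases h s n (.inl hm) with hnear | ⟨hrefl, hfixed | hp⟩ | hdecay
  · grind
  · refine absurd (mem_reflectionSites.2 ?_) hsite
    push_cast
    grind
  · grind
  · exact hdecay

lemma IsLocalizedAtScale.abs_le_of_abs_le (h : IsLocalizedAtScale F m d η γ L p)
    (hη : 0 ≤ η) (hm : L < |m s|) (hn : |(n : ℝ)| ≤ (1 - 2 * η) * L)
    (hsite : n ∉ reflectionSites p d (3 * (η * L)) ((1 - 2 * η) * L)) :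
    |F s n| ≤ exp (-(γ * (L + |(n : ℝ)| + |(m s : ℝ)|))) * |F s (m s)| := by
  have hm' : (L : ℝ) < |(m s : ℝ)| := by exact_mod_cast hm
  have hηL : 0 ≤ η * L := by positivity
  rw [sub_mul, one_mul, mul_assoc] at hn hsite
  have hnL : |n| ≤ L := by
    have : |(n : ℝ)| ≤ L := by linarith
    exact_mod_cast this
  rcases h s n (.inr hnL) with hnear | ⟨hrefl, hfixed | hp⟩ | hdecay
  · grind
  · refine absurd (mem_reflectionSites.2 ?_) hsite
    grind
  · grind
  · exact hdecay

lemma sq_le_exp_neg_mul_sq {x y c : ℝ} (hc : 0 ≤ c) (h : |x| ≤ exp (-c) * |y|) :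
    x ^ 2 ≤ exp (-c) * y ^ 2 :=
  calc x ^ 2 = |x| ^ 2 := (sq_abs x).symm
    _ ≤ (exp (-c) * |y|) ^ 2 := by gcongr
    _ = exp (-c) * (exp (-c) * y ^ 2) := by rw [mul_pow, sq_abs]; ring
    _ ≤ exp (-c) * y ^ 2 := by
        gcongr
        exact mul_le_of_le_one_left (sq_nonneg y) (exp_le_one_iff.2 (neg_nonpos.2 hc))

end ScaleLocalization

section Density

variable {ι : Type*} {F : ι → ℤ → ℝ} {m : ι → ℤ} {d η γ : ℝ} {L : ℕ} {p n : ℤ}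
  {s : ι}

lemma IsLocalizedAtScale.one_sub_le_sum_sites (h : IsLocalizedAtScale F m d η γ L p)
    (hη : 0 ≤ η) (hγ : 0 < γ) (hstate : HasSum (fun n => F s n ^ 2) 1)
    (hL : exp (-(γ * L)) * ∑' n : ℤ, exp (-(γ * |(n : ℝ)|)) ≤ η) (hs : |m s| ≤ L) {J : Finset ℤ}
    (hbox : ∀ n : ℤ, |(n : ℝ)| ≤ (1 + 2 * η) * L → n ∈ J)
    (hrefl : ∀ k ∈ reflectionSites p d (3 * (η * L)) ((1 + 2 * η) * L), p - k ∈ J) :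
    1 - η ≤ ∑ n ∈ J, F s n ^ 2 := by
  refine sub_le_sum_of_hasSum hstate (fun n => sq_nonneg _)
    (g := fun n : ℤ => exp (-(γ * L)) * exp (-(γ * |(n : ℝ)|))) (fun n hn => ?_) (fun V => ?_)
  · have hdecay := h.abs_le_of_lt_abs hη hs (not_le.1 (mt (hbox n) hn)) fun hmem =>
      hn (sub_sub_cancel p n ▸ hrefl _ hmem)
    calc F s n ^ 2 ≤ exp (-(γ * (L + |(n : ℝ)| + |(m s : ℝ)|))) * F s (m s) ^ 2 :=
          sq_le_exp_neg_mul_sq (by positivity) hdecay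
      _ ≤ exp (-(γ * (L + |(n : ℝ)|))) * 1 :=
          mul_le_mul (exp_le_exp.2 (neg_le_neg (mul_le_mul_of_nonneg_left
            (le_add_of_nonneg_right (abs_nonneg _)) hγ.le)))
            (le_hasSum hstate (m s) fun n _ => sq_nonneg _) (sq_nonneg _) (exp_pos _).le
      _ = exp (-(γ * L)) * exp (-(γ * |(n : ℝ)|)) := by
          rw [mul_one, ← exp_add]
          ring_nf
  · rw [← Finset.mul_sum]
    exact hL.trans' (mul_le_mul_of_nonneg_left
      ((summable_exp_neg_mul_abs_intCast hγ).sum_le_tsum V fun n _ => (exp_pos _).le)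
      (exp_pos _).le)

lemma IsLocalizedAtScale.one_sub_le_sum_states (h : IsLocalizedAtScale F m d η γ L p)
    (hη : 0 ≤ η) (hγ : 0 < γ) (hsite : ∀ n, HasSum (fun s => F s n ^ 2) 1)
    (hL : exp (-(γ * L)) * ∑' n : ℤ, exp (-(γ * |(n : ℝ)|)) ≤ η) {S : Finset ι}
    (hS : ∀ s, |m s| ≤ L → s ∈ S) (hn : |(n : ℝ)| ≤ (1 - 2 * η) * L)
    (hrefl : n ∉ reflectionSites p d (3 * (η * L)) ((1 - 2 * η) * L)) :
    1 - η ≤ ∑ s ∈ S, F s n ^ 2 := by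
  refine sub_le_sum_of_hasSum (hsite n) (fun s => sq_nonneg _)
    (g := fun s => exp (-(γ * L)) * (exp (-(γ * |(m s : ℝ)|)) * F s (m s) ^ 2))
    (fun s hs => ?_) (fun V => ?_)
  · have hdecay := h.abs_le_of_abs_le hη (not_le.1 (mt (hS s) hs)) hn hrefl
    calc F s n ^ 2 ≤ exp (-(γ * (L + |(n : ℝ)| + |(m s : ℝ)|))) * F s (m s) ^ 2 :=
          sq_le_exp_neg_mul_sq (by positivity) hdecay
      _ ≤ exp (-(γ * (L + |(m s : ℝ)|))) * F s (m s) ^ 2 := by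
          gcongr
          exact le_add_of_nonneg_right (abs_nonneg _)
      _ = exp (-(γ * L)) * (exp (-(γ * |(m s : ℝ)|)) * F s (m s) ^ 2) := by
          rw [← mul_assoc, ← exp_add]
          ring_nf
  · rw [← Finset.mul_sum]
    exact hL.trans' (mul_le_mul_of_nonneg_left
      (sum_mul_apply_le_tsum (fun s n => sq_nonneg (F s n)) hsite (fun n => (exp_pos _).le)
        (summable_exp_neg_mul_abs_intCast hγ) m V) (exp_pos _).le)

lemma IsLocalizedAtScale.card_mul_le (h : IsLocalizedAtScale F m d η γ L p) (hd : 0 ≤ d)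
    (hd_one : d ≤ 1) (hη : 0 ≤ η) (hγ : 0 < γ)
    (hsite : ∀ n, HasSum (fun s => F s n ^ 2) 1) (hstate : ∀ s, HasSum (fun n => F s n ^ 2) 1)
    (hL : exp (-(γ * L)) * ∑' n : ℤ, exp (-(γ * |(n : ℝ)|)) ≤ η) {S : Finset ι}
    (hS : ∀ s ∈ S, |m s| ≤ L) : S.card * (1 - η) ≤ (2 + d + 8 * η) * L + 2 := by
  set X := (1 + 2 * η) * L with hX
  set J := Finset.Icc ⌈-X⌉ ⌊X⌋
  set J' := (reflectionSites p d (3 * (η * L)) X).image (p - ·)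
  have hX₀ : 0 ≤ X := by positivity
  have hmass : ∀ s ∈ S, 1 - η ≤ ∑ n ∈ J ∪ J', F s n ^ 2 := fun s hs =>
    h.one_sub_le_sum_sites hη hγ (hstate s) hL (hS s hs)
      (fun n hn => Finset.mem_union_left _ (mem_Icc_ceil_neg_floor.2 hn))
      (fun k hk => Finset.mem_union_right _ (Finset.mem_image_of_mem _ hk))
  have hJ : (J.card : ℝ) ≤ 2 * X + 1 := card_Icc_le_two_mul_add_one hX₀
  have hJ' : (J'.card : ℝ) ≤ d * X + 3 * (η * L) / 2 + 1 :=
    (card_reflectionSites_le p hd hd_one (by positivity) hX₀).trans'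
      (by exact_mod_cast Finset.card_image_le)
  have hunion : ((J ∪ J').card : ℝ) ≤ J.card + J'.card := by
    exact_mod_cast Finset.card_union_le J J'
  have hdηL : d * (η * L) ≤ η * L := mul_le_of_le_one_left (by positivity) hd_one
  have hηL : 0 ≤ η * L := by positivity
  refine (card_mul_le_card_of_le_sum (fun s n => sq_nonneg _) hsite hmass).trans ?_
  rw [hX] at hJ hJ'
  linarith

lemma IsLocalizedAtScale.mul_le_card (h : IsLocalizedAtScale F m d η γ L p) (hd : 0 ≤ d)
    (hd_one : d ≤ 1) (hη : 0 ≤ η) (hη_half : η ≤ 1 / 2) (hγ : 0 < γ)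
    (hsite : ∀ n, HasSum (fun s => F s n ^ 2) 1) (hstate : ∀ s, HasSum (fun n => F s n ^ 2) 1)
    (hL : exp (-(γ * L)) * ∑' n : ℤ, exp (-(γ * |(n : ℝ)|)) ≤ η) {S : Finset ι}
    (hS : ∀ s, |m s| ≤ L → s ∈ S) : ((2 - d - 6 * η) * L - 2) * (1 - η) ≤ S.card := by
  set Y := (1 - 2 * η) * L with hY
  set J := Finset.Icc ⌈-Y⌉ ⌊Y⌋
  set J' := reflectionSites p d (3 * (η * L)) Y
  have hY₀ : 0 ≤ Y := mul_nonneg (by linarith) L.cast_nonneg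
  have hmass : ∀ n ∈ J \ J', 1 - η ≤ ∑ s ∈ S, F s n ^ 2 := fun n hn => by
    rw [Finset.mem_sdiff, mem_Icc_ceil_neg_floor] at hn
    exact h.one_sub_le_sum_states hη hγ hsite hL hS hn.1 hn.2
  have hJ : 2 * Y - 1 ≤ J.card := two_mul_sub_one_le_card_Icc Y
  have hJ' : (J'.card : ℝ) ≤ d * Y + 3 * (η * L) / 2 + 1 :=
    card_reflectionSites_le p hd hd_one (by positivity) hY₀
  have hdiff : (J.card : ℝ) ≤ (J \ J').card + J'.card := by
    exact_mod_cast Finset.card_le_card_sdiff_add_card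
  have hdηL : 0 ≤ d * (η * L) := by positivity
  have hηL : 0 ≤ η * L := by positivity
  refine (mul_le_mul_of_nonneg_right ?_ (by linarith)).trans
    (card_mul_le_card_of_le_sum (fun n s => sq_nonneg (F s n)) hstate hmass)
  rw [hY] at hJ hJ'
  linarith

lemma IsLocalizedFamily.eventually_ncard_bounds (hF : IsLocalizedFamily F m d)
    (hd : 0 ≤ d) (hd_lt : d < 1) (hsite : ∀ n, HasSum (fun s => F s n ^ 2) 1)
    (hstate : ∀ s, HasSum (fun n => F s n ^ 2) 1) (hη : 0 < η) (hη_half : η ≤ 1 / 2) :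
    ∀ᶠ L : ℕ in atTop,
      {s | |m s| ≤ (L : ℤ)}.ncard * (1 - η) ≤ (2 + d + 8 * η) * L + 2 ∧
        ((2 - d - 6 * η) * L - 2) * (1 - η) ≤ {s | |m s| ≤ (L : ℤ)}.ncard := by
  obtain ⟨γ, hγ, L₀, hloc⟩ := hF.exists_isLocalizedAtScale hd hd_lt hη
  have htail : Tendsto (fun L : ℕ => exp (-(γ * L)) * ∑' n : ℤ, exp (-(γ * |(n : ℝ)|))) atTop
      (nhds 0) := by
    simpa using (tendsto_exp_neg_atTop_nhds_zero.comp
      (tendsto_natCast_atTop_atTop.const_mul_atTop hγ)).mul_const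
        (∑' n : ℤ, exp (-(γ * |(n : ℝ)|)))
  filter_upwards [eventually_ge_atTop L₀, htail.eventually_le_const hη] with L hL htailL
  obtain ⟨p, hp⟩ := hloc L hL
  have hupper {S : Finset ι} (hS : ∀ s ∈ S, |m s| ≤ L) :=
    hp.card_mul_le hd hd_lt.le hη.le hγ hsite hstate htailL hS
  have hfinite : {s | |m s| ≤ (L : ℤ)}.Finite := by
    by_contra hinfinite
    obtain ⟨N, hN⟩ := exists_nat_gt (2 * ((2 + d + 8 * η) * L + 2))
    obtain ⟨S, hS, rfl⟩ := Set.Infinite.exists_subset_card_eq hinfinite N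
    have hhalf : (S.card : ℝ) * (1 / 2) ≤ S.card * (1 - η) := by
      gcongr
      linarith
    linarith [hupper fun s hs => hS hs]
  rw [Set.ncard_eq_toFinset_card _ hfinite]
  exact ⟨hupper fun s hs => hfinite.mem_toFinset.1 hs,
    hp.mul_le_card hd hd_lt.le hη.le hη_half hγ hsite hstate htailL
      fun s hs => hfinite.mem_toFinset.2 hs⟩

lemma IsLocalizedFamily.eventually_density_bounds (hF : IsLocalizedFamily F m d) (hd : 0 ≤ d)
    (hd_lt : d < 1) (hsite : ∀ n, HasSum (fun s => F s n ^ 2) 1)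
    (hstate : ∀ s, HasSum (fun n => F s n ^ 2) 1) {ε : ℝ} (hε : 0 < ε) :
    ∀ᶠ L : ℕ in atTop, ({s | |m s| ≤ (L : ℤ)}.ncard : ℝ) / (2 * L + 1) ≤ 1 + d / 2 + ε ∧
      1 - d / 2 - ε ≤ ({s | |m s| ≤ (L : ℤ)}.ncard : ℝ) / (2 * L + 1) := by
  wlog hε_one : ε ≤ 1 generalizing ε
  · filter_upwards [this one_pos le_rfl] with L hL
    constructor <;> linarith [hL.1, hL.2]
  have hlarge := (tendsto_natCast_atTop_atTop.const_mul_atTop hε).eventually_ge_atTop (5 : ℝ)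
  filter_upwards [hF.eventually_ncard_bounds hd hd_lt hsite hstate
    (η := ε / 12) (by positivity) (by linarith), hlarge] with L ⟨hupper, hlower⟩ hεL
  generalize ({s | |m s| ≤ (L : ℤ)}.ncard : ℝ) = c at hupper hlower ⊢
  have hdεL : d * (ε * L) ≤ ε * L := mul_le_of_le_one_left (by positivity) hd_lt.le
  have hεεL : ε * (ε * L) ≤ ε * L := mul_le_of_le_one_left (by positivity) hε_one
  have hdεL₀ : 0 ≤ d * (ε * L) := by positivity
  have hεεL₀ : 0 ≤ ε * (ε * L) := by positivity
  rw [div_le_iff₀ (by positivity), le_div_iff₀ (by positivity)]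
  constructor
  · have hc : c ≤ (2 + d + ε) * L + 4 :=
      le_of_mul_le_mul_right (hupper.trans (by linarith)) (show 0 < 1 - ε / 12 by linarith)
    nlinarith
  · nlinarith

lemma IsLocalizedFamily.limsup_density_le (hF : IsLocalizedFamily F m d) (hd : 0 ≤ d)
    (hd_lt : d < 1) (hsite : ∀ n, HasSum (fun s => F s n ^ 2) 1)
    (hstate : ∀ s, HasSum (fun n => F s n ^ 2) 1) :
    limsup (fun L : ℕ => ({s | |m s| ≤ (L : ℤ)}.ncard : ℝ) / (2 * L + 1)) atTop ≤ 1 + d / 2 := by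
  refine le_of_forall_pos_le_add fun ε hε => limsup_le_of_le
    (isCoboundedUnder_le_of_eventually_le atTop (x := 0) (.of_forall fun L => by positivity)) ?_
  filter_upwards [hF.eventually_density_bounds hd hd_lt hsite hstate hε] with L hL using hL.1

lemma IsLocalizedFamily.le_liminf_density (hF : IsLocalizedFamily F m d) (hd : 0 ≤ d)
    (hd_lt : d < 1) (hsite : ∀ n, HasSum (fun s => F s n ^ 2) 1)
    (hstate : ∀ s, HasSum (fun n => F s n ^ 2) 1) :
    1 - d / 2 ≤ liminf (fun L : ℕ => ({s | |m s| ≤ (L : ℤ)}.ncard : ℝ) / (2 * L + 1)) atTop := by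
  have hbounds {ε : ℝ} (hε : 0 < ε) := hF.eventually_density_bounds hd hd_lt hsite hstate hε
  refine le_of_forall_pos_le_add fun ε hε => sub_le_iff_le_add.1 (le_liminf_of_le
    (isCoboundedUnder_ge_of_eventually_le atTop ((hbounds one_pos).mono fun L hL => hL.1)) ?_)
  filter_upwards [hbounds hε] with L hL using hL.2

end Density

section ReflectionSymmetry

variable {g φ : ℤ → ℝ} {E b t σ : ℝ} {n : ℤ}

lemma IsEigenfunction.eq_zero_of_apply_eq_zero (h : IsEigenfunction g E φ) {x : ℤ}
    (hx : φ x = 0) (hx' : φ (x + 1) = 0) : φ = 0 := by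
  have hpair (k : ℤ) : φ k = 0 ∧ φ (k + 1) = 0 := by
    induction k using Int.inductionOn' (b := x) with
    | zero => exact ⟨hx, hx'⟩
    | succ k _ ih =>
      have hstep := h (k + 1)
      rw [add_sub_cancel_right, ih.1, ih.2] at hstep
      exact ⟨ih.2, by linarith⟩
    | pred k _ ih =>
      have hstep := h k
      rw [ih.1, ih.2] at hstep
      exact ⟨by linarith, by rw [sub_add_cancel, ih.1]⟩
  exact funext fun k => (hpair k).1

lemma tendsto_cofinite_zero_of_hasSum_sq {ι : Type*} {u : ι → ℝ} {a : ℝ}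
    (h : HasSum (fun i => u i ^ 2) a) : Tendsto u cofinite (nhds 0) := by
  have hsq := h.summable.tendsto_cofinite_zero.sqrt
  simp only [sqrt_sq_eq_abs, sqrt_zero] at hsq
  exact (tendsto_zero_iff_abs_tendsto_zero _).2 hsq

lemma abs_apply_le_one_of_hasSum_sq {ι : Type*} {u : ι → ℝ} (h : HasSum (fun i => u i ^ 2) 1)
    (i : ι) : |u i| ≤ 1 :=
  (sq_le_one_iff_abs_le_one _).1 (le_hasSum h i fun _ _ => sq_nonneg _)

lemma sum_abs_mul_le_one_of_hasSum_sq {ι : Type*} {u v : ι → ℝ}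
    (hu : HasSum (fun i => u i ^ 2) 1) (hv : HasSum (fun i => v i ^ 2) 1) (S : Finset ι) :
    ∑ i ∈ S, |u i * v i| ≤ 1 := by
  have huS := sum_le_hasSum S (fun i _ => sq_nonneg _) hu
  have hvS := sum_le_hasSum S (fun i _ => sq_nonneg _) hv
  calc ∑ i ∈ S, |u i * v i| ≤ ∑ i ∈ S, (u i ^ 2 / 2 + v i ^ 2 / 2) := by
        refine Finset.sum_le_sum fun i _ => ?_
        rw [abs_mul]
        linarith [two_mul_le_add_sq |u i| |v i|, sq_abs (u i), sq_abs (v i)]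
    _ = (∑ i ∈ S, u i ^ 2) / 2 + (∑ i ∈ S, v i ^ 2) / 2 := by
        rw [Finset.sum_add_distrib, Finset.sum_div, Finset.sum_div]
    _ ≤ 1 := by linarith

/-- The Wronskian at `k` of `φ` and its reflection `k ↦ φ (n - k)`. It is constant for an
eigenfunction of a potential that is symmetric about `n / 2`. -/
def reflectionWronskian (φ : ℤ → ℝ) (n k : ℤ) : ℝ :=
  φ (k + 1) * φ (n - k) - φ k * φ (n - (k + 1))

lemma IsEigenfunction.reflectionWronskian_add_one_sub (h : IsEigenfunction g E φ) (n k : ℤ) :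
    reflectionWronskian φ n (k + 1) - reflectionWronskian φ n k =
      (g (n - (k + 1)) - g (k + 1)) * (φ (k + 1) * φ (n - (k + 1))) := by
  have h₁ := h (k + 1)
  have h₂ := h (n - (k + 1))
  rw [show k + 1 - 1 = k by ring] at h₁
  rw [show n - (k + 1) + 1 = n - k by ring, show n - (k + 1) - 1 = n - (k + 1 + 1) by ring] at h₂
  simp only [reflectionWronskian]
  linear_combination φ (n - (k + 1)) * h₁ - φ (k + 1) * h₂

lemma tendsto_reflectionWronskian (hφ : Tendsto φ cofinite (nhds 0)) (n : ℤ) :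
    Tendsto (reflectionWronskian φ n) cofinite (nhds 0) := by
  have hcomp {e : ℤ → ℤ} (he : e.Injective) : Tendsto (fun k => φ (e k)) cofinite (nhds 0) :=
    hφ.comp he.tendsto_cofinite
  have hright := hcomp (add_left_injective 1)
  have hreflected := hcomp (sub_right_injective (b := n))
  have hreflectedRight := hcomp ((sub_right_injective (b := n)).comp (add_left_injective 1))
  have hlim := (hright.mul hreflected).sub (hφ.mul hreflectedRight)
  rwa [mul_zero, sub_zero] at hlim

lemma IsEigenfunction.abs_reflectionWronskian_le (h : IsEigenfunction g E φ)
    (hφ : HasSum (fun k => φ k ^ 2) 1) (hg : ∀ k, |g (n - k) - g k| ≤ t) (c : ℤ) :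
    |reflectionWronskian φ n c| ≤ t := by
  set W := reflectionWronskian φ n
  have ht : 0 ≤ t := (abs_nonneg _).trans (hg 0)
  let site : ℕ ↪ ℤ := ⟨fun j => c + j + 1, fun i j hij => by simpa using hij⟩
  have hreflected : HasSum (fun k => φ (n - k) ^ 2) 1 := (Equiv.subLeft n).hasSum_iff.2 hφ
  have hvariation (N : ℕ) : |W (c + N) - W c| ≤ t := by
    have htelescope := Finset.sum_range_sub (fun j : ℕ => W (c + j)) N
    rw [Nat.cast_zero, add_zero] at htelescope
    calc |W (c + N) - W c| ≤ ∑ j ∈ Finset.range N, |W (c + (j + 1 : ℕ)) - W (c + j)| :=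
          htelescope ▸ Finset.abs_sum_le_sum_abs _ _
      _ ≤ ∑ j ∈ Finset.range N, t * |φ (site j) * φ (n - site j)| := by
          refine Finset.sum_le_sum fun j _ => ?_
          rw [Nat.cast_succ, ← add_assoc, h.reflectionWronskian_add_one_sub, abs_mul]
          exact mul_le_mul_of_nonneg_right (hg _) (abs_nonneg _)
      _ = t * ∑ k ∈ (Finset.range N).map site, |φ k * φ (n - k)| := by
          rw [← Finset.mul_sum, Finset.sum_map]
      _ ≤ t := mul_le_of_le_one_right ht (sum_abs_mul_le_one_of_hasSum_sq hφ hreflected _)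
  have hlim : Tendsto (fun N : ℕ => |W (c + N) - W c|) atTop (nhds |0 - W c|) := by
    refine Tendsto.abs (Tendsto.sub_const ?_ _)
    refine (tendsto_reflectionWronskian (tendsto_cofinite_zero_of_hasSum_sq hφ) n).comp ?_
    rw [← Nat.cofinite_eq_atTop]
    exact (show (fun N : ℕ => c + (N : ℤ)).Injective from fun i j hij => by
      simpa using hij).tendsto_cofinite
  rw [zero_sub, abs_neg] at hlim
  exact le_of_tendsto' hlim hvariation

/-- The deviation of `φ` at `k` from being odd (for `σ = 1`) or even (for `σ = -1`) about
`n / 2`. -/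
def reflectionDefect (φ : ℤ → ℝ) (σ : ℝ) (n k : ℤ) : ℝ := |φ k + σ * φ (n - k)|

lemma reflectionDefect_sub (hσ : |σ| = 1) (n k : ℤ) :
    reflectionDefect φ σ n (n - k) = reflectionDefect φ σ n k := by
  have hσσ : σ * σ = 1 := by rw [← abs_mul_abs_self, hσ, one_mul]
  rw [reflectionDefect, reflectionDefect, sub_sub_cancel,
    show φ k + σ * φ (n - k) = σ * (φ (n - k) + σ * φ k) by linear_combination (-φ k) * hσσ,
    abs_mul, hσ, one_mul]

lemma abs_apply_le_add_reflectionDefect (hσ : |σ| = 1) (n k : ℤ) :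
    |φ k| ≤ |φ (n - k)| + reflectionDefect φ σ n k := by
  have htri := abs_sub (φ k + σ * φ (n - k)) (σ * φ (n - k))
  rw [add_sub_cancel_right, abs_mul σ, hσ, one_mul] at htri
  rw [reflectionDefect]
  linarith

lemma IsEigenfunction.reflectionDefect_add_two_le (h : IsEigenfunction g E φ)
    (hb : ∀ k, |E - g k| ≤ b) (hφ : ∀ k, |φ k| ≤ 1) (hσ : |σ| = 1)
    (hg : ∀ k, |g (n - k) - g k| ≤ t) (k : ℤ) :
    reflectionDefect φ σ n (k + 2) ≤
      b * reflectionDefect φ σ n (k + 1) + reflectionDefect φ σ n k + t := by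
  have h₁ := h (k + 1)
  have h₂ := h (n - (k + 1))
  rw [show k + 1 + 1 = k + 2 by ring, add_sub_cancel_right] at h₁
  rw [show n - (k + 1) + 1 = n - k by ring, show n - (k + 1) - 1 = n - (k + 2) by ring] at h₂
  simp only [reflectionDefect]
  rw [show φ (k + 2) + σ * φ (n - (k + 2)) =
    (E - g (k + 1)) * (φ (k + 1) + σ * φ (n - (k + 1))) - (φ k + σ * φ (n - k)) -
      σ * ((g (n - (k + 1)) - g (k + 1)) * φ (n - (k + 1))) by linear_combination h₁ + σ * h₂]
  refine (abs_sub _ _).trans (add_le_add ((abs_sub _ _).trans (add_le_add_left ?_ _)) ?_)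
  · rw [abs_mul]
    exact mul_le_mul_of_nonneg_right (hb _) (abs_nonneg _)
  · rw [abs_mul, hσ, one_mul, abs_mul]
    exact (mul_le_of_le_one_right (abs_nonneg _) (hφ _)).trans (hg _)

lemma le_pow_mul_of_le_recurrence {u : ℕ → ℝ} {A : ℝ} (hb : 0 ≤ b) (hA : 0 ≤ A) (htA : t ≤ A)
    (hu : ∀ j, u (j + 2) ≤ b * u (j + 1) + u j + t) (h₀ : u 0 ≤ A) (h₁ : u 1 ≤ A) (j : ℕ) :
    u j ≤ (b + 2) ^ j * A ∧ u (j + 1) ≤ (b + 2) ^ j * A := by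
  induction j with
  | zero => simpa using ⟨h₀, h₁⟩
  | succ j ih =>
    have hD : A ≤ (b + 2) ^ j * A := le_mul_of_one_le_left hA (one_le_pow₀ (by linarith))
    have hb_mul := mul_le_mul_of_nonneg_left ih.2 hb
    rw [pow_succ', mul_assoc]
    generalize (b + 2) ^ j * A = D at ih hD hb_mul ⊢
    have hbD : 0 ≤ b * D := mul_nonneg hb (hA.trans hD)
    constructor <;> linarith [hu j, ih.1, ih.2]

lemma abs_le_sqrt_or_abs_le_sqrt_of_abs_mul_le {x y : ℝ} (h : |x * y| ≤ t) :
    |x| ≤ √t ∨ |y| ≤ √t := by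
  by_contra! hlt
  have hprod := mul_lt_mul'' hlt.1 hlt.2 (sqrt_nonneg _) (sqrt_nonneg _)
  rw [mul_self_sqrt ((abs_nonneg _).trans h), ← abs_mul] at hprod
  exact hprod.not_ge h

/-- At the centre of reflection the Wronskian factors, so a small Wronskian makes `φ` nearly odd or
nearly even there. -/
lemma IsEigenfunction.exists_reflectionDefect_two_mul_le {c : ℤ} (h : IsEigenfunction g E φ)
    (hb : ∀ k, |E - g k| ≤ b) (hφ : HasSum (fun k => φ k ^ 2) 1)
    (hg : ∀ k, |g (2 * c - k) - g k| ≤ t) :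
    ∃ σ, |σ| = 1 ∧ reflectionDefect φ σ (2 * c) c ≤ (b + 2) * √t ∧
      reflectionDefect φ σ (2 * c) (c + 1) ≤ (b + 2) * √t := by
  have hb₀ : 0 ≤ b := (abs_nonneg _).trans (hb 0)
  have hbt : 0 ≤ b * √t := by positivity
  have ht := sqrt_nonneg t
  have hcenter : 2 * c - c = c := by ring
  have hnext : 2 * c - (c + 1) = c - 1 := by ring
  have hW := h.abs_reflectionWronskian_le hφ hg c
  rw [reflectionWronskian, hcenter, hnext, mul_comm (φ (c + 1)), ← mul_sub] at hW
  simp only [reflectionDefect, hcenter, hnext]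
  rcases abs_le_sqrt_or_abs_le_sqrt_of_abs_mul_le hW with hodd | heven
  · refine ⟨1, abs_one, ?_, ?_⟩ <;> rw [one_mul]
    · linarith [abs_add_le (φ c) (φ c)]
    · rw [← h.sub_mul_apply, abs_mul]
      exact mul_le_mul ((hb c).trans (by linarith)) hodd (abs_nonneg _) (by linarith)
  · refine ⟨-1, by simp, ?_, ?_⟩ <;> rw [neg_one_mul, ← sub_eq_add_neg]
    · rw [sub_self, abs_zero]
      positivity
    · linarith

lemma IsEigenfunction.exists_reflectionDefect_two_mul_add_one_le {c : ℤ}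
    (h : IsEigenfunction g E φ) (hb : 0 ≤ b) (hφ : HasSum (fun k => φ k ^ 2) 1)
    (hg : ∀ k, |g (2 * c + 1 - k) - g k| ≤ t) :
    ∃ σ, |σ| = 1 ∧ reflectionDefect φ σ (2 * c + 1) c ≤ (b + 2) * √t ∧
      reflectionDefect φ σ (2 * c + 1) (c + 1) ≤ (b + 2) * √t := by
  have hbt : √t ≤ (b + 2) * √t := le_mul_of_one_le_left (sqrt_nonneg t) (by linarith)
  have hcenter : 2 * c + 1 - c = c + 1 := by ring
  have hnext : 2 * c + 1 - (c + 1) = c := by ring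
  have hW := h.abs_reflectionWronskian_le hφ hg c
  rw [reflectionWronskian, hcenter, hnext, ← sq, ← sq, sq_sub_sq] at hW
  simp only [reflectionDefect, hcenter, hnext]
  rcases abs_le_sqrt_or_abs_le_sqrt_of_abs_mul_le hW with hodd | heven
  · refine ⟨1, abs_one, ?_, ?_⟩ <;> rw [one_mul]
    · exact (add_comm (φ c) _ ▸ hodd).trans hbt
    · exact hodd.trans hbt
  · refine ⟨-1, by simp, ?_, ?_⟩ <;> rw [neg_one_mul, ← sub_eq_add_neg]
    · exact (abs_sub_comm (φ c) _ ▸ heven).trans hbt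
    · exact heven.trans hbt

lemma IsEigenfunction.exists_reflectionDefect_le (h : IsEigenfunction g E φ)
    (hb : ∀ k, |E - g k| ≤ b) (hφ : HasSum (fun k => φ k ^ 2) 1)
    (hg : ∀ k, |g (n - k) - g k| ≤ t) :
    ∃ σ, |σ| = 1 ∧ ∃ c : ℤ, 2 * c ≤ n ∧ n ≤ 2 * c + 1 ∧
      reflectionDefect φ σ n c ≤ (b + 2) * √t ∧
      reflectionDefect φ σ n (c + 1) ≤ (b + 2) * √t := by
  obtain ⟨c, rfl | rfl⟩ := n.even_or_odd'
  · obtain ⟨σ, hσ, hdefect⟩ := h.exists_reflectionDefect_two_mul_le hb hφ hg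
    exact ⟨σ, hσ, c, by lia, by lia, hdefect⟩
  · obtain ⟨σ, hσ, hdefect⟩ := h.exists_reflectionDefect_two_mul_add_one_le
      ((abs_nonneg _).trans (hb 0)) hφ hg
    exact ⟨σ, hσ, c, by lia, by lia, hdefect⟩

lemma IsEigenfunction.abs_apply_le_add_of_reflection (h : IsEigenfunction g E φ)
    (hb : ∀ k, |E - g k| ≤ b) (hφ : HasSum (fun k => φ k ^ 2) 1) (hn : n ≠ 0) (ht_one : t ≤ 1)
    (hg : ∀ k, |g (n - k) - g k| ≤ t) {k : ℤ} (hk : k = 0 ∨ k = 1) :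
    |φ k| ≤ |φ (n - k)| + (b + 2) ^ n.natAbs * ((b + 2) * √t) := by
  have hb₀ : 0 ≤ b := (abs_nonneg _).trans (hb 0)
  have ht₀ : 0 ≤ t := (abs_nonneg _).trans (hg 0)
  obtain ⟨σ, hσ, c, hcn, hnc, hc, hc'⟩ := h.exists_reflectionDefect_le hb hφ hg
  have ht_le : t ≤ (b + 2) * √t := by
    have := le_sqrt_of_sq_le (pow_le_of_le_one ht₀ ht_one two_ne_zero)
    linarith [mul_nonneg (show 0 ≤ b + 1 by linarith) (sqrt_nonneg t)]
  have hA : 0 ≤ (b + 2) * √t := ht₀.trans ht_le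
  have hgrowth (j : ℕ) := le_pow_mul_of_le_recurrence (u := fun j => reflectionDefect φ σ n (c + j))
    hb₀ hA ht_le (fun j => by
      simpa [add_assoc] using h.reflectionDefect_add_two_le hb
        (abs_apply_le_one_of_hasSum_sq hφ) hσ hg (c + j)) (by simpa using hc) (by simpa using hc') j
  have hmono {j : ℕ} (hj : j ≤ n.natAbs) :
      (b + 2) ^ j * ((b + 2) * √t) ≤ (b + 2) ^ n.natAbs * ((b + 2) * √t) :=
    mul_le_mul_of_nonneg_right (pow_le_pow_right₀ (by linarith) hj) hA
  have hdefect {k : ℤ} (j : ℕ) (hj : j ≤ n.natAbs) (hk : c + j = k ∨ c + (j + 1 : ℕ) = k) :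
      reflectionDefect φ σ n k ≤ (b + 2) ^ n.natAbs * ((b + 2) * √t) := by
    rcases hk with rfl | rfl
    exacts [(hgrowth j).1.trans (hmono hj), (hgrowth j).2.trans (hmono hj)]
  refine (abs_apply_le_add_reflectionDefect hσ n k).trans (add_le_add_right ?_ _)
  rcases hn.lt_or_gt with hneg | hpos
  · exact hdefect (-c).toNat (by lia) (by lia)
  · rw [← reflectionDefect_sub hσ]
    exact hdefect (n - 1 - c).toNat (by lia) (by lia)

end ReflectionSymmetry

section SuperexponentialResonance

lemma tendsto_abs_intCast_cofinite : Tendsto (fun n : ℤ => |(n : ℝ)|) cofinite atTop :=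
  (tendsto_norm_cocompact_atTop (E := ℝ)).comp Int.tendsto_coe_cofinite

lemma eventually_ne_zero_cofinite : ∀ᶠ n : ℤ in cofinite, n ≠ 0 :=
  (Set.finite_singleton 0).compl_mem_cofinite

lemma pow_natAbs_mul_sqrt_exp_le {B M : ℝ} (hB : 0 < B) (hM : 2 * Real.log B + 2 ≤ M) (n : ℤ) :
    B ^ n.natAbs * √(exp (-(M * |(n : ℝ)|))) ≤ exp (-|(n : ℝ)|) := by
  have hpow : B ^ n.natAbs = exp (Real.log B * |(n : ℝ)|) := by
    rw [← rpow_natCast, rpow_def_of_pos hB, Nat.cast_natAbs, Int.cast_abs]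
  have hMn := mul_le_mul_of_nonneg_right hM (abs_nonneg (n : ℝ))
  rw [hpow, ← exp_half, ← exp_add]
  exact exp_le_exp.2 (by linarith)

lemma tendsto_abs_apply_sub_add_exp_neg_abs {φ : ℤ → ℝ} (hφ : Tendsto φ cofinite (nhds 0))
    (c : ℝ) (k : ℤ) :
    Tendsto (fun n : ℤ => |φ (n - k)| + c * exp (-|(n : ℝ)|)) cofinite (nhds 0) := by
  have hshift : Tendsto (fun n => |φ (n - k)|) cofinite (nhds |0|) :=
    (hφ.comp (sub_left_injective (b := k)).tendsto_cofinite).abs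
  have hexp : Tendsto (fun n : ℤ => c * exp (-|(n : ℝ)|)) cofinite (nhds (c * 0)) :=
    (tendsto_exp_neg_atTop_nhds_zero.comp tendsto_abs_intCast_cofinite).const_mul c
  have hsum := hshift.add hexp
  rwa [abs_zero, mul_zero, add_zero] at hsum

lemma IsEigenfunction.abs_apply_le_add_exp_neg_abs {g φ : ℤ → ℝ} {E b M : ℝ} {n k : ℤ}
    (h : IsEigenfunction g E φ) (hb : ∀ k, |E - g k| ≤ b) (hφ : HasSum (fun k => φ k ^ 2) 1)
    (hM : 2 * Real.log (b + 2) + 2 ≤ M) (hn : n ≠ 0)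
    (hg : ∀ k, |g (n - k) - g k| ≤ exp (-(M * |(n : ℝ)|))) (hk : k = 0 ∨ k = 1) :
    |φ k| ≤ |φ (n - k)| + (b + 2) * exp (-|(n : ℝ)|) := by
  have hb₀ : 0 ≤ b := (abs_nonneg _).trans (hb 0)
  have hM₀ : 0 ≤ M := by linarith [log_nonneg (show 1 ≤ b + 2 by linarith)]
  have hMn : 0 ≤ M * |(n : ℝ)| := mul_nonneg hM₀ (abs_nonneg _)
  have hrefl := h.abs_apply_le_add_of_reflection hb hφ hn (exp_le_one_iff.2 (by linarith)) hg hk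
  rw [mul_left_comm] at hrefl
  exact hrefl.trans (add_le_add_right (mul_le_mul_of_nonneg_left
    (pow_natAbs_mul_sqrt_exp_le (by linarith) hM n) (by linarith)) _)

lemma ne_zero_of_hasSum_sq {ι : Type*} {u : ι → ℝ} (h : HasSum (fun i => u i ^ 2) 1) : u ≠ 0 := by
  rintro rfl
  simpa using h.tsum_eq

/-- Near symmetry of the potential about `n / 2` makes `φ` as large near `n` as it is near `0`,
for arbitrarily large `|n|`. -/
lemma IsEigenfunction.not_hasSum_sq_one_of_frequently_reflection {g φ : ℤ → ℝ} {E b : ℝ}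
    (h : IsEigenfunction g E φ) (hb : ∀ k, |E - g k| ≤ b)
    (hg : ∀ M : ℝ, ∃ᶠ n : ℤ in cofinite, ∀ k, |g (n - k) - g k| ≤ exp (-(M * |(n : ℝ)|))) :
    ¬HasSum (fun k => φ k ^ 2) 1 := by
  intro hφ
  have hzero {k : ℤ} (hk : k = 0 ∨ k = 1) : φ k = 0 := by
    refine abs_nonpos_iff.1 (ge_of_tendsto_of_frequently (tendsto_abs_apply_sub_add_exp_neg_abs
      (tendsto_cofinite_zero_of_hasSum_sq hφ) (b + 2) k) ?_)
    refine ((hg (2 * Real.log (b + 2) + 2)).and_eventually eventually_ne_zero_cofinite).mono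
      fun n hn => ?_
    exact h.abs_apply_le_add_exp_neg_abs hb hφ le_rfl hn.2 hn.1 hk
  exact ne_zero_of_hasSum_sq hφ
    (h.eq_zero_of_apply_eq_zero (hzero (.inl rfl)) (hzero (.inr (zero_add 1))))

lemma abs_amoPot_le {lam : ℝ} (hl : 0 ≤ lam) (α θ : ℝ) (n : ℤ) : |amoPot lam α θ n| ≤ 2 * lam := by
  rw [amoPot, abs_mul, abs_of_nonneg (by positivity)]
  exact mul_le_of_le_one_right (by positivity) (abs_cos_le_one _)

lemma abs_amoPot_sub_le {lam : ℝ} (hl : 0 ≤ lam) (α θ : ℝ) (n k : ℤ) :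
    |amoPot lam α θ (n - k) - amoPot lam α θ k| ≤ 2 * lam * sinDist (2 * θ + n * α) := by
  have hcos := abs_cos_sub_cos_eq_sinDist_mul (θ + (n - k : ℤ) * α) (θ + k * α)
  rw [show θ + (n - k : ℤ) * α + (θ + k * α) = 2 * θ + n * α by push_cast; ring] at hcos
  rw [amoPot, amoPot, ← mul_sub, abs_mul, abs_of_nonneg (by positivity), hcos]
  refine mul_le_mul_of_nonneg_left ?_ (by positivity)
  have hprod := mul_le_mul_of_nonneg_right
    (sinDist_le_two (θ + (n - k : ℤ) * α - (θ + k * α))) (sinDist_nonneg (2 * θ + n * α))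
  linarith

/-- The quotient whose upper limit is `deltaPhase α θ`. It is recorded separately because that
`limsup` carries no information when the quotient is unbounded. -/
def resonanceQuotient (α θ : ℝ) (n : ℤ) : ℝ :=
  -Real.log (distToInt (2 * θ + n * α)) / |(n : ℝ)|

lemma resonanceQuotient_nonneg (α θ : ℝ) (n : ℤ) : 0 ≤ resonanceQuotient α θ n := by
  have hlog := Real.log_nonpos (distToInt_nonneg (2 * θ + n * α))
    ((distToInt_le_half _).trans (by norm_num))
  exact div_nonneg (by linarith) (abs_nonneg _)

lemma frequently_sinDist_le_of_not_isBoundedUnder {α θ : ℝ}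
    (h : ¬IsBoundedUnder (· ≤ ·) cofinite (resonanceQuotient α θ)) (M : ℝ) :
    ∃ᶠ n : ℤ in cofinite, sinDist (2 * θ + n * α) ≤ 7 * exp (-(M * |(n : ℝ)|)) := by
  by_contra hfar
  refine h ⟨M, ?_⟩
  rw [eventually_map]
  filter_upwards [not_frequently.1 hfar, eventually_ne_zero_cofinite] with n hn hn₀
  have hdist := sinDist_le_mul_distToInt (2 * θ + n * α)
  have hexp : exp (-(M * |(n : ℝ)|)) < distToInt (2 * θ + n * α) := by linarith
  have hlog := (lt_log_iff_exp_lt ((exp_pos _).trans hexp)).2 hexp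
  rw [resonanceQuotient, div_le_iff₀ (abs_pos.2 (Int.cast_ne_zero.2 hn₀))]
  linarith

theorem IsEigenfunction.isBoundedUnder_resonanceQuotient {lam α θ E : ℝ} {φ : ℤ → ℝ}
    (h : IsEigenfunction (amoPot lam α θ) E φ) (hl : 0 ≤ lam)
    (hφ : HasSum (fun k => φ k ^ 2) 1) :
    IsBoundedUnder (· ≤ ·) cofinite (resonanceQuotient α θ) := by
  by_contra hunbdd
  have hb (k : ℤ) : |E - amoPot lam α θ k| ≤ |E| + 2 * lam :=
    (abs_sub _ _).trans (add_le_add_right (abs_amoPot_le hl α θ k) _)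
  refine h.not_hasSum_sq_one_of_frequently_reflection hb (fun M => ?_) hφ
  have hconst : ∀ᶠ n : ℤ in cofinite, 14 * lam ≤ exp |(n : ℝ)| :=
    (tendsto_exp_atTop.comp tendsto_abs_intCast_cofinite).eventually_ge_atTop _
  refine ((frequently_sinDist_le_of_not_isBoundedUnder hunbdd (M + 1)).and_eventually
    hconst).mono fun n ⟨hsin, hn⟩ k => ?_
  calc |amoPot lam α θ (n - k) - amoPot lam α θ k|
      ≤ 2 * lam * (7 * exp (-((M + 1) * |(n : ℝ)|))) :=
        (abs_amoPot_sub_le hl α θ n k).trans (mul_le_mul_of_nonneg_left hsin (by positivity))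
    _ = 14 * lam * exp (-((M + 1) * |(n : ℝ)|)) := by ring
    _ ≤ exp |(n : ℝ)| * exp (-((M + 1) * |(n : ℝ)|)) :=
        mul_le_mul_of_nonneg_right hn (exp_nonneg _)
    _ = exp (-(M * |(n : ℝ)|)) := by rw [← exp_add]; ring_nf

end SuperexponentialResonance

section ResonanceRate

lemma exists_forall_lt_abs_of_eventually_cofinite {P : ℤ → Prop} (h : ∀ᶠ n in cofinite, P n) :
    ∃ N : ℕ, ∀ n : ℤ, (N : ℝ) < |(n : ℝ)| → P n := by
  obtain ⟨N, hN⟩ := (Set.Finite.image Int.natAbs (eventually_cofinite.1 h)).bddAbove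
  refine ⟨N, fun n hn => ?_⟩
  by_contra hP
  have hnN : (n.natAbs : ℝ) ≤ N := by exact_mod_cast hN ⟨n, hP, rfl⟩
  rw [Nat.cast_natAbs, Int.cast_abs] at hnN
  exact hnN.not_gt hn

lemma IsSinDiophantine.eventually_distToInt_pos {α κ τ : ℝ} (hα : IsSinDiophantine α κ τ) (θ : ℝ) :
    ∀ᶠ n : ℤ in cofinite, 0 < distToInt (2 * θ + n * α) := by
  have hsubsingleton : {n : ℤ | ¬0 < distToInt (2 * θ + n * α)}.Subsingleton := by
    intro a ha b hb
    have hsin {n : ℤ} (hn : ¬0 < distToInt (2 * θ + n * α)) : sinDist (2 * θ + n * α) ≤ 0 := by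
      linarith [sinDist_le_mul_distToInt (2 * θ + n * α)]
    by_contra hab
    have hsub : a - b ≠ 0 := sub_ne_zero.2 hab
    have hpos : 0 < |((a - b : ℤ) : ℝ)| := abs_pos.2 (Int.cast_ne_zero.2 hsub)
    have hdist := sinDist_sub_le (2 * θ + a * α) (2 * θ + b * α)
    rw [show 2 * θ + a * α - (2 * θ + b * α) = (a - b : ℤ) * α by push_cast; ring] at hdist
    have hlower := (div_pos hα.const_pos (rpow_pos_of_pos hpos κ)).trans_le (hα.le_sinDist _ hsub)
    linarith [hsin ha, hsin hb]
  exact eventually_cofinite.2 hsubsingleton.finite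

lemma deltaPhase_nonneg {α θ : ℝ}
    (h : IsBoundedUnder (· ≤ ·) cofinite (resonanceQuotient α θ)) : 0 ≤ deltaPhase α θ :=
  le_limsup_of_frequently_le (Frequently.of_forall (resonanceQuotient_nonneg α θ)) h

lemma IsSinDiophantine.hasResonanceRate {α κ τ θ : ℝ} (hα : IsSinDiophantine α κ τ)
    (h : IsBoundedUnder (· ≤ ·) cofinite (resonanceQuotient α θ)) :
    HasResonanceRate α θ (deltaPhase α θ) := by
  intro ε hε
  have hlt : ∀ᶠ n in cofinite, resonanceQuotient α θ n < deltaPhase α θ + ε :=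
    eventually_lt_of_limsup_lt (lt_add_of_pos_right (deltaPhase α θ) hε) h
  obtain ⟨N, hN⟩ :=
    exists_forall_lt_abs_of_eventually_cofinite (hlt.and (hα.eventually_distToInt_pos θ))
  refine ⟨N, fun n hn => ?_⟩
  obtain ⟨hquot, hpos⟩ := hN n hn
  rw [resonanceQuotient, div_lt_iff₀ (N.cast_nonneg.trans_lt hn)] at hquot
  refine ((le_log_iff_exp_le hpos).1 ?_).trans (distToInt_le_sinDist _)
  linarith

end ResonanceRate

section Main

variable {lam α θ K E : ℝ}

lemma IsEigenfunction.hasAlmostMax {φ : ℤ → ℝ} {m : ℤ}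
    (h : IsEigenfunction (amoPot lam α θ) E φ) (hl : 0 ≤ lam) (hφ : HasSum (fun k => φ k ^ 2) 1)
    (hm : ∀ k, |φ k| ≤ K * |φ m|) : HasAlmostMax lam α θ K (2 * K + 2 * lam) E φ m := by
  have hpos : 0 < |φ m| := by
    refine abs_pos.2 fun hφm => ne_zero_of_hasSum_sq hφ (funext fun k => ?_)
    exact abs_nonpos_iff.1 ((hm k).trans_eq (by rw [hφm, abs_zero, mul_zero]))
  refine ⟨h, hm, hpos, le_of_mul_le_mul_right ?_ hpos⟩
  calc |E| * |φ m| = |φ (m + 1) + φ (m - 1) + amoPot lam α θ m * φ m| := by rw [h m, abs_mul]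
    _ ≤ |φ (m + 1)| + |φ (m - 1)| + |amoPot lam α θ m| * |φ m| :=
        (abs_add_three _ _ _).trans_eq (by rw [abs_mul])
    _ ≤ K * |φ m| + K * |φ m| + 2 * lam * |φ m| :=
        add_le_add (add_le_add (hm _) (hm _))
          (mul_le_mul_of_nonneg_right (abs_amoPot_le hl α θ m) (abs_nonneg _))
    _ = (2 * K + 2 * lam) * |φ m| := by ring

lemma IsSinDiophantine.isLocalizedFamily {ι : Type*} {κ τ d : ℝ} (hα : IsSinDiophantine α κ τ)
    (hl : 1 < lam) (hd : 0 ≤ d) (hrate : HasResonanceRate α θ (d * Real.log lam)) {Em : ℝ}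
    {F : ι → ℤ → ℝ} {m : ι → ℤ} (hF : ∀ s, ∃ E, HasAlmostMax lam α θ K Em E (F s) (m s)) :
    IsLocalizedFamily F m d := by
  intro ε hε
  obtain ⟨γ, hγ, R₀, hR₀⟩ := hα.exists_isLocalizedAt hl hd hrate K (abs_nonneg Em) hε
  refine ⟨γ, hγ, R₀, fun R hR => ?_⟩
  obtain ⟨p, hp⟩ := hR₀ R hR
  refine ⟨p, fun s hs n hn => ?_⟩
  obtain ⟨E, hE⟩ := hF s
  exact hp E (F s) (m s) { hE with energy_le := hE.energy_le.trans (le_abs_self Em) } hs n hn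

section HilbertBasis

variable {ι : Type*} (Φ : HilbertBasis ι ℝ (lp (fun _ : ℤ => ℝ) 2))

lemma hasSum_sq_hilbertBasis_apply_site (n : ℤ) : HasSum (fun s => Φ s n ^ 2) 1 := by
  have hparseval := Φ.hasSum_inner_mul_inner (lp.single 2 n 1) (lp.single 2 n 1)
  simp only [lp.inner_single_left, lp.inner_single_right] at hparseval
  simpa [sq] using hparseval

lemma hasSum_sq_hilbertBasis_apply (s : ι) : HasSum (fun n => Φ s n ^ 2) 1 := by
  have hnorm := lp.hasSum_inner (𝕜 := ℝ) (Φ s) (Φ s)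
  rw [real_inner_self_eq_norm_sq, Φ.orthonormal.1 s] at hnorm
  simpa [sq] using hnorm

lemma isBoundedUnder_resonanceQuotient_of_hilbertBasis (hl : 0 ≤ lam)
    (heig : ∀ s, ∃ E, IsEigenfunction (amoPot lam α θ) E (fun n => Φ s n)) :
    IsBoundedUnder (· ≤ ·) cofinite (resonanceQuotient α θ) := by
  have : Nonempty ι := by
    by_contra hempty
    have := not_nonempty_iff.1 hempty
    exact zero_ne_one (hasSum_empty.unique (hasSum_sq_hilbertBasis_apply_site Φ 0))
  obtain ⟨E, hE⟩ := heig (Classical.arbitrary ι)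
  exact hE.isBoundedUnder_resonanceQuotient hl (hasSum_sq_hilbertBasis_apply Φ _)

end HilbertBasis

end Main

theorem amo_density_bounds_for_almost_maxima_general {ι : Type*}
    (lam α θ : ℝ) (hlam : 1 < lam) (hα : IsDiophantine α)
    (hδ : deltaPhase α θ < Real.log lam)
    (Φ : HilbertBasis ι ℝ (lp (fun _ : ℤ => ℝ) 2))
    (heig : ∀ s, ∃ E : ℝ, IsEigenfunction (amoPot lam α θ) E (fun n => Φ s n))
    (K : ℝ) (mt : ι → ℤ) (hmt : ∀ s k, |Φ s k| ≤ K * |Φ s (mt s)|) :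
    limsup (fun L : ℕ => (Set.ncard {s | |mt s| ≤ (L : ℤ)} : ℝ) / (2 * L + 1)) atTop
        ≤ 1 + deltaPhase α θ / (2 * Real.log lam) ∧
    1 - deltaPhase α θ / (2 * Real.log lam)
        ≤ liminf (fun L : ℕ => (Set.ncard {s | |mt s| ≤ (L : ℤ)} : ℝ) / (2 * L + 1)) atTop := by
  obtain ⟨κ, τ, hα⟩ := hα.exists_isSinDiophantine
  have hL : 0 < Real.log lam := log_pos hlam
  have hl : 0 ≤ lam := by linarith
  have hbdd := isBoundedUnder_resonanceQuotient_of_hilbertBasis Φ hl heig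
  have hsite := hasSum_sq_hilbertBasis_apply_site Φ
  have hstate := hasSum_sq_hilbertBasis_apply Φ
  have hmax (s : ι) : ∃ E, HasAlmostMax lam α θ K (2 * K + 2 * lam) E (fun n => Φ s n) (mt s) :=
    (heig s).imp fun E hE => hE.hasAlmostMax hl (hstate s) (hmt s)
  have hd : 0 ≤ deltaPhase α θ / Real.log lam := div_nonneg (deltaPhase_nonneg hbdd) hL.le
  have hd_lt : deltaPhase α θ / Real.log lam < 1 := (div_lt_one hL).2 hδ
  have hrate : HasResonanceRate α θ (deltaPhase α θ / Real.log lam * Real.log lam) := by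
    rw [div_mul_cancel₀ _ hL.ne']
    exact hα.hasResonanceRate hbdd
  have hloc := hα.isLocalizedFamily hlam hd hrate hmax
  rw [mul_comm 2, ← div_div]
  exact ⟨hloc.limsup_density_le hd hd_lt hsite hstate, hloc.le_liminf_density hd hd_lt hsite hstate⟩

theorem amo_density_bounds_for_almost_maxima
    (lam α θ : ℝ) (hlam : 1 < lam) (hα : IsDiophantine α)
    (hδ : deltaPhase α θ < Real.log lam)
    (Φ : HilbertBasis ℕ ℝ (lp (fun _ : ℤ => ℝ) 2))
    (heig : ∀ s : ℕ, ∃ E : ℝ, IsEigenfunction (amoPot lam α θ) E (fun n => Φ s n))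
    (K : ℝ) (hK : 0 < K)
    (mt : ℕ → ℤ) (hmt : ∀ (s : ℕ) (k : ℤ), |Φ s k| ≤ K * |Φ s (mt s)|) :
    limsup (fun L : ℕ => (Set.ncard {s : ℕ | |mt s| ≤ (L : ℤ)} : ℝ) / (2 * L + 1)) atTop
        ≤ 1 + deltaPhase α θ / (2 * Real.log lam) ∧
    1 - deltaPhase α θ / Real.log lam
        ≤ liminf (fun L : ℕ => (Set.ncard {s : ℕ | |mt s| ≤ (L : ℤ)} : ℝ) / (2 * L + 1)) atTop := by
  have hL := log_pos hlam
  have hδ₀ := deltaPhase_nonneg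
    (isBoundedUnder_resonanceQuotient_of_hilbertBasis Φ (zero_le_one.trans hlam.le) heig)
  refine (amo_density_bounds_for_almost_maxima_general lam α θ hlam hα hδ Φ heig K mt hmt).imp_right
    ((sub_le_sub_left (div_le_div_of_nonneg_left hδ₀ hL ?_) 1).trans)
  linarith
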